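/- Let d > 2 be an integer, c₀ ∈ (0,1], ε > 0, and η > 0. There exist constants c⋆, C⋆ > 0 depending only on (d, c₀) such that for all constants c ∈ (0, c⋆] and C ≥ C⋆ there exists δ₂ ∈ (0,1/2] depending only on (η, ε, d, c₀) with the following property. For every admissible kernel J on ℤ^d with constant c₀ and every G ∈ 𝒢 with (J,G) satisfying Assumption G, for every β < β(δ₂): if for every β' ≤ β and every x ∈ ℤ^d one has F_{β'}(x) ≤ (C/σ_J^d)·(σ_J/(σ_J∨|x|))^{d−2−ε}·exp(−c·|x|/ξ(β')), then for every x ∈ ℤ^d with |x| ≥ max{η·ξ(β), 2σ_J}: F_β(x) ≤ (1/8)·(C/σ_J^d)·(σ_J/(σ_J∨|x|))^{d−2−ε}·exp(−c·|x|/ξ(β)). -/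

import Mathlib

open scoped ENNReal

noncomputable section

namespace Blackbox

/-- Supremum norm of a lattice point. -/
def supNorm {d : ℕ} (x : Fin d → ℤ) : ℝ :=
  ((Finset.univ.sup fun i => (x i).natAbs : ℕ) : ℝ)

/-- Squared Euclidean norm of a lattice point. -/
def sqNorm {d : ℕ} (x : Fin d → ℤ) : ℝ :=
  ∑ i, ((x i : ℝ)) ^ 2

/-- Invariance under coordinate permutations and sign flips of individual coordinates. -/
def IsSymmFun {d : ℕ} {α : Type*} (f : (Fin d → ℤ) → α) : Prop :=
  ∀ (π : Equiv.Perm (Fin d)) (e : Fin d → Bool) (x : Fin d → ℤ),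
    f (fun i => (if e i then -1 else 1) * x (π i)) = f x

/-- First coordinate (dot product with `e₁`). -/
def e1 {d : ℕ} {α : Type*} [Zero α] (y : Fin d → α) : α :=
  if h : 0 < d then y ⟨0, h⟩ else 0

/-- An admissible kernel on `ℤ^d` with constant `c₀`. -/
structure AdmissibleKernel (d : ℕ) (c₀ : ℝ) where
  J : (Fin d → ℤ) → ℝ
  nonneg : ∀ x, 0 ≤ J x
  zero_at_zero : J 0 = 0
  summable : Summable J
  norm_one : ∑' x, J x = 1
  symm : IsSymmFun J
  R : ℝ
  R_ge_one : 1 ≤ R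
  range_le : ∀ x, 0 < J x → supNorm x ≤ R
  range_attained : ∃ x, 0 < J x ∧ supNorm x = R
  summable_sq : Summable fun x => sqNorm x * J x
  sigma_lower : c₀ * R ≤ Real.sqrt (∑' x, sqNorm x * J x)
  J_upper : ∀ x, J x ≤ c₀⁻¹ / R ^ d

/-- `σ_J`, the square root of the variance of the kernel. -/
def AdmissibleKernel.sigma {d : ℕ} {c₀ : ℝ} (K : AdmissibleKernel d c₀) : ℝ :=
  Real.sqrt (∑' x, sqNorm x * K.J x)

/-- A family `G ∈ 𝒢` together with an admissible kernel `J` such that `(J,G)` satisfies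
Assumption G (with error-term family `H`). -/
structure Model (d : ℕ) (c₀ : ℝ) where
  K : AdmissibleKernel d c₀
  G : ℝ → (Fin d → ℤ) → ℝ≥0∞
  βc : ℝ≥0∞
  βc_pos : 0 < βc
  init : ∀ x, G 0 x = if x = 0 then 1 else 0
  G' : ℝ → (Fin d → ℤ) → ℝ
  mono : ∀ (x : Fin d → ℤ) ⦃β₁ β₂ : ℝ⦄, 0 ≤ β₁ → β₁ ≤ β₂ →
    ENNReal.ofReal β₂ ≤ βc → G β₁ x ≤ G β₂ x
  deriv : ∀ (x : Fin d → ℤ) ⦃β : ℝ⦄, 0 ≤ β → ENNReal.ofReal β < βc →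
    HasDerivWithinAt (fun t => (G t x).toReal) (G' β x) (Set.Ici 0) β
  symm : ∀ β, IsSymmFun (G β)
  expDecay : ∀ ⦃β : ℝ⦄, 0 ≤ β → ENNReal.ofReal β < βc →
    ∃ C > (0:ℝ), ∃ c > (0:ℝ), ∀ x, G β x ≤ ENNReal.ofReal (C * Real.exp (-c * supNorm x))
  limit : βc ≠ ⊤ → ∀ x, G βc.toReal x = ⨆ β ∈ Set.Ico (0 : ℝ) βc.toReal, G β x
  I1 : ∀ ⦃β' β : ℝ⦄, 0 ≤ β' → β' ≤ β → ENNReal.ofReal β < βc →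
    ∀ x, G β x ≤ G β' x + ENNReal.ofReal (β - β') *
      ∑' p : (Fin d → ℤ) × (Fin d → ℤ),
        G β' p.1 * ENNReal.ofReal (K.J p.2) * G β (x - p.1 - p.2)
  H : ℝ → (Fin d → ℤ) → ℝ
  H_nonneg : ∀ β x, 0 ≤ H β x
  H_zero : ∀ x, H 0 x = 0
  H_symm : ∀ β x, H β (-x) = H β x
  H_cont : ∀ x, ContinuousOn (fun β => H β x)
    {β : ℝ | 0 ≤ β ∧ ENNReal.ofReal β < βc}
  H_expDecay : ∀ ⦃β : ℝ⦄, 0 ≤ β → ENNReal.ofReal β < βc →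
    ∃ C > (0:ℝ), ∃ c > (0:ℝ), ∀ x, H β x ≤ C * Real.exp (-c * supNorm x)
  I2 : ∀ ⦃β : ℝ⦄, 0 ≤ β → ENNReal.ofReal β < βc → ∀ x,
    (∑' p : (Fin d → ℤ) × (Fin d → ℤ),
      (G β p.1).toReal * (K.J p.2 - H β p.2) * (G β (x - p.1 - p.2)).toReal)
      ≤ G' β x

namespace Model

variable {d : ℕ} {c₀ : ℝ}

def sigma (M : Model d c₀) : ℝ := M.K.sigma

/-- `F_β = J * G_β`. -/
def F (M : Model d c₀) (β : ℝ) (x : Fin d → ℤ) : ℝ≥0∞ :=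
  ∑' y, ENNReal.ofReal (M.K.J y) * M.G β (x - y)

/-- The susceptibility `χ(β)`. -/
def chi (M : Model d c₀) (β : ℝ) : ℝ≥0∞ := ∑' x, M.G β x

/-- `ξ(β)²`. -/
def xiSq (M : Model d c₀) (β : ℝ) : ℝ≥0∞ :=
  (∑' x, ENNReal.ofReal (sqNorm x) * M.F β x) / M.chi β

/-- The correlation length of order two, `ξ(β)`. -/
def xi (M : Model d c₀) (β : ℝ) : ℝ := Real.sqrt (M.xiSq β).toReal

/-- The error term `E(β)`. -/
def E (M : Model d c₀) (β : ℝ) : ℝ≥0∞ :=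
  ⨆ t ∈ Set.Icc (0 : ℝ) β,
    (ENNReal.ofReal (∑' x, M.H t x) +
      ENNReal.ofReal (∑' x, sqNorm x * M.H t x) / M.xiSq t)

/-- `β(δ)`. -/
def betaOf (M : Model d c₀) (δ : ℝ) : ℝ :=
  sSup {β : ℝ | 0 ≤ β ∧ ENNReal.ofReal β < M.βc ∧ M.E β < ENNReal.ofReal δ}

/-- One-step distribution of the effective random walk at parameter `β`. -/
def effStep (M : Model d c₀) (β : ℝ) (y : Fin d → ℤ) : ℝ≥0∞ :=
  M.F β y / M.chi β

/-- `k`-step distribution of the effective random walk at parameter `β`. -/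
def effIter (M : Model d c₀) (β : ℝ) : ℕ → (Fin d → ℤ) → ℝ≥0∞
  | 0 => fun x => if x = 0 then 1 else 0
  | n + 1 => fun x => ∑' y, M.effStep β y * M.effIter β n (x - y)

/-- Moment generating function `M_β(s)` of the first coordinate of one step of the
effective random walk. -/
def Mgf (M : Model d c₀) (β s : ℝ) : ℝ≥0∞ :=
  ∑' y : Fin d → ℤ, M.effStep β y * ENNReal.ofReal (Real.exp (s / M.xi β * ((e1 y : ℤ) : ℝ)))

end Model

end Blackbox
open Blackbox

/-!
Normalizing `F s` by `χ(s)` gives the step distribution `p` of a random walk. If `s ≤ t` is chosen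
with `(t - s) χ(s) = 1 - θ`, iterating (I.1) bounds `F t` by `χ(s)` times the Green function of
this walk killed with probability `θ` at each step. Below `β(δ)`, inequality (I.2) nearly reverses
(I.1); together they bound an exponential moment of `p` at scale `ξ(s)`, uniformly in the model,
and give `ξ(s) ≤ 2 √θ ξ(t)`.

Comparing second with fourth moments, `p` takes steps of length comparable to `ξ(s)` with
probability bounded below, so the characteristic function of the `n`-step law decays and that law
puts mass `O(n^(-d/2))` on each ball of radius of order `ξ(s)`. Exponential tilting and the
decomposition of the walk at its first moderate step turn this into a bound on the killed Green
function by the Gaussian one, decaying at rate of order `√θ / ξ(s)`, up to the contribution of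
walks without moderate steps, one of whose steps must be comparable to `x`.

Inserting the assumed bound on `F s` at both places gives a bound on `F t` which is smaller than
the assumed one by a factor `O((|x| / ξ(s))^(-ε))`, and whose exponential rate is better since
`√θ / ξ(s)` exceeds `1 / (2 ξ(t))`. At `|x| ≥ η ξ(t)` the factor is at most `O((√θ / η)^ε)`, hence
at most `1 / 8` if `θ` is small. As the exponential factor of `F s` is itself the conclusion at
`s`, one inducts along such predecessors, starting from `t ≤ 1 - θ`, where `s = 0` and `p = J`.
-/

namespace Blackbox

/-! ### Convolution of nonnegative functions -/

/-- Convolution of `[0, ∞]`-valued functions on an abelian group with respect to counting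
measure. -/
def conv {V : Type*} [AddCommGroup V] (f g : V → ℝ≥0∞) : V → ℝ≥0∞ :=
  fun x => ∑' y, f y * g (x - y)

local infixl:70 " ⋆ " => conv

section Convolution

variable {V : Type*}

/-- Total mass of a `[0, ∞]`-valued function with respect to counting measure. -/
def mass (f : V → ℝ≥0∞) : ℝ≥0∞ := ∑' x, f x

lemma mass_add (f g : V → ℝ≥0∞) : mass (f + g) = mass f + mass g := ENNReal.tsum_add

lemma mass_smul (c : ℝ≥0∞) (f : V → ℝ≥0∞) : mass (c • f) = c * mass f := ENNReal.tsum_mul_left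

@[gcongr]
lemma mass_mono {f g : V → ℝ≥0∞} (h : f ≤ g) : mass f ≤ mass g := ENNReal.tsum_le_tsum h

lemma le_mass (f : V → ℝ≥0∞) (x : V) : f x ≤ mass f := ENNReal.le_tsum x

variable [AddCommGroup V]

/-- The unit of convolution: the point mass at the origin. -/
def pointMass : V → ℝ≥0∞ := Set.indicator {0} 1

/-- Iterated convolution powers, with `convPow f 0` the point mass at the origin. -/
def convPow (f : V → ℝ≥0∞) : ℕ → V → ℝ≥0∞
  | 0 => pointMass
  | n + 1 => f ⋆ convPow f n

/-- The Green function of the random walk with step distribution `f`, killed at rate `θ`, without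
the contribution of the walk of length zero. -/
def killedGreen (f : V → ℝ≥0∞) (θ : ℝ) (x : V) : ℝ≥0∞ :=
  ∑' k, ENNReal.ofReal (1 - θ) ^ k * convPow f (k + 1) x

lemma mass_conv_mul (f g W : V → ℝ≥0∞) :
    mass ((f ⋆ g) * W) = ∑' y, ∑' z, f y * g z * W (y + z) := by
  simp only [mass, conv, Pi.mul_apply, ← ENNReal.tsum_mul_right]
  rw [ENNReal.tsum_comm]
  refine tsum_congr fun y => ?_
  rw [← (Equiv.subRight y).tsum_eq fun z => f y * g z * W (y + z)]
  simp

lemma mass_conv (f g : V → ℝ≥0∞) : mass (f ⋆ g) = mass f * mass g := by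
  have h := mass_conv_mul f g 1
  simpa only [mul_one, Pi.one_apply, ENNReal.tsum_mul_left, ENNReal.tsum_mul_right, mass] using h

lemma conv_comm (f g : V → ℝ≥0∞) : f ⋆ g = g ⋆ f := by
  funext x
  simp only [conv]
  rw [← (Equiv.subLeft x).tsum_eq]
  simp [mul_comm]

lemma conv_assoc (f g h : V → ℝ≥0∞) : f ⋆ g ⋆ h = f ⋆ (g ⋆ h) := by
  funext x
  refine (mass_conv_mul f g fun w => h (x - w)).trans (tsum_congr fun y => ?_)
  simp only [conv, ← ENNReal.tsum_mul_left, mul_assoc, sub_add_eq_sub_sub]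

lemma conv_conv_apply (f g h : V → ℝ≥0∞) (x : V) :
    (f ⋆ g ⋆ h) x = ∑' p : V × V, f p.1 * g p.2 * h (x - p.1 - p.2) := by
  rw [conv_assoc, ENNReal.tsum_prod']
  simp only [conv, ← ENNReal.tsum_mul_left, mul_assoc]

lemma conv_left_comm (f g h : V → ℝ≥0∞) : f ⋆ (g ⋆ h) = g ⋆ (f ⋆ h) := by
  rw [← conv_assoc, conv_comm f, conv_assoc]

lemma conv_pointMass (f : V → ℝ≥0∞) : f ⋆ pointMass = f := by
  funext x
  refine (tsum_eq_single x fun y hy => ?_).trans (by simp [pointMass])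
  rw [pointMass, Set.indicator_of_notMem (by simpa [sub_eq_zero] using hy.symm), mul_zero]

lemma pointMass_conv (f : V → ℝ≥0∞) : pointMass ⋆ f = f := by rw [conv_comm, conv_pointMass]

lemma mass_pointMass : mass (pointMass : V → ℝ≥0∞) = 1 := by
  refine (tsum_eq_single 0 fun x hx => ?_).trans (by simp [pointMass])
  exact Set.indicator_of_notMem (by simpa using hx) _

@[gcongr]
lemma conv_mono {f f' g g' : V → ℝ≥0∞} (hf : f ≤ f') (hg : g ≤ g') : f ⋆ g ≤ f' ⋆ g' :=
  fun _ => ENNReal.tsum_le_tsum fun y => mul_le_mul' (hf y) (hg _)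

lemma conv_add (f g h : V → ℝ≥0∞) : f ⋆ (g + h) = f ⋆ g + f ⋆ h := by
  funext x
  simp only [conv, Pi.add_apply, mul_add, ENNReal.tsum_add]

lemma add_conv (f g h : V → ℝ≥0∞) : (f + g) ⋆ h = f ⋆ h + g ⋆ h := by
  rw [conv_comm, conv_add, conv_comm f, conv_comm g]

lemma conv_smul (c : ℝ≥0∞) (f g : V → ℝ≥0∞) : f ⋆ (c • g) = c • (f ⋆ g) := by
  funext x
  simp only [conv, Pi.smul_apply, smul_eq_mul, ← ENNReal.tsum_mul_left, mul_left_comm]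

lemma smul_conv (c : ℝ≥0∞) (f g : V → ℝ≥0∞) : (c • f) ⋆ g = c • (f ⋆ g) := by
  rw [conv_comm, conv_smul, conv_comm f]

lemma conv_apply_le_of_le {f g : V → ℝ≥0∞} {B : ℝ≥0∞} (hg : ∀ x, g x ≤ B) (x : V) :
    (f ⋆ g) x ≤ mass f * B := by
  rw [mass, ← ENNReal.tsum_mul_right]
  exact ENNReal.tsum_le_tsum fun y => mul_le_mul_right (hg _) _

lemma convPow_one (f : V → ℝ≥0∞) : convPow f 1 = f := conv_pointMass f

lemma convPow_add (f : V → ℝ≥0∞) (m n : ℕ) :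
    convPow f (m + n) = convPow f m ⋆ convPow f n := by
  induction m with
  | zero => simp only [Nat.zero_add, convPow, pointMass_conv]
  | succ m ih => rw [Nat.succ_add, convPow, ih, convPow, conv_assoc]

lemma convPow_succ' (f : V → ℝ≥0∞) (n : ℕ) : convPow f (n + 1) = convPow f n ⋆ f := by
  rw [convPow_add, convPow_one]

lemma convPow_smul (c : ℝ≥0∞) (f : V → ℝ≥0∞) (n : ℕ) :
    convPow (c • f) n = c ^ n • convPow f n := by
  induction n with
  | zero => simp [convPow]
  | succ n ih => rw [convPow, ih, smul_conv, conv_smul, smul_smul, pow_succ', convPow]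

lemma mass_convPow (f : V → ℝ≥0∞) (n : ℕ) : mass (convPow f n) = mass f ^ n := by
  induction n with
  | zero => simp [convPow, mass_pointMass]
  | succ n ih => rw [convPow, mass_conv, ih, pow_succ']

lemma conv_mul_le {W : V → ℝ≥0∞} (hW : ∀ x y, W (x + y) ≤ W x * W y) (f g : V → ℝ≥0∞) :
    (f ⋆ g) * W ≤ (f * W) ⋆ (g * W) := by
  intro x
  simp only [conv, Pi.mul_apply, ← ENNReal.tsum_mul_right]
  refine ENNReal.tsum_le_tsum fun y => ?_
  calc f y * g (x - y) * W x ≤ f y * g (x - y) * (W y * W (x - y)) := by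
        gcongr
        simpa using hW y (x - y)
    _ = _ := mul_mul_mul_comm ..

lemma convPow_mul_le {W : V → ℝ≥0∞} (hW : ∀ x y, W (x + y) ≤ W x * W y) (h0 : W 0 ≤ 1)
    (f : V → ℝ≥0∞) (n : ℕ) : convPow f n * W ≤ convPow (f * W) n := by
  induction n with
  | zero =>
    intro x
    by_cases hx : x = 0
    · simpa [convPow, pointMass, hx] using h0
    · simp [convPow, pointMass, hx]
  | succ n ih => exact (conv_mul_le hW _ _).trans (conv_mono le_rfl ih)

lemma mass_convPow_mul {W : V → ℝ≥0∞} (hW : ∀ x y, W (x + y) = W x * W y) (h0 : W 0 = 1)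
    (f : V → ℝ≥0∞) (n : ℕ) : mass (convPow f n * W) = mass (f * W) ^ n := by
  induction n with
  | zero =>
    refine (tsum_eq_single 0 fun x hx => ?_).trans (by simp [convPow, pointMass, h0])
    simp [convPow, pointMass, hx]
  | succ n ih =>
    rw [convPow, mass_conv_mul, pow_succ', ← ih, mass, mass, ← ENNReal.tsum_mul_right]
    refine tsum_congr fun y => ?_
    rw [← ENNReal.tsum_mul_left]
    exact tsum_congr fun z => by rw [hW, Pi.mul_apply, Pi.mul_apply, mul_mul_mul_comm]

end Convolution

section Norm

variable {V : Type*} [SeminormedAddCommGroup V]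

/-- If `y + z` is far from the origin, then `y` or `z` is. -/
lemma conv_apply_le_of_far {f g : V → ℝ≥0∞} {r₁ r₂ : ℝ} {A B : ℝ≥0∞}
    (hf : ∀ y, r₁ ≤ ‖y‖ → f y ≤ A) (hg : ∀ y, r₂ ≤ ‖y‖ → g y ≤ B) {x : V}
    (hx : r₁ + r₂ ≤ ‖x‖) : (f ⋆ g) x ≤ A * mass g + mass f * B := by
  have split : ∀ y, f y * g (x - y) ≤ A * g (x - y) + f y * B := by
    intro y
    by_cases hy : r₁ ≤ ‖y‖
    · exact (mul_le_mul' (hf y hy) le_rfl).trans le_self_add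
    · have : r₂ ≤ ‖x - y‖ := by linarith [norm_sub_norm_le x y]
      exact (mul_le_mul' le_rfl (hg _ this)).trans le_add_self
  calc (f ⋆ g) x ≤ ∑' y, (A * g (x - y) + f y * B) := ENNReal.tsum_le_tsum split
    _ = A * mass g + mass f * B := by
      rw [ENNReal.tsum_add, ENNReal.tsum_mul_left, ENNReal.tsum_mul_right,
        show ∑' y, g (x - y) = mass g from (Equiv.subLeft x).tsum_eq g]
      rfl

lemma convPow_succ_apply_le_of_far {f : V → ℝ≥0∞} {r : ℝ} {A : ℝ≥0∞}
    (hf : ∀ y, r ≤ ‖y‖ → f y ≤ A) (n : ℕ) {x : V} (hx : (n + 1 : ℕ) * r ≤ ‖x‖) :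
    convPow f (n + 1) x ≤ (n + 1 : ℕ) * A * mass f ^ n := by
  induction n generalizing x with
  | zero => simpa [convPow_one] using hf x (by simpa using hx)
  | succ n ih =>
    rw [convPow_succ']
    refine (conv_apply_le_of_far (fun y hy => ih hy) hf ?_).trans (le_of_eq ?_)
    · push_cast at hx ⊢
      linarith
    · rw [mass_convPow]
      push_cast
      ring

/-- The submultiplicative weight `exp (a * ‖x‖)`. -/
def expWeight (a : ℝ) (x : V) : ℝ≥0∞ := ENNReal.ofReal (Real.exp (a * ‖x‖))

lemma expWeight_add_le {a : ℝ} (ha : 0 ≤ a) (x y : V) :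
    expWeight a (x + y) ≤ expWeight a x * expWeight a y := by
  rw [expWeight, expWeight, expWeight, ← ENNReal.ofReal_mul (by positivity), ← Real.exp_add,
    ← mul_add]
  gcongr
  exact norm_add_le x y

lemma expWeight_zero (a : ℝ) : expWeight a (0 : V) = 1 := by simp [expWeight]

end Norm

/-! ### The lattice `ℤ^d` -/

section Lattice

variable {d : ℕ}

lemma supNorm_eq_norm (x : Fin d → ℤ) : supNorm x = ‖x‖ := by
  have h := Finset.apply_sup_eq_sup_comp_of_linearOrder (Nat.cast : ℕ → NNReal) Nat.mono_cast
    (s := Finset.univ) (f := fun i => (x i).natAbs) Nat.cast_zero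
  rw [supNorm, Pi.norm_def, ← NNReal.coe_natCast, h]
  simp only [Function.comp_def, NNReal.natCast_natAbs]

lemma abs_apply_le_norm (x : Fin d → ℤ) (i : Fin d) : |(x i : ℝ)| ≤ ‖x‖ := by
  simpa only [Int.norm_eq_abs] using norm_le_pi_norm x i

lemma exists_norm_eq_abs_apply (hd : 0 < d) (x : Fin d → ℤ) : ∃ i, ‖x‖ = |(x i : ℝ)| := by
  have : Nonempty (Fin d) := ⟨⟨0, hd⟩⟩
  obtain ⟨i, -, hi⟩ := Finset.exists_mem_eq_sup Finset.univ Finset.univ_nonempty fun i => ‖x i‖₊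
  exact ⟨i, by rw [← Int.norm_eq_abs, Pi.norm_def, hi, coe_nnnorm]⟩

lemma sqNorm_nonneg (x : Fin d → ℤ) : 0 ≤ sqNorm x := Finset.sum_nonneg fun _ _ => sq_nonneg _

lemma sq_norm_le_sqNorm (hd : 0 < d) (x : Fin d → ℤ) : ‖x‖ ^ 2 ≤ sqNorm x := by
  obtain ⟨i, hi⟩ := exists_norm_eq_abs_apply hd x
  rw [hi, sq_abs]
  exact Finset.single_le_sum (f := fun i => (x i : ℝ) ^ 2) (fun _ _ => sq_nonneg _)
    (Finset.mem_univ i)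

lemma sqNorm_le (x : Fin d → ℤ) : sqNorm x ≤ d * ‖x‖ ^ 2 := by
  have h : ∀ i ∈ Finset.univ, (x i : ℝ) ^ 2 ≤ ‖x‖ ^ 2 := fun i _ => by
    rw [← sq_abs]
    gcongr
    exact abs_apply_le_norm x i
  simpa [sqNorm] using Finset.sum_le_sum h

/-- The Euclidean weight `|x|₂²` as an extended nonnegative number. -/
def sqWeight (x : Fin d → ℤ) : ℝ≥0∞ := ENNReal.ofReal (sqNorm x)

/-- The second moment `∑ₓ |x|₂² f(x)`. -/
def secondMoment (f : (Fin d → ℤ) → ℝ≥0∞) : ℝ≥0∞ := mass (f * sqWeight)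

lemma secondMoment_add (f g : (Fin d → ℤ) → ℝ≥0∞) :
    secondMoment (f + g) = secondMoment f + secondMoment g := by
  rw [secondMoment, add_mul, mass_add, secondMoment, secondMoment]

lemma secondMoment_smul (c : ℝ≥0∞) (f : (Fin d → ℤ) → ℝ≥0∞) :
    secondMoment (c • f) = c * secondMoment f := by
  rw [secondMoment, smul_mul_assoc, mass_smul, secondMoment]

@[gcongr]
lemma secondMoment_mono {f g : (Fin d → ℤ) → ℝ≥0∞} (h : f ≤ g) :
    secondMoment f ≤ secondMoment g :=
  mass_mono (mul_le_mul_left h _)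

lemma sqWeight_add_add_sqWeight_sub (y z : Fin d → ℤ) :
    sqWeight (y + z) + sqWeight (y - z) = 2 * (sqWeight y + sqWeight z) := by
  have h : sqNorm (y + z) + sqNorm (y - z) = 2 * (sqNorm y + sqNorm z) := by
    simp only [sqNorm, ← Finset.sum_add_distrib, Finset.mul_sum]
    refine Finset.sum_congr rfl fun i _ => ?_
    push_cast [Pi.add_apply, Pi.sub_apply]
    ring
  rw [sqWeight, sqWeight, sqWeight, sqWeight, ← ENNReal.ofReal_add, h, ENNReal.ofReal_mul,
    ENNReal.ofReal_add, ENNReal.ofReal_ofNat]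
  all_goals first | exact sqNorm_nonneg _ | exact zero_le_two

/-- Symmetrising in `z ↦ -z` removes the cross term, by the parallelogram law. -/
lemma secondMoment_conv (f : (Fin d → ℤ) → ℝ≥0∞) {g : (Fin d → ℤ) → ℝ≥0∞}
    (hg : ∀ x, g (-x) = g x) :
    secondMoment (f ⋆ g) = secondMoment f * mass g + mass f * secondMoment g := by
  have plus : secondMoment (f ⋆ g) = ∑' y, ∑' z, f y * g z * sqWeight (y + z) :=
    mass_conv_mul f g sqWeight
  have minus : secondMoment (f ⋆ g) = ∑' y, ∑' z, f y * g z * sqWeight (y - z) := by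
    rw [plus]
    refine tsum_congr fun y => ?_
    rw [← (Equiv.neg _).tsum_eq]
    simp [hg, sub_eq_add_neg]
  have inner (y) : ∑' z, f y * g z * sqWeight (y + z) + ∑' z, f y * g z * sqWeight (y - z) =
      2 * (f y * sqWeight y * mass g + f y * secondMoment g) := by
    rw [← ENNReal.tsum_add, mass, secondMoment, mass, ← ENNReal.tsum_mul_left,
      ← ENNReal.tsum_mul_left, ← ENNReal.tsum_add, ← ENNReal.tsum_mul_left]
    refine tsum_congr fun z => ?_
    rw [← mul_add, sqWeight_add_add_sqWeight_sub, Pi.mul_apply]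
    ring
  have double : 2 * secondMoment (f ⋆ g) =
      2 * (secondMoment f * mass g + mass f * secondMoment g) := by
    rw [two_mul]
    nth_rewrite 1 [plus]
    rw [minus, ← ENNReal.tsum_add]
    simp only [inner]
    rw [ENNReal.tsum_mul_left, ENNReal.tsum_add, ENNReal.tsum_mul_right, ENNReal.tsum_mul_right]
    rfl
  exact (ENNReal.mul_right_inj (by norm_num) (by norm_num)).mp double

lemma tsum_prod_apply (d : ℕ) (g : ℤ → ℝ≥0∞) :
    ∑' x : Fin d → ℤ, ∏ i, g (x i) = (∑' j, g j) ^ d := by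
  induction d with
  | zero => simp
  | succ d ih =>
    rw [← (Fin.consEquiv fun _ => ℤ).tsum_eq, ENNReal.tsum_prod', pow_succ', ← ih,
      ← ENNReal.tsum_mul_right]
    refine tsum_congr fun j => ?_
    rw [← ENNReal.tsum_mul_left]
    refine tsum_congr fun x => ?_
    simp [Fin.consEquiv, Fin.prod_univ_succ]

lemma tsum_int_exp_neg_mul_abs_ne_top {c : ℝ} (hc : 0 < c) :
    ∑' j : ℤ, ENNReal.ofReal (Real.exp (-c * |(j : ℝ)|)) ≠ ⊤ := by
  have h : Summable fun n : ℕ => Real.exp (-c * n) := by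
    simpa only [mul_comm] using Real.summable_exp_nat_mul_iff.mpr (neg_lt_zero.mpr hc)
  refine (Summable.of_nat_of_neg ?_ ?_).tsum_ofReal_ne_top
  · exact h.congr fun n => by simp
  · exact h.congr fun n => by simp

lemma mass_expWeight_neg_ne_top {c : ℝ} (hc : 0 < c) :
    mass (expWeight (-c) : (Fin d → ℤ) → ℝ≥0∞) ≠ ⊤ := by
  rcases Nat.eq_zero_or_pos d with rfl | hd
  · simp [mass, expWeight]
  have : (0 : ℝ) < d := by exact_mod_cast hd
  have le_prod (x : Fin d → ℤ) :
      expWeight (-c) x ≤ ∏ i, ENNReal.ofReal (Real.exp (-(c / d) * |(x i : ℝ)|)) := by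
    rw [expWeight, ← ENNReal.ofReal_prod_of_nonneg (fun i _ => (Real.exp_pos _).le),
      ← Real.exp_sum, ← Finset.mul_sum]
    refine ENNReal.ofReal_le_ofReal (Real.exp_le_exp.mpr ?_)
    have sum_le : ∑ i, |(x i : ℝ)| ≤ d * ‖x‖ := by
      simpa using Finset.sum_le_sum fun i (_ : i ∈ Finset.univ) => abs_apply_le_norm x i
    calc -c * ‖x‖ = -(c / d * (d * ‖x‖)) := by field_simp
      _ ≤ -(c / d) * ∑ i, |(x i : ℝ)| := by
        rw [neg_mul]
        gcongr
  refine ne_top_of_le_ne_top ?_ (ENNReal.tsum_le_tsum le_prod)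
  rw [tsum_prod_apply d fun j => ENNReal.ofReal (Real.exp (-(c / d) * |(j : ℝ)|))]
  exact ENNReal.pow_ne_top (tsum_int_exp_neg_mul_abs_ne_top (by positivity))

end Lattice

section Decay

variable {d : ℕ} {f : (Fin d → ℤ) → ℝ≥0∞} {C c : ℝ}

lemma sqNorm_le_mul_exp {c : ℝ} (hc : 0 < c) (x : Fin d → ℤ) :
    sqNorm x ≤ d * (2 / c ^ 2) * Real.exp (c * ‖x‖) := by
  have quadratic := Real.quadratic_le_exp_of_nonneg (mul_nonneg hc.le (norm_nonneg x))
  have half_sq : (c * ‖x‖) ^ 2 / 2 ≤ Real.exp (c * ‖x‖) := by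
    linarith [mul_nonneg hc.le (norm_nonneg x)]
  calc sqNorm x ≤ d * ‖x‖ ^ 2 := sqNorm_le x
    _ = d * (2 / c ^ 2) * ((c * ‖x‖) ^ 2 / 2) := by field_simp
    _ ≤ _ := by gcongr

lemma mass_ne_top_of_le_exp (hc : 0 < c)
    (hf : ∀ x, f x ≤ ENNReal.ofReal (C * Real.exp (-c * ‖x‖))) : mass f ≠ ⊤ := by
  have le_smul : f ≤ ENNReal.ofReal C • expWeight (-c) := fun x =>
    (hf x).trans_eq (ENNReal.ofReal_mul' (Real.exp_pos _).le)
  refine ne_top_of_le_ne_top ?_ (mass_mono le_smul)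
  rw [mass_smul]
  exact ENNReal.mul_ne_top ENNReal.ofReal_ne_top (mass_expWeight_neg_ne_top hc)

lemma secondMoment_ne_top_of_le_exp (hc : 0 < c)
    (hf : ∀ x, f x ≤ ENNReal.ofReal (C * Real.exp (-c * ‖x‖))) : secondMoment f ≠ ⊤ := by
  refine mass_ne_top_of_le_exp (C := C * (d * (2 / (c / 2) ^ 2))) (half_pos hc) fun x => ?_
  rw [mul_assoc, ENNReal.ofReal_mul' (by positivity), Pi.mul_apply]
  calc f x * sqWeight x
      ≤ ENNReal.ofReal C * ENNReal.ofReal (Real.exp (-c * ‖x‖)) *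
        ENNReal.ofReal (d * (2 / (c / 2) ^ 2) * Real.exp (c / 2 * ‖x‖)) := by
        rw [← ENNReal.ofReal_mul' (Real.exp_pos _).le]
        exact mul_le_mul' (hf x) (ENNReal.ofReal_le_ofReal (sqNorm_le_mul_exp (half_pos hc) x))
    _ = _ := by
        have exp_split : Real.exp (-(c / 2) * ‖x‖) =
            Real.exp (-c * ‖x‖) * Real.exp (c / 2 * ‖x‖) := by
          rw [← Real.exp_add]
          ring_nf
        rw [mul_assoc, ← ENNReal.ofReal_mul (Real.exp_pos _).le, exp_split]
        ring_nf

end Decay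

section Symmetry

variable {d : ℕ}

lemma IsSymmFun.neg_apply {α : Type*} {f : (Fin d → ℤ) → α} (hf : IsSymmFun f) (x : Fin d → ℤ) :
    f (-x) = f x := by
  rw [← hf 1 (fun _ => true) x]
  congr 1
  funext i
  simp

/-- The signed coordinate permutation appearing in `IsSymmFun`, as an automorphism of `ℤ^d`. -/
def signedPerm (π : Equiv.Perm (Fin d)) (e : Fin d → Bool) : (Fin d → ℤ) ≃+ (Fin d → ℤ) where
  toFun x := fun i => (if e i then -1 else 1) * x (π i)
  invFun y := fun i => (if e (π.symm i) then -1 else 1) * y (π.symm i)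
  left_inv x := by
    funext i
    by_cases h : e (π.symm i) <;> simp [h]
  right_inv x := by
    funext i
    by_cases h : e i <;> simp [h]
  map_add' x y := by
    funext i
    exact mul_add ..

lemma IsSymmFun.conv {f g : (Fin d → ℤ) → ℝ≥0∞} (hf : IsSymmFun f) (hg : IsSymmFun g) :
    IsSymmFun (f ⋆ g) := by
  intro π e x
  refine ((signedPerm π e).tsum_eq _).symm.trans (tsum_congr fun y => ?_)
  exact congrArg₂ (· * ·) (hf π e y)
    ((congrArg g (map_sub (signedPerm π e) x y)).symm.trans (hg π e (x - y)))

end Symmetry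

/-! ### Susceptibility and second moment -/

namespace Model

variable {d : ℕ} {c₀ : ℝ}

/-- The kernel `J` with values in `[0, ∞]`. -/
def stepKernel (M : Model d c₀) (x : Fin d → ℤ) : ℝ≥0∞ := ENNReal.ofReal (M.K.J x)

/-- The error kernel `H_t` with values in `[0, ∞]`. -/
def errorKernel (M : Model d c₀) (t : ℝ) (x : Fin d → ℤ) : ℝ≥0∞ := ENNReal.ofReal (M.H t x)

/-- The parameter range `0 ≤ t < β_c`. -/
def Subcritical (M : Model d c₀) (t : ℝ) : Prop := 0 ≤ t ∧ ENNReal.ofReal t < M.βc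

/-- The susceptibility as a real number, meaningful in the subcritical range. -/
def chiReal (M : Model d c₀) (t : ℝ) : ℝ := (M.chi t).toReal

/-- The second moment of `F_t` as a real number, meaningful in the subcritical range. -/
def momentReal (M : Model d c₀) (t : ℝ) : ℝ := (secondMoment (M.F t)).toReal

variable {M : Model d c₀} {s t β : ℝ}

lemma F_eq_conv (M : Model d c₀) (t : ℝ) : M.F t = M.stepKernel ⋆ M.G t := rfl

lemma mass_stepKernel (M : Model d c₀) : mass M.stepKernel = 1 := by
  rw [← ENNReal.ofReal_one, ← M.K.norm_one]
  exact (ENNReal.ofReal_tsum_of_nonneg M.K.nonneg M.K.summable).symm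

lemma isSymmFun_stepKernel (M : Model d c₀) : IsSymmFun M.stepKernel :=
  fun π e x => congrArg ENNReal.ofReal (M.K.symm π e x)

lemma isSymmFun_F (M : Model d c₀) (t : ℝ) : IsSymmFun (M.F t) :=
  M.isSymmFun_stepKernel.conv (M.symm t)

lemma mass_F (M : Model d c₀) (t : ℝ) : mass (M.F t) = M.chi t := by
  rw [F_eq_conv, mass_conv, mass_stepKernel, one_mul]
  rfl

lemma F_zero (M : Model d c₀) : M.F 0 = M.stepKernel := by
  have G_zero : M.G 0 = pointMass := by
    funext x
    simp [M.init, pointMass, Set.indicator_apply]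
  rw [F_eq_conv, G_zero, conv_pointMass]

lemma secondMoment_stepKernel (M : Model d c₀) :
    secondMoment M.stepKernel = ENNReal.ofReal (M.sigma ^ 2) := by
  have nonneg (x) : 0 ≤ sqNorm x * M.K.J x := mul_nonneg (sqNorm_nonneg x) (M.K.nonneg x)
  rw [Model.sigma, AdmissibleKernel.sigma, Real.sq_sqrt (tsum_nonneg nonneg),
    ENNReal.ofReal_tsum_of_nonneg nonneg M.K.summable_sq]
  refine tsum_congr fun x => ?_
  rw [Pi.mul_apply, mul_comm, stepKernel, sqWeight, ENNReal.ofReal_mul (sqNorm_nonneg x)]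

lemma secondMoment_F (M : Model d c₀) (t : ℝ) :
    secondMoment (M.F t) = ENNReal.ofReal (M.sigma ^ 2) * M.chi t + secondMoment (M.G t) := by
  rw [F_eq_conv, secondMoment_conv _ (M.symm t).neg_apply, secondMoment_stepKernel,
    mass_stepKernel, one_mul]
  rfl

lemma sigma_pos (M : Model d c₀) (hc : 0 < c₀) : 0 < M.sigma :=
  (mul_pos hc (one_pos.trans_le M.K.R_ge_one)).trans_le M.K.sigma_lower

namespace Subcritical

lemma zero (M : Model d c₀) : M.Subcritical 0 := ⟨le_rfl, by simpa using M.βc_pos⟩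

lemma mono (h : M.Subcritical t) (h0 : 0 ≤ s) (hst : s ≤ t) : M.Subcritical s :=
  ⟨h0, (ENNReal.ofReal_le_ofReal hst).trans_lt h.2⟩

lemma chi_ne_top (h : M.Subcritical t) : M.chi t ≠ ⊤ := by
  obtain ⟨C, -, c, hc, hG⟩ := M.expDecay h.1 h.2
  exact mass_ne_top_of_le_exp hc fun x => supNorm_eq_norm x ▸ hG x

lemma secondMoment_ne_top (h : M.Subcritical t) : secondMoment (M.F t) ≠ ⊤ := by
  obtain ⟨C, -, c, hc, hG⟩ := M.expDecay h.1 h.2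
  rw [secondMoment_F]
  exact ENNReal.add_ne_top.mpr ⟨ENNReal.mul_ne_top ENNReal.ofReal_ne_top h.chi_ne_top,
    secondMoment_ne_top_of_le_exp hc fun x => supNorm_eq_norm x ▸ hG x⟩

lemma chi_eq (h : M.Subcritical t) : M.chi t = ENNReal.ofReal (M.chiReal t) :=
  (ENNReal.ofReal_toReal h.chi_ne_top).symm

lemma secondMoment_eq (h : M.Subcritical t) :
    secondMoment (M.F t) = ENNReal.ofReal (M.momentReal t) :=
  (ENNReal.ofReal_toReal h.secondMoment_ne_top).symm

lemma F_mono (h : M.Subcritical t) (h0 : 0 ≤ s) (hst : s ≤ t) : M.F s ≤ M.F t :=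
  conv_mono le_rfl fun x => M.mono x h0 hst h.2.le

lemma chiReal_mono (h : M.Subcritical t) (h0 : 0 ≤ s) (hst : s ≤ t) :
    M.chiReal s ≤ M.chiReal t :=
  ENNReal.toReal_mono h.chi_ne_top (mass_mono fun x => M.mono x h0 hst h.2.le)

lemma momentReal_mono (h : M.Subcritical t) (h0 : 0 ≤ s) (hst : s ≤ t) :
    M.momentReal s ≤ M.momentReal t :=
  ENNReal.toReal_mono h.secondMoment_ne_top (secondMoment_mono (h.F_mono h0 hst))

end Subcritical

lemma chiReal_zero (M : Model d c₀) : M.chiReal 0 = 1 := by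
  rw [chiReal, ← mass_F, F_zero, mass_stepKernel, ENNReal.toReal_one]

lemma chiReal_nonneg (M : Model d c₀) (t : ℝ) : 0 ≤ M.chiReal t := ENNReal.toReal_nonneg

lemma momentReal_nonneg (M : Model d c₀) (t : ℝ) : 0 ≤ M.momentReal t := ENNReal.toReal_nonneg

lemma xi_nonneg (M : Model d c₀) (t : ℝ) : 0 ≤ M.xi t := Real.sqrt_nonneg _

namespace Subcritical

lemma one_le_chiReal (h : M.Subcritical t) : 1 ≤ M.chiReal t :=
  M.chiReal_zero ▸ h.chiReal_mono le_rfl h.1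

lemma chiReal_pos (h : M.Subcritical t) : 0 < M.chiReal t := one_pos.trans_le h.one_le_chiReal

lemma sigma_sq_mul_chiReal_le (h : M.Subcritical t) :
    M.sigma ^ 2 * M.chiReal t ≤ M.momentReal t := by
  have h1 : ENNReal.ofReal (M.sigma ^ 2) * M.chi t ≤ secondMoment (M.F t) := by
    rw [secondMoment_F]
    exact le_self_add
  simpa [chiReal, momentReal, sq_nonneg] using ENNReal.toReal_mono h.secondMoment_ne_top h1

lemma momentReal_pos (h : M.Subcritical t) (hc : 0 < c₀) : 0 < M.momentReal t :=
  (mul_pos (pow_pos (M.sigma_pos hc) 2) h.chiReal_pos).trans_le h.sigma_sq_mul_chiReal_le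

lemma xiSq_eq (h : M.Subcritical t) :
    M.xiSq t = ENNReal.ofReal (M.momentReal t / M.chiReal t) := by
  rw [ENNReal.ofReal_div_of_pos h.chiReal_pos, ← h.chi_eq, ← h.secondMoment_eq, xiSq]
  simp only [secondMoment, mass, Pi.mul_apply, sqWeight, mul_comm]

lemma xi_sq (h : M.Subcritical t) : M.xi t ^ 2 = M.momentReal t / M.chiReal t := by
  have nonneg : 0 ≤ M.momentReal t / M.chiReal t :=
    div_nonneg (M.momentReal_nonneg t) (M.chiReal_nonneg t)
  rw [xi, h.xiSq_eq, ENNReal.toReal_ofReal nonneg, Real.sq_sqrt nonneg]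

lemma sigma_le_xi (h : M.Subcritical t) : M.sigma ≤ M.xi t := by
  refine le_of_sq_le_sq ?_ (M.xi_nonneg t)
  rw [h.xi_sq, le_div_iff₀ h.chiReal_pos]
  exact h.sigma_sq_mul_chiReal_le

lemma xi_pos (h : M.Subcritical t) (hc : 0 < c₀) : 0 < M.xi t :=
  (M.sigma_pos hc).trans_le h.sigma_le_xi

end Subcritical

lemma xi_zero (M : Model d c₀) : M.xi 0 = M.sigma := by
  refine (pow_left_inj₀ (M.xi_nonneg 0) (Real.sqrt_nonneg _) two_ne_zero).mp ?_
  rw [(Subcritical.zero M).xi_sq, chiReal_zero, div_one, momentReal, F_zero,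
    secondMoment_stepKernel, ENNReal.toReal_ofReal (sq_nonneg _)]
  rfl

/-! ### Consequences of the upper differential inequality -/

namespace Subcritical

lemma G_le_add (h : M.Subcritical t) (h0 : 0 ≤ s) (hst : s ≤ t) :
    M.G t ≤ M.G s + ENNReal.ofReal (t - s) • (M.F s ⋆ M.G t) := by
  intro x
  refine (M.I1 h0 hst h.2 x).trans_eq (congrArg (M.G s x + _ * ·) ?_)
  rw [F_eq_conv, conv_comm M.stepKernel, conv_conv_apply]
  rfl

lemma F_le_add (h : M.Subcritical t) (h0 : 0 ≤ s) (hst : s ≤ t) :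
    M.F t ≤ M.F s + ENNReal.ofReal (t - s) • (M.F s ⋆ M.F t) :=
  calc M.F t ≤ M.stepKernel ⋆ (M.G s + ENNReal.ofReal (t - s) • (M.F s ⋆ M.G t)) :=
        conv_mono le_rfl (h.G_le_add h0 hst)
    _ = M.F s + ENNReal.ofReal (t - s) • (M.F s ⋆ M.F t) := by
        rw [conv_add, conv_smul, conv_left_comm, ← F_eq_conv, ← F_eq_conv]

lemma F_le_sum_add (h : M.Subcritical t) (h0 : 0 ≤ s) (hst : s ≤ t) (n : ℕ) :
    M.F t ≤ (∑ k ∈ Finset.range n, ENNReal.ofReal (t - s) ^ k • convPow (M.F s) (k + 1)) +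
      ENNReal.ofReal (t - s) ^ n • (convPow (M.F s) n ⋆ M.F t) := by
  induction n with
  | zero => simp [convPow, pointMass_conv]
  | succ n ih =>
    have step := conv_mono (f := convPow (M.F s) n) le_rfl (h.F_le_add h0 hst)
    rw [conv_add, conv_smul, ← conv_assoc, ← convPow_succ'] at step
    rw [Finset.sum_range_succ, add_assoc, pow_succ, mul_smul, ← smul_add]
    exact ih.trans (by gcongr)

/-- Iterating `F_le_add` gives a Neumann series, whose remainder is controlled by masses. -/
lemma F_le_tsum (h : M.Subcritical t) (h0 : 0 ≤ s) (hst : s ≤ t)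
    (hlt : ENNReal.ofReal (t - s) * M.chi s < 1) (x : Fin d → ℤ) :
    M.F t x ≤ ∑' k, ENNReal.ofReal (t - s) ^ k * convPow (M.F s) (k + 1) x := by
  set q := ENNReal.ofReal (t - s) * M.chi s
  set series := ∑' k, ENNReal.ofReal (t - s) ^ k * convPow (M.F s) (k + 1) x
  have partial_le (n : ℕ) : M.F t x ≤ series + q ^ n * M.chi t := by
    have remainder : (convPow (M.F s) n ⋆ M.F t) x ≤ M.chi s ^ n * M.chi t := by
      refine (conv_apply_le_of_le (fun y => le_mass (M.F t) y) x).trans_eq ?_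
      rw [mass_convPow, mass_F, mass_F]
    have iterate := h.F_le_sum_add h0 hst n x
    simp only [Pi.add_apply, Finset.sum_apply, Pi.smul_apply, smul_eq_mul] at iterate
    refine iterate.trans (add_le_add (ENNReal.sum_le_tsum _) ?_)
    rw [mul_pow, mul_assoc]
    gcongr
  have tendsto : Filter.Tendsto (fun n : ℕ => series + q ^ n * M.chi t) Filter.atTop
      (nhds (series + 0 * M.chi t)) :=
    (ENNReal.Tendsto.mul_const (ENNReal.tendsto_pow_atTop_nhds_zero_of_lt_one hlt)
      (Or.inr h.chi_ne_top)).const_add _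
  simpa using ge_of_tendsto' tendsto partial_le

lemma chiReal_le_add (h : M.Subcritical t) (h0 : 0 ≤ s) (hst : s ≤ t) :
    M.chiReal t ≤ M.chiReal s + (t - s) * (M.chiReal s * M.chiReal t) := by
  have hs := h.mono h0 hst
  have le := mass_mono (h.F_le_add h0 hst)
  rw [mass_add, mass_smul, mass_conv, mass_F, mass_F, h.chi_eq, hs.chi_eq,
    ← ENNReal.ofReal_mul hs.chiReal_pos.le, ← ENNReal.ofReal_mul (sub_nonneg.mpr hst)] at le
  have nonneg := mul_nonneg (sub_nonneg.mpr hst) (mul_pos hs.chiReal_pos h.chiReal_pos).le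
  rwa [← ENNReal.ofReal_add hs.chiReal_pos.le nonneg,
    ENNReal.ofReal_le_ofReal_iff (add_nonneg hs.chiReal_pos.le nonneg)] at le

lemma momentReal_le_add (h : M.Subcritical t) (h0 : 0 ≤ s) (hst : s ≤ t) :
    M.momentReal t ≤ M.momentReal s +
      (t - s) * (M.momentReal s * M.chiReal t + M.chiReal s * M.momentReal t) := by
  have hs := h.mono h0 hst
  have nonneg₁ := mul_nonneg (M.momentReal_nonneg s) (M.chiReal_nonneg t)
  have nonneg₂ := mul_nonneg (M.chiReal_nonneg s) (M.momentReal_nonneg t)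
  have nonneg := mul_nonneg (sub_nonneg.mpr hst) (add_nonneg nonneg₁ nonneg₂)
  have le := secondMoment_mono (h.F_le_add h0 hst)
  rw [secondMoment_add, secondMoment_smul, secondMoment_conv _ (M.isSymmFun_F t).neg_apply,
    mass_F, mass_F, h.chi_eq, hs.chi_eq, h.secondMoment_eq, hs.secondMoment_eq,
    ← ENNReal.ofReal_mul (M.momentReal_nonneg s), ← ENNReal.ofReal_mul (M.chiReal_nonneg s),
    ← ENNReal.ofReal_add nonneg₁ nonneg₂, ← ENNReal.ofReal_mul (sub_nonneg.mpr hst)] at le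
  rwa [← ENNReal.ofReal_add (M.momentReal_nonneg s) nonneg,
    ENNReal.ofReal_le_ofReal_iff (add_nonneg (M.momentReal_nonneg s) nonneg)] at le

end Subcritical

end Model

lemma continuousOn_Icc_of_monotoneOn_of_le_add_mul {f : ℝ → ℝ} {a b K : ℝ} (hK : 0 ≤ K)
    (hf : MonotoneOn f (Set.Icc a b))
    (hle : ∀ s ∈ Set.Icc a b, ∀ t ∈ Set.Icc a b, s ≤ t → f t ≤ f s + K * (t - s)) :
    ContinuousOn f (Set.Icc a b) := by
  lift K to NNReal using hK
  refine (LipschitzOnWith.of_le_add_mul K fun x hx y hy => ?_).continuousOn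
  rcases le_total x y with hxy | hyx
  · exact (hf hx hy hxy).trans (le_add_of_nonneg_right (by positivity))
  · rw [Real.dist_eq, abs_of_nonneg (sub_nonneg.mpr hyx)]
    exact hle y hy x hx hyx

namespace Model

variable {d : ℕ} {c₀ : ℝ} {M : Model d c₀} {t β : ℝ}

namespace Subcritical

lemma continuousOn_chiReal (h : M.Subcritical β) : ContinuousOn M.chiReal (Set.Icc 0 β) := by
  refine continuousOn_Icc_of_monotoneOn_of_le_add_mul (K := M.chiReal β * M.chiReal β)
    (mul_self_nonneg _) (fun s hs t ht hst => (h.mono ht.1 ht.2).chiReal_mono hs.1 hst) ?_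
  intro s hs t ht hst
  refine ((h.mono ht.1 ht.2).chiReal_le_add hs.1 hst).trans ?_
  rw [mul_comm (t - s)]
  have := sub_nonneg.mpr hst
  have := M.chiReal_nonneg t
  have := M.chiReal_nonneg β
  gcongr
  exacts [h.chiReal_mono hs.1 hs.2, h.chiReal_mono ht.1 ht.2]

lemma continuousOn_momentReal (h : M.Subcritical β) :
    ContinuousOn M.momentReal (Set.Icc 0 β) := by
  have chi_nonneg := M.chiReal_nonneg
  have moment_nonneg := M.momentReal_nonneg
  refine continuousOn_Icc_of_monotoneOn_of_le_add_mul
    (K := M.momentReal β * M.chiReal β + M.chiReal β * M.momentReal β)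
    (add_nonneg (mul_nonneg (moment_nonneg β) (chi_nonneg β))
      (mul_nonneg (chi_nonneg β) (moment_nonneg β)))
    (fun s hs t ht hst => (h.mono ht.1 ht.2).momentReal_mono hs.1 hst) ?_
  intro s hs t ht hst
  refine ((h.mono ht.1 ht.2).momentReal_le_add hs.1 hst).trans ?_
  rw [mul_comm (t - s)]
  have := sub_nonneg.mpr hst
  have := chi_nonneg t
  have := chi_nonneg β
  have := moment_nonneg t
  have := moment_nonneg β
  gcongr
  exacts [h.momentReal_mono hs.1 hs.2, h.chiReal_mono ht.1 ht.2, h.chiReal_mono hs.1 hs.2,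
    h.momentReal_mono ht.1 ht.2]

lemma exists_sub_mul_chiReal_eq (h : M.Subcritical t) {κ : ℝ} (hκ : 0 ≤ κ) (hκt : κ < t) :
    ∃ s, 0 ≤ s ∧ s ≤ t ∧ (t - s) * M.chiReal s = κ := by
  have cont : ContinuousOn (fun s => (t - s) * M.chiReal s) (Set.Icc 0 t) :=
    (continuousOn_const.sub continuousOn_id).mul h.continuousOn_chiReal
  obtain ⟨s, hs, hsκ⟩ := intermediate_value_Icc' h.1 cont
    (show κ ∈ Set.Icc ((t - t) * M.chiReal t) ((t - 0) * M.chiReal 0) by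
      rw [chiReal_zero]
      constructor <;> linarith)
  exact ⟨s, hs.1, hs.2, hsκ⟩

/-- Induction along predecessors: `χ ≤ χ(β)` bounds the step sizes from below, so the chain of
predecessors reaches `[0, κ]` after finitely many steps. -/
lemma induction_of_sub_mul_chiReal_eq (h : M.Subcritical β) {κ : ℝ} (hκ : 0 < κ) {P : ℝ → Prop}
    (base : ∀ t, 0 ≤ t → t ≤ β → t ≤ κ → P t)
    (step : ∀ s t, 0 ≤ s → s ≤ t → t ≤ β → (t - s) * M.chiReal s = κ → P s → P t)
    (ht0 : 0 ≤ t) (htβ : t ≤ β) : P t := by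
  set e := κ / M.chiReal β with he
  have e_pos : 0 < e := div_pos hκ h.chiReal_pos
  suffices key : ∀ n : ℕ, ∀ t, 0 ≤ t → t ≤ β → t ≤ n * e → P t by
    obtain ⟨n, hn⟩ := exists_nat_ge (t / e)
    exact key n t ht0 htβ (by rwa [div_le_iff₀ e_pos] at hn)
  intro n
  induction n with
  | zero => exact fun t ht0 htβ ht => base t ht0 htβ (by simp at ht; linarith)
  | succ n ih =>
    intro t ht0 htβ ht
    rcases le_or_gt t κ with htκ | hκt
    · exact base t ht0 htβ htκ
    obtain ⟨s, hs0, hst, hs⟩ := (h.mono ht0 htβ).exists_sub_mul_chiReal_eq hκ.le hκt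
    refine step s t hs0 hst htβ hs (ih s hs0 (hst.trans htβ) ?_)
    have e_le : e ≤ t - s := by
      rw [he, div_le_iff₀ h.chiReal_pos, ← hs]
      exact mul_le_mul_of_nonneg_left (h.chiReal_mono hs0 (hst.trans htβ)) (sub_nonneg.mpr hst)
    push_cast at ht
    linarith

end Subcritical

/-- Smallness of the error up to `β`, in terms of masses and second moments: this is `E(β) ≤ δ`
with the two summands of `E` bounded separately. -/
def ErrorLE (M : Model d c₀) (δ β : ℝ) : Prop :=
  M.Subcritical β ∧ ∀ t ∈ Set.Icc 0 β, mass (M.errorKernel t) ≤ ENNReal.ofReal δ ∧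
    secondMoment (M.errorKernel t) ≤ ENNReal.ofReal (δ * M.xi t ^ 2)

lemma ErrorLE.mono {δ : ℝ} (h : M.ErrorLE δ β) (h0 : 0 ≤ t) (ht : t ≤ β) : M.ErrorLE δ t :=
  ⟨h.1.mono h0 ht, fun s hs => h.2 s ⟨hs.1, hs.2.trans ht⟩⟩

lemma Subcritical.errorKernel_le_exp (h : M.Subcritical t) :
    ∃ C > 0, ∃ c > 0, ∀ x, M.errorKernel t x ≤ ENNReal.ofReal (C * Real.exp (-c * ‖x‖)) := by
  obtain ⟨C, hC, c, hc, hH⟩ := M.H_expDecay h.1 h.2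
  exact ⟨C, hC, c, hc, fun x => ENNReal.ofReal_le_ofReal (supNorm_eq_norm x ▸ hH x)⟩

lemma Subcritical.mass_errorKernel (h : M.Subcritical t) :
    mass (M.errorKernel t) = ENNReal.ofReal (∑' x, M.H t x) := by
  obtain ⟨C, -, c, hc, hH⟩ := h.errorKernel_le_exp
  refine (ENNReal.ofReal_tsum_of_nonneg (M.H_nonneg t) ?_).symm
  exact (ENNReal.summable_toReal (mass_ne_top_of_le_exp hc hH)).congr fun x =>
    ENNReal.toReal_ofReal (M.H_nonneg t x)

lemma Subcritical.secondMoment_errorKernel (h : M.Subcritical t) :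
    secondMoment (M.errorKernel t) = ENNReal.ofReal (∑' x, sqNorm x * M.H t x) := by
  obtain ⟨C, -, c, hc, hH⟩ := h.errorKernel_le_exp
  have nonneg (x) : 0 ≤ sqNorm x * M.H t x := mul_nonneg (sqNorm_nonneg x) (M.H_nonneg t x)
  have eq (x) : M.errorKernel t x * sqWeight x = ENNReal.ofReal (sqNorm x * M.H t x) := by
    rw [mul_comm, ENNReal.ofReal_mul (sqNorm_nonneg x), sqWeight, errorKernel]
  rw [ENNReal.ofReal_tsum_of_nonneg nonneg]
  · exact tsum_congr eq
  · refine (ENNReal.summable_toReal (secondMoment_ne_top_of_le_exp hc hH)).congr fun x => ?_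
    rw [Pi.mul_apply, eq, ENNReal.toReal_ofReal (nonneg x)]

lemma errorLE_of_lt_betaOf (hc : 0 < c₀) {δ : ℝ} (hδ : 0 < δ) (h0 : 0 ≤ β)
    (hβ : β < M.betaOf δ) : M.ErrorLE δ β := by
  have nonempty : {β : ℝ | 0 ≤ β ∧ ENNReal.ofReal β < M.βc ∧
      M.E β < ENNReal.ofReal δ}.Nonempty := by
    by_contra hne
    rw [betaOf, Set.not_nonempty_iff_eq_empty.mp hne, Real.sSup_empty] at hβ
    linarith
  obtain ⟨b, ⟨hb0, hbc, hbE⟩, hβb⟩ := exists_lt_of_lt_csSup nonempty hβ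
  have hb : M.Subcritical b := ⟨hb0, hbc⟩
  refine ⟨hb.mono h0 hβb.le, fun t ht => ?_⟩
  have htb : t ∈ Set.Icc 0 b := ⟨ht.1, ht.2.trans hβb.le⟩
  have ht := hb.mono htb.1 htb.2
  have hE : mass (M.errorKernel t) + secondMoment (M.errorKernel t) / M.xiSq t ≤
      ENNReal.ofReal δ := by
    rw [ht.mass_errorKernel, ht.secondMoment_errorKernel]
    exact (le_iSup₂_of_le t htb le_rfl).trans hbE.le
  refine ⟨le_self_add.trans hE, ?_⟩
  have xi_sq_pos := pow_pos (ht.xi_pos hc) 2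
  have moment_le := le_add_self.trans hE
  rwa [ht.xiSq_eq, ← ht.xi_sq, ENNReal.div_le_iff (ENNReal.ofReal_pos.mpr xi_sq_pos).ne'
    ENNReal.ofReal_ne_top, ← ENNReal.ofReal_mul hδ.le] at moment_le

end Model

/-! ### Lower right Dini derivatives -/

section Dini

open Filter Topology

/-- The lower right Dini derivative of `f` at `x` is at least `a`. -/
def LowerDiniGE (f : ℝ → ℝ) (x a : ℝ) : Prop := ∀ r < a, ∀ᶠ z in 𝓝[>] x, r < slope f x z

/-- By monotonicity, every finite partial sum of the derivatives bounds the difference quotient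
of the whole series from below. -/
lemma lowerDiniGE_tsum {ι : Type*} {f : ℝ → ι → ℝ} {f' : ι → ℝ} {t b a : ℝ} (htb : t < b)
    (hmono : ∀ i, MonotoneOn (f · i) (Set.Icc t b))
    (hderiv : ∀ i, HasDerivWithinAt (f · i) (f' i) (Set.Ici t) t)
    (hsum : ∀ u ∈ Set.Icc t b, Summable (f u)) (ha : 0 < a)
    (hle : ENNReal.ofReal a ≤ ∑' i, ENNReal.ofReal (f' i)) :
    LowerDiniGE (fun u => ∑' i, f u i) t a := by
  intro r hr
  have deriv_nonneg (i) : 0 ≤ f' i :=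
    ((hderiv i).mono Set.Icc_subset_Ici_self).nonneg_of_monotoneOn
      (uniqueDiffWithinAt_iff_accPt.mp (uniqueDiffOn_Icc htb t ⟨le_rfl, htb.le⟩)) (hmono i)
  obtain ⟨A, hA⟩ : ∃ A : Finset ι, r < ∑ i ∈ A, f' i := by
    have hr' := ((ENNReal.ofReal_lt_ofReal_iff ha).mpr hr).trans_le hle
    rw [ENNReal.tsum_eq_iSup_sum, lt_iSup_iff] at hr'
    obtain ⟨A, hA⟩ := hr'
    rw [← ENNReal.ofReal_sum_of_nonneg fun i _ => deriv_nonneg i] at hA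
    exact ⟨A, (ENNReal.ofReal_lt_ofReal_iff'.mp hA).1⟩
  have deriv_sum := (HasDerivWithinAt.fun_sum fun i (_ : i ∈ A) => hderiv i).Ioi_of_Ici
  rw [hasDerivWithinAt_iff_tendsto_slope' (by simp)] at deriv_sum
  filter_upwards [deriv_sum.eventually (lt_mem_nhds hA), Ioo_mem_nhdsGT htb] with z hz hzb
  have htb : t ∈ Set.Icc t b := ⟨le_rfl, htb.le⟩
  have hzb' : z ∈ Set.Icc t b := ⟨hzb.1.le, hzb.2.le⟩
  refine hz.trans_le ?_
  rw [slope_def_field, slope_def_field, ← Finset.sum_sub_distrib,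
    ← (hsum z hzb').tsum_sub (hsum t htb)]
  refine div_le_div_of_nonneg_right ?_ (sub_nonneg.mpr hzb.1.le)
  exact ((hsum z hzb').sub (hsum t htb)).sum_le_tsum A fun i _ =>
    sub_nonneg.mpr (hmono i htb hzb' hzb.1.le)

lemma le_of_lowerDiniGE {f g B B' : ℝ → ℝ} {a b : ℝ} (hf : ContinuousOn f (Set.Icc a b))
    (hdini : ∀ x ∈ Set.Ico a b, LowerDiniGE f x (g x))
    (hB : ∀ x ∈ Set.Icc a b, HasDerivAt B (B' x) x) (ha : B a ≤ f a)
    (hlt : ∀ x ∈ Set.Ico a b, B x = f x → B' x < g x) : ∀ x ∈ Set.Icc a b, B x ≤ f x := by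
  intro x hx
  have key := image_le_of_liminf_slope_right_lt_deriv_boundary' (f := fun u => -f u)
    (f' := fun u => -g u) (B := fun u => -B u) (B' := fun u => -B' u) hf.neg
    (fun y hy r hr => ?_) (neg_le_neg ha)
    (fun y hy => (hB y hy).continuousAt.neg.continuousWithinAt)
    (fun y hy => (hB y ⟨hy.1, hy.2.le⟩).neg.hasDerivWithinAt)
    (fun y hy hfB => neg_lt_neg (hlt y hy (neg_injective hfB).symm)) hx
  · exact neg_le_neg_iff.mp key
  · refine Eventually.frequently ?_
    filter_upwards [hdini y hy (-r) (by linarith)] with z hz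
    have slope_neg : slope (fun u => -f u) y z = -slope f y z := by
      simp only [slope_def_field]
      ring
    rw [slope_neg]
    linarith

variable {f g : ℝ → ℝ} {a b κ κ' : ℝ}

lemma hasDerivAt_inv_sub_mul {c x : ℝ} (h : c - κ * (x - a) ≠ 0) :
    HasDerivAt (fun u => (c - κ * (u - a))⁻¹) (κ * (c - κ * (x - a))⁻¹ ^ 2) x := by
  have linear : HasDerivAt (fun u => c - κ * (u - a)) (-(κ * 1)) x :=
    (((hasDerivAt_id x).sub_const a).const_mul κ).const_sub c
  refine (linear.inv h).congr_deriv ?_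
  field_simp

lemma inv_sub_mul_pos (hκ : κ ≤ 1) (hfa : 0 < f a) (hlt : (b - a) * f a < 1) {x : ℝ}
    (hx : x ∈ Set.Icc a b) : 0 < (f a)⁻¹ - κ * (x - a) := by
  have h1 : b - a < (f a)⁻¹ := by rwa [← one_div, lt_div_iff₀ hfa]
  have h2 : κ * (x - a) ≤ 1 * (b - a) :=
    mul_le_mul hκ (by linarith [hx.2]) (by linarith [hx.1]) zero_le_one
  linarith

lemma inv_le_of_lowerDiniGE_sq (hf : ContinuousOn f (Set.Icc a b))
    (hpos : ∀ x ∈ Set.Icc a b, 0 < f x)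
    (hdini : ∀ x ∈ Set.Ico a b, LowerDiniGE f x (κ * f x ^ 2)) (hκ : κ' < κ) (hκ' : κ' ≤ 1)
    (hlt : (b - a) * f a < 1) {x : ℝ} (hx : x ∈ Set.Icc a b) :
    ((f a)⁻¹ - κ' * (x - a))⁻¹ ≤ f x := by
  have hfa := hpos a ⟨le_rfl, hx.1.trans hx.2⟩
  refine le_of_lowerDiniGE hf hdini
    (fun y hy => hasDerivAt_inv_sub_mul (inv_sub_mul_pos hκ' hfa hlt hy).ne') (by simp)
    (fun y hy hBf => ?_) x hx
  rw [hBf]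
  exact mul_lt_mul_of_pos_right hκ (pow_pos (hpos y ⟨hy.1, hy.2.le⟩) 2)

lemma mul_inv_sq_le_of_lowerDiniGE_mul {μ : ℝ} (hf : ∀ x ∈ Set.Icc a b, 0 < f x)
    (hfle : ∀ x ∈ Set.Icc a b, ((f a)⁻¹ - κ' * (x - a))⁻¹ ≤ f x)
    (hg : ContinuousOn g (Set.Icc a b)) (hgpos : ∀ x ∈ Set.Icc a b, 0 < g x)
    (hdini : ∀ x ∈ Set.Ico a b, LowerDiniGE g x (μ * (f x * g x)))
    (hμ : 2 * κ' < μ) (hκ0 : 0 ≤ κ') (hκ' : κ' ≤ 1) (hlt : (b - a) * f a < 1) {x : ℝ}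
    (hx : x ∈ Set.Icc a b) :
    g a / f a ^ 2 * ((f a)⁻¹ - κ' * (x - a))⁻¹ ^ 2 ≤ g x := by
  have hfa := hf a ⟨le_rfl, hx.1.trans hx.2⟩
  have hderiv (y) (hy : y ∈ Set.Icc a b) := ((hasDerivAt_inv_sub_mul
    (inv_sub_mul_pos hκ' hfa hlt hy).ne').fun_pow 2).const_mul (g a / f a ^ 2)
  refine le_of_lowerDiniGE hg hdini hderiv ?_ (fun y hy hBg => ?_) x hx
  · simp only [sub_self, mul_zero, sub_zero, inv_inv]
    rw [div_mul_cancel₀ _ (by positivity)]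
  have hy' : y ∈ Set.Icc a b := ⟨hy.1, hy.2.le⟩
  set D := ((f a)⁻¹ - κ' * (y - a))⁻¹
  calc g a / f a ^ 2 * ((2 : ℕ) * D ^ (2 - 1) * (κ' * D ^ 2))
      = 2 * κ' * (D * (g a / f a ^ 2 * D ^ 2)) := by push_cast; ring
    _ = 2 * κ' * (D * g y) := by rw [hBg]
    _ ≤ 2 * κ' * (f y * g y) := by
        have := hgpos y hy'
        gcongr
        exact hfle y hy'
    _ < μ * (f y * g y) := mul_lt_mul_of_pos_right hμ (mul_pos (hf y hy') (hgpos y hy'))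

end Dini

/-! ### Consequences of the lower differential inequality -/

lemma tsum_le_ofReal_tsum_sub_add_tsum {ι : Type*} {a b : ι → ℝ≥0∞} (ha : ∑' i, a i ≠ ⊤)
    (hb : ∑' i, b i ≠ ⊤) :
    ∑' i, a i ≤ ENNReal.ofReal (∑' i, ((a i).toReal - (b i).toReal)) + ∑' i, b i := by
  have tsum_eq : ∑' i, ((a i).toReal - (b i).toReal) = (∑' i, a i).toReal - (∑' i, b i).toReal := by
    rw [(ENNReal.summable_toReal ha).tsum_sub (ENNReal.summable_toReal hb),
      ENNReal.tsum_toReal_eq (ENNReal.ne_top_of_tsum_ne_top ha),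
      ENNReal.tsum_toReal_eq (ENNReal.ne_top_of_tsum_ne_top hb)]
  rw [tsum_eq, ENNReal.ofReal_sub _ ENNReal.toReal_nonneg, ENNReal.ofReal_toReal ha,
    ENNReal.ofReal_toReal hb]
  exact le_tsub_add

lemma ofReal_sub_le_of_ofReal_le_add {a b : ℝ} {y : ℝ≥0∞} (hb : 0 ≤ b)
    (h : ENNReal.ofReal a ≤ y + ENNReal.ofReal b) : ENNReal.ofReal (a - b) ≤ y := by
  rw [ENNReal.ofReal_sub _ hb]
  exact tsub_le_iff_right.mpr h

namespace Model

variable {d : ℕ} {c₀ : ℝ} {M : Model d c₀} {s t β δ : ℝ}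

/-- The derivative `∂_t G_t` with values in `[0, ∞]`. -/
def derivKernel (M : Model d c₀) (t : ℝ) (x : Fin d → ℤ) : ℝ≥0∞ := ENNReal.ofReal (M.G' t x)

namespace Subcritical

lemma conv_le_derivKernel_add (h : M.Subcritical t) :
    M.F t ⋆ M.G t ≤ M.derivKernel t + M.G t ⋆ M.errorKernel t ⋆ M.G t := by
  intro x
  have finite {f : (Fin d → ℤ) → ℝ≥0∞} (hf : mass f ≠ ⊤) : (M.G t ⋆ f ⋆ M.G t) x ≠ ⊤ := by
    refine ne_top_of_le_ne_top ?_ (le_mass _ x)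
    rw [mass_conv, mass_conv]
    exact ENNReal.mul_ne_top (ENNReal.mul_ne_top h.chi_ne_top hf) h.chi_ne_top
  have step_finite := finite (M.mass_stepKernel ▸ ENNReal.one_ne_top)
  have error_finite := finite (h.mass_errorKernel ▸ ENNReal.ofReal_ne_top)
  rw [conv_conv_apply] at step_finite error_finite
  rw [F_eq_conv, conv_comm M.stepKernel, Pi.add_apply, conv_conv_apply, conv_conv_apply]
  refine (tsum_le_ofReal_tsum_sub_add_tsum step_finite error_finite).trans ?_
  gcongr
  refine ENNReal.ofReal_le_ofReal (le_of_eq_of_le (tsum_congr fun p => ?_) (M.I2 h.1 h.2 x))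
  simp only [ENNReal.toReal_mul, stepKernel, errorKernel, ENNReal.toReal_ofReal (M.K.nonneg _),
    ENNReal.toReal_ofReal (M.H_nonneg _ _)]
  ring

lemma lowerDiniGE_toReal_mass (h : M.Subcritical β) (h0 : 0 ≤ t) (htβ : t < β)
    {w : (Fin d → ℤ) → ℝ≥0∞} (hw : ∀ x, w x ≠ ⊤) (hfin : mass (M.G β * w) ≠ ⊤) {a : ℝ}
    (ha : 0 < a) (hle : ENNReal.ofReal a ≤ mass (M.derivKernel t * w)) :
    LowerDiniGE (fun u => (mass (M.G u * w)).toReal) t a := by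
  have sub (u) (hu : u ∈ Set.Icc t β) : M.Subcritical u := h.mono (h0.trans hu.1) hu.2
  have mono {u v : ℝ} (hu : u ∈ Set.Icc t β) (hv : v ∈ Set.Icc t β) (huv : u ≤ v) :
      M.G u ≤ M.G v := fun x => M.mono x (sub u hu).1 huv (sub v hv).2.le
  have finite (u) (hu : u ∈ Set.Icc t β) : mass (M.G u * w) ≠ ⊤ :=
    ne_top_of_le_ne_top hfin (mass_mono (mul_le_mul_left (mono hu ⟨htβ.le, le_rfl⟩ hu.2) w))
  have dini := lowerDiniGE_tsum (f := fun u x => (M.G u x).toReal * (w x).toReal)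
    (f' := fun x => M.G' t x * (w x).toReal) htβ
    (fun x u hu v hv huv => mul_le_mul_of_nonneg_right (ENNReal.toReal_mono
      (ne_top_of_le_ne_top (sub v hv).chi_ne_top (le_mass (M.G v) x)) (mono hu hv huv x))
      ENNReal.toReal_nonneg)
    (fun x => ((M.deriv x h0 (sub t ⟨le_rfl, htβ.le⟩).2).mono
      (Set.Ici_subset_Ici.mpr h0)).mul_const _)
    (fun u hu => (ENNReal.summable_toReal (finite u hu)).congr fun x => ENNReal.toReal_mul) ha
    (hle.trans_eq (tsum_congr fun x => by
      rw [ENNReal.ofReal_mul' ENNReal.toReal_nonneg, ENNReal.ofReal_toReal (hw x)]; rfl))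
  intro r hr
  filter_upwards [dini r hr, Ioo_mem_nhdsGT htβ] with z hz hzβ
  have eq (u) (hu : u ∈ Set.Icc t β) : (mass (M.G u * w)).toReal =
      ∑' x, (M.G u x).toReal * (w x).toReal := by
    rw [mass, ENNReal.tsum_toReal_eq (ENNReal.ne_top_of_tsum_ne_top (finite u hu))]
    exact tsum_congr fun x => ENNReal.toReal_mul
  rw [slope_def_field] at hz ⊢
  rwa [eq z ⟨hzβ.1.le, hzβ.2.le⟩, eq t ⟨le_rfl, htβ.le⟩]

end Subcritical

/-- The weight `σ² + |x|₂²`, for which `∑ₓ G_t(x) w(x)` is the second moment of `F_t`. -/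
def momentWeight (M : Model d c₀) : (Fin d → ℤ) → ℝ≥0∞ :=
  fun x => ENNReal.ofReal (M.sigma ^ 2) + sqWeight x

lemma mass_mul_momentWeight (M : Model d c₀) (f : (Fin d → ℤ) → ℝ≥0∞) :
    mass (f * M.momentWeight) = secondMoment (f ⋆ M.stepKernel) := by
  have weight_eq : f * M.momentWeight = ENNReal.ofReal (M.sigma ^ 2) • f + f * sqWeight := by
    funext x
    exact (mul_add _ _ _).trans (congrArg (· + _) (mul_comm _ _))
  rw [weight_eq, mass_add, mass_smul, secondMoment_conv _ M.isSymmFun_stepKernel.neg_apply,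
    mass_stepKernel, secondMoment_stepKernel, mul_one, mul_comm (mass f)]
  exact add_comm _ _

namespace ErrorLE

variable (hδ : 0 ≤ δ) (h : M.ErrorLE δ t)
include hδ h

lemma le_mass_derivKernel :
    ENNReal.ofReal ((1 - δ) * M.chiReal t ^ 2) ≤ mass (M.derivKernel t) := by
  have hX := M.chiReal_nonneg t
  have hG : mass (M.G t) = ENNReal.ofReal (M.chiReal t) := h.1.chi_eq
  have bound : mass (M.F t ⋆ M.G t) ≤ mass (M.derivKernel t) +
      mass (M.G t) * ENNReal.ofReal δ * mass (M.G t) := by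
    refine (mass_mono h.1.conv_le_derivKernel_add).trans ?_
    rw [mass_add, mass_conv, mass_conv]
    gcongr
    exact (h.2 t ⟨h.1.1, le_rfl⟩).1
  rw [mass_conv, mass_F, h.1.chi_eq, hG, ← ENNReal.ofReal_mul hX, ← ENNReal.ofReal_mul hX,
    ← ENNReal.ofReal_mul (by positivity)] at bound
  refine le_of_eq_of_le ?_ (ofReal_sub_le_of_ofReal_le_add (by positivity) bound)
  ring_nf

lemma secondMoment_G_conv_errorKernel_le :
    secondMoment (M.G t ⋆ M.errorKernel t) ≤ ENNReal.ofReal (2 * δ * M.momentReal t) := by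
  have hX := h.1.chiReal_pos
  have hS := M.momentReal_nonneg t
  obtain ⟨mass_le, moment_le⟩ := h.2 t ⟨h.1.1, le_rfl⟩
  have hG : mass (M.G t) = ENNReal.ofReal (M.chiReal t) := h.1.chi_eq
  have even : ∀ x, M.errorKernel t (-x) = M.errorKernel t x := fun x =>
    congrArg ENNReal.ofReal (M.H_symm t x)
  calc secondMoment (M.G t ⋆ M.errorKernel t)
      = secondMoment (M.G t) * mass (M.errorKernel t) +
        mass (M.G t) * secondMoment (M.errorKernel t) := secondMoment_conv _ even
    _ ≤ ENNReal.ofReal (M.momentReal t) * ENNReal.ofReal δ +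
        ENNReal.ofReal (M.chiReal t) * ENNReal.ofReal (δ * M.xi t ^ 2) := by
        have moment_G_le : secondMoment (M.G t) ≤ ENNReal.ofReal (M.momentReal t) := by
          rw [← h.1.secondMoment_eq, secondMoment_F]
          exact le_add_self
        rw [hG]
        exact add_le_add (mul_le_mul' moment_G_le mass_le) (mul_le_mul' le_rfl moment_le)
    _ = ENNReal.ofReal (2 * δ * M.momentReal t) := by
        rw [← ENNReal.ofReal_mul hS, ← ENNReal.ofReal_mul hX.le, h.1.xi_sq,
          ← ENNReal.ofReal_add (by positivity) (by positivity)]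
        congr 1
        field_simp
        ring

lemma le_mass_derivKernel_mul_momentWeight :
    ENNReal.ofReal ((2 - 3 * δ) * (M.chiReal t * M.momentReal t)) ≤
      mass (M.derivKernel t * M.momentWeight) := by
  have hX := M.chiReal_nonneg t
  have hS := M.momentReal_nonneg t
  have hG : mass (M.G t) = ENNReal.ofReal (M.chiReal t) := h.1.chi_eq
  have even := (M.isSymmFun_F t).neg_apply
  have bound : secondMoment (M.F t ⋆ M.F t) ≤ mass (M.derivKernel t * M.momentWeight) +
      secondMoment (M.G t ⋆ M.errorKernel t ⋆ M.F t) := by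
    rw [mass_mul_momentWeight, ← secondMoment_add]
    refine secondMoment_mono (le_of_eq_of_le ?_
      ((conv_mono h.1.conv_le_derivKernel_add (le_refl M.stepKernel)).trans_eq ?_))
    · rw [conv_assoc, conv_comm (M.G t), ← F_eq_conv]
    · rw [add_conv, conv_assoc _ (M.G t), conv_comm (M.G t) M.stepKernel, ← F_eq_conv]
  have error_le : secondMoment (M.G t ⋆ M.errorKernel t ⋆ M.F t) ≤
      ENNReal.ofReal (3 * δ * (M.chiReal t * M.momentReal t)) :=
    calc _ = secondMoment (M.G t ⋆ M.errorKernel t) * M.chi t +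
          mass (M.G t) * mass (M.errorKernel t) * secondMoment (M.F t) := by
          rw [secondMoment_conv _ even, mass_conv, mass_F]
      _ ≤ ENNReal.ofReal (2 * δ * M.momentReal t) * ENNReal.ofReal (M.chiReal t) +
          ENNReal.ofReal (M.chiReal t) * ENNReal.ofReal δ * ENNReal.ofReal (M.momentReal t) := by
          rw [h.1.secondMoment_eq, h.1.chi_eq, hG]
          gcongr
          exacts [h.secondMoment_G_conv_errorKernel_le hδ, (h.2 t ⟨h.1.1, le_rfl⟩).1]
      _ = _ := by
          rw [← ENNReal.ofReal_mul (by positivity), ← ENNReal.ofReal_mul hX,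
            ← ENNReal.ofReal_mul (by positivity),
            ← ENNReal.ofReal_add (by positivity) (by positivity)]
          ring_nf
  replace bound := bound.trans (add_le_add le_rfl error_le)
  rw [secondMoment_conv _ even, mass_F, h.1.secondMoment_eq, h.1.chi_eq, ← ENNReal.ofReal_mul hS,
    ← ENNReal.ofReal_mul hX, ← ENNReal.ofReal_add (by positivity) (by positivity)] at bound
  refine le_of_eq_of_le ?_ (ofReal_sub_le_of_ofReal_le_add (by positivity) bound)
  ring_nf

end ErrorLE

namespace ErrorLE

variable {θ : ℝ} (hδ : 0 < δ) (hδ' : δ ≤ 1 / 2)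
include hδ hδ'

lemma lowerDiniGE_chiReal (h : M.ErrorLE δ β) (h0 : 0 ≤ t) (htβ : t < β) :
    LowerDiniGE M.chiReal t ((1 - δ) * M.chiReal t ^ 2) := by
  have ht := h.mono h0 htβ.le
  have weight_one : ∀ f : (Fin d → ℤ) → ℝ≥0∞, mass (f * 1) = mass f := fun f => by rw [mul_one]
  have dini := h.1.lowerDiniGE_toReal_mass h0 htβ (w := 1) (fun _ => ENNReal.one_ne_top)
    (weight_one (M.G β) ▸ h.1.chi_ne_top)
    (mul_pos (by linarith) (pow_pos ht.1.chiReal_pos 2))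
    (weight_one (M.derivKernel t) ▸ ht.le_mass_derivKernel hδ.le)
  simp only [weight_one] at dini
  exact dini

lemma lowerDiniGE_momentReal (hc : 0 < c₀) (h : M.ErrorLE δ β) (h0 : 0 ≤ t) (htβ : t < β) :
    LowerDiniGE M.momentReal t ((2 - 3 * δ) * (M.chiReal t * M.momentReal t)) := by
  have ht := h.mono h0 htβ.le
  have mass_eq : ∀ u, mass (M.G u * M.momentWeight) = secondMoment (M.F u) := fun u => by
    rw [mass_mul_momentWeight, conv_comm, ← F_eq_conv]
  have dini := h.1.lowerDiniGE_toReal_mass h0 htβ (w := M.momentWeight)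
    (fun x => ENNReal.add_ne_top.mpr ⟨ENNReal.ofReal_ne_top, ENNReal.ofReal_ne_top⟩)
    (mass_eq β ▸ h.1.secondMoment_ne_top)
    (mul_pos (by linarith) (mul_pos ht.1.chiReal_pos (ht.1.momentReal_pos hc)))
    (ht.le_mass_derivKernel_mul_momentWeight hδ.le)
  simp only [mass_eq] at dini
  exact dini

variable (h : M.ErrorLE δ t) (h0 : 0 ≤ s)
include h h0

lemma inv_le_chiReal (hlt : (t - s) * M.chiReal s < 1) {u : ℝ} (hu : u ∈ Set.Icc s t) :
    ((M.chiReal s)⁻¹ - (1 - 2 * δ) * (u - s))⁻¹ ≤ M.chiReal u :=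
  inv_le_of_lowerDiniGE_sq (h.1.continuousOn_chiReal.mono (Set.Icc_subset_Icc_left h0))
    (fun _ hv => (h.1.mono (h0.trans hv.1) hv.2).chiReal_pos)
    (fun _ hv => h.lowerDiniGE_chiReal hδ hδ' (h0.trans hv.1) hv.2) (by linarith) (by linarith)
    hlt hu

lemma le_momentReal (hc : 0 < c₀) (hlt : (t - s) * M.chiReal s < 1) {u : ℝ}
    (hu : u ∈ Set.Icc s t) :
    M.momentReal s / M.chiReal s ^ 2 * ((M.chiReal s)⁻¹ - (1 - 2 * δ) * (u - s))⁻¹ ^ 2 ≤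
      M.momentReal u :=
  have sub (v) (hv : v ∈ Set.Icc s t) : M.Subcritical v := h.1.mono (h0.trans hv.1) hv.2
  mul_inv_sq_le_of_lowerDiniGE_mul (fun v hv => (sub v hv).chiReal_pos)
    (fun _ hv => h.inv_le_chiReal hδ hδ' h0 hlt hv)
    (h.1.continuousOn_momentReal.mono (Set.Icc_subset_Icc_left h0))
    (fun v hv => (sub v hv).momentReal_pos hc)
    (fun _ hv => h.lowerDiniGE_momentReal hδ hδ' hc (h0.trans hv.1) hv.2) (by linarith)
    (by linarith) (by linarith) hlt hu

variable (hst : s ≤ t) (hθ : 0 < θ) (heq : (t - s) * M.chiReal s = 1 - θ)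
include hst hθ heq

omit hδ' in
lemma inv_chiReal_sub_mem_Ioc :
    (M.chiReal s)⁻¹ - (1 - 2 * δ) * (t - s) ∈
      Set.Ioc 0 ((θ + 2 * δ) / M.chiReal s) := by
  have hX := (h.1.mono h0 hst).chiReal_pos
  have nonneg := mul_nonneg (sub_nonneg.mpr hst) hX.le
  have eq_div : (M.chiReal s)⁻¹ - (1 - 2 * δ) * (t - s) =
      (θ + 2 * δ * (1 - θ)) / M.chiReal s := by
    rw [eq_div_iff hX.ne', sub_mul, inv_mul_cancel₀ hX.ne', mul_assoc, heq]
    ring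
  rw [eq_div]
  constructor
  · have : 0 ≤ 2 * δ * (1 - θ) := mul_nonneg (by linarith) (heq ▸ nonneg)
    exact div_pos (by linarith) hX
  · exact div_le_div_of_nonneg_right (by nlinarith [mul_pos hδ hθ]) hX.le

lemma chiReal_le_mul : M.chiReal s ≤ (θ + 2 * δ) * M.chiReal t := by
  obtain ⟨pos, le⟩ := h.inv_chiReal_sub_mem_Ioc hδ h0 hst hθ heq
  have lower := (inv_anti₀ pos le).trans
    (h.inv_le_chiReal hδ hδ' h0 (by linarith) ⟨hst, le_rfl⟩)
  rw [inv_div, div_le_iff₀ (by positivity)] at lower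
  linarith

lemma momentReal_le_mul (hc : 0 < c₀) :
    M.momentReal s ≤ (θ + 2 * δ) ^ 2 * M.momentReal t := by
  have hX := (h.1.mono h0 hst).chiReal_pos
  have hS := M.momentReal_nonneg s
  obtain ⟨pos, le⟩ := h.inv_chiReal_sub_mem_Ioc hδ h0 hst hθ heq
  have lower := (mul_le_mul_of_nonneg_left (pow_le_pow_left₀ (by positivity) (inv_anti₀ pos le) 2)
    (by positivity)).trans (h.le_momentReal hδ hδ' h0 hc (by linarith) ⟨hst, le_rfl⟩)
  rw [inv_div, div_pow, div_mul_div_cancel₀ (by positivity), div_le_iff₀ (by positivity)] at lower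
  linarith

/-- Since `χ(t) ≤ χ(s) / θ`, the correlation length `ξ² = S / χ` still grows by a factor of order
`θ^(-1/2)`. -/
lemma xi_sq_mul_le (hc : 0 < c₀) :
    M.xi s ^ 2 * θ ≤ M.xi t ^ 2 * (θ + 2 * δ) ^ 2 := by
  have hs := h.1.mono h0 hst
  have chi_le : θ * M.chiReal t ≤ M.chiReal s := by
    have step := h.1.chiReal_le_add h0 hst
    rw [← mul_assoc, heq] at step
    linarith
  rw [hs.xi_sq, h.1.xi_sq, div_mul_eq_mul_div, div_mul_eq_mul_div,
    div_le_div_iff₀ hs.chiReal_pos h.1.chiReal_pos]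
  calc M.momentReal s * θ * M.chiReal t = M.momentReal s * (θ * M.chiReal t) := mul_assoc ..
    _ ≤ (θ + 2 * δ) ^ 2 * M.momentReal t * M.chiReal s :=
        mul_le_mul (h.momentReal_le_mul hδ hδ' h0 hst hθ heq hc) chi_le
          (mul_pos hθ h.1.chiReal_pos).le
          (mul_nonneg (sq_nonneg _) (M.momentReal_nonneg t))
    _ = _ := by ring

end ErrorLE

end Model

/-! ### Exponential moments of one coordinate -/

lemma cosh_mul_sub_sum_le {r : ℝ} (hr : |r| ≤ 1) (N : ℕ) (v : ℝ) :
    Real.cosh (r * v) - ∑ n ∈ Finset.range N, (r * v) ^ (2 * n) / (2 * n).factorial ≤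
      r ^ (2 * N) *
        (Real.cosh v - ∑ n ∈ Finset.range N, v ^ (2 * n) / (2 * n).factorial) := by
  have series := ((Real.hasSum_cosh v).mul_left (r ^ (2 * N))).sub (Real.hasSum_cosh (r * v))
  have le := sum_le_hasSum (Finset.range N) (fun n hn => ?_) series
  · rw [Finset.sum_sub_distrib, ← Finset.mul_sum] at le
    linarith
  · have hn : N ≤ n := by simpa using hn
    have pow_le : (r ^ 2) ^ n ≤ (r ^ 2) ^ N :=
      pow_le_pow_of_le_one (sq_nonneg r) ((sq_le_one_iff_abs_le_one r).mpr hr) hn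
    rw [mul_pow, mul_div_assoc, ← sub_mul, pow_mul r, pow_mul r]
    exact mul_nonneg (sub_nonneg.mpr pow_le) (div_nonneg (by rw [pow_mul]; positivity)
      (by positivity))

lemma cosh_mul_add_sq_le {r : ℝ} (hr : |r| ≤ 1) (v : ℝ) :
    Real.cosh (r * v) + r ^ 2 ≤ 1 + r ^ 2 * Real.cosh v := by
  have h := cosh_mul_sub_sum_le hr 1 v
  norm_num at h
  linarith

lemma cosh_mul_add_pow_four_le {r : ℝ} (hr : |r| ≤ 1) (v : ℝ) :
    Real.cosh (r * v) + r ^ 4 ≤ 1 + (r ^ 2 - r ^ 4) * v ^ 2 / 2 + r ^ 4 * Real.cosh v := by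
  have h := cosh_mul_sub_sum_le hr 2 v
  norm_num [Finset.sum_range_succ, mul_pow] at h
  linarith

lemma cosh_le_one_add_mul_sq {v : ℝ} (hv : |v| ≤ 1 / 10) :
    Real.cosh v ≤ 1 + 51 / 100 * v ^ 2 := by
  have sq_le : v ^ 2 ≤ (1 / 10) ^ 2 := by rw [← sq_abs v]; gcongr
  have exp_le : Real.exp (v ^ 2 / 2) - 1 - v ^ 2 / 2 ≤ (v ^ 2 / 2) ^ 2 :=
    (abs_le.mp (Real.abs_exp_sub_one_sub_id_le
      (abs_le.mpr ⟨by linarith [sq_nonneg v], by linarith⟩))).2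
  have := Real.cosh_le_exp_half_sq v
  nlinarith [sq_nonneg v]

section CoordExp

variable {d : ℕ}

/-- The exponential weight `exp (u xᵢ)` in the `i`-th coordinate. -/
def coordExp (u : ℝ) (i : Fin d) (x : Fin d → ℤ) : ℝ≥0∞ := ENNReal.ofReal (Real.exp (u * x i))

lemma coordExp_add (u : ℝ) (i : Fin d) (x y : Fin d → ℤ) :
    coordExp u i (x + y) = coordExp u i x * coordExp u i y := by
  rw [coordExp, coordExp, coordExp, ← ENNReal.ofReal_mul (Real.exp_pos _).le, ← Real.exp_add,
    Pi.add_apply, Int.cast_add, mul_add]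

lemma coordExp_zero (u : ℝ) (i : Fin d) : coordExp u i 0 = 1 := by simp [coordExp]

variable {f : (Fin d → ℤ) → ℝ≥0∞}

lemma mass_mul_coordExp (hf : ∀ x, f (-x) = f x) (u : ℝ) (i : Fin d) :
    mass (f * coordExp u i) = ∑' x, f x * ENNReal.ofReal (Real.cosh (u * x i)) := by
  have reflect : mass (f * coordExp u i) = mass (f * coordExp (-u) i) := by
    rw [mass, ← (Equiv.neg (Fin d → ℤ)).tsum_eq]
    simp [mass, hf, coordExp]
  have cosh (x : Fin d → ℤ) : coordExp u i x + coordExp (-u) i x =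
      2 * ENNReal.ofReal (Real.cosh (u * x i)) := by
    rw [coordExp, coordExp, ← ENNReal.ofReal_add (Real.exp_pos _).le (Real.exp_pos _).le,
      ← ENNReal.ofReal_ofNat 2, ← ENNReal.ofReal_mul two_pos.le, Real.cosh_eq, neg_mul,
      mul_div_cancel₀ _ two_ne_zero]
  refine (ENNReal.mul_right_inj two_ne_zero ENNReal.ofNat_ne_top).mp ?_
  rw [two_mul]
  nth_rewrite 2 [reflect]
  rw [← mass_add, ← mul_add, mass, ← ENNReal.tsum_mul_left]
  refine tsum_congr fun x => ?_
  rw [Pi.mul_apply, Pi.add_apply, cosh, mul_left_comm]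

lemma IsSymmFun.tsum_mul_apply (hf : IsSymmFun f) (φ : ℤ → ℝ≥0∞) (i j : Fin d) :
    ∑' x, f x * φ (x i) = ∑' x, f x * φ (x j) := by
  rw [← (signedPerm (Equiv.swap i j) fun _ => false).tsum_eq]
  refine tsum_congr fun x => ?_
  exact congrArg₂ (· * ·) (hf (Equiv.swap i j) (fun _ => false) x)
    (congrArg φ (by simp [signedPerm]))

lemma IsSymmFun.natCast_mul_tsum_mul_sq (hf : IsSymmFun f) (i : Fin d) :
    d * ∑' x, f x * ENNReal.ofReal ((x i : ℝ) ^ 2) = secondMoment f := by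
  have expand (x) : f x * sqWeight x = ∑ j, f x * ENNReal.ofReal ((x j : ℝ) ^ 2) := by
    rw [← Finset.mul_sum, ← ENNReal.ofReal_sum_of_nonneg fun _ _ => sq_nonneg _, sqWeight, sqNorm]
  simp only [secondMoment, mass, Pi.mul_apply, expand]
  rw [Summable.tsum_finsetSum fun _ _ => ENNReal.summable,
    Finset.sum_congr rfl fun j _ => hf.tsum_mul_apply (fun n => ENNReal.ofReal ((n : ℝ) ^ 2)) j i,
    Finset.sum_const, Finset.card_univ, Fintype.card_fin, nsmul_eq_mul]

lemma IsSymmFun.tsum_mul_sq (hf : IsSymmFun f) (i : Fin d) {v : ℝ}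
    (hv : secondMoment f = ENNReal.ofReal v) :
    ∑' x, f x * ENNReal.ofReal ((x i : ℝ) ^ 2) = ENNReal.ofReal (v / d) := by
  have hd : 0 < d := i.pos
  rw [ENNReal.ofReal_div_of_pos (Nat.cast_pos.mpr hd), ← hv, ENNReal.ofReal_natCast,
    ← hf.natCast_mul_tsum_mul_sq i, mul_comm, ENNReal.mul_div_cancel_right
    (Nat.cast_ne_zero.mpr hd.ne') (ENNReal.natCast_ne_top d)]

section Probability

variable {p : (Fin d → ℤ) → ℝ≥0∞} (hp : mass p = 1) (hsymm : IsSymmFun p) {v : ℝ}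
  (hv : secondMoment p = ENNReal.ofReal v) (i : Fin d)
include hp hsymm hv

lemma mass_mul_coordExp_le_of_abs_mul_le {u : ℝ}
    (hu : ∀ x, p x ≠ 0 → |u * x i| ≤ 1 / 10) :
    mass (p * coordExp u i) ≤ 1 + ENNReal.ofReal (51 / 100 * u ^ 2) * ENNReal.ofReal (v / d) := by
  rw [mass_mul_coordExp hsymm.neg_apply, ← hsymm.tsum_mul_sq i hv, ← hp, mass,
    ← ENNReal.tsum_mul_left, ← ENNReal.tsum_add]
  refine ENNReal.tsum_le_tsum fun x => ?_
  by_cases hx : p x = 0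
  · simp [hx]
  calc p x * ENNReal.ofReal (Real.cosh (u * x i))
      ≤ p x * ENNReal.ofReal (1 + 51 / 100 * u ^ 2 * (x i : ℝ) ^ 2) := by
        gcongr
        exact (cosh_le_one_add_mul_sq (hu x hx)).trans_eq (by ring)
    _ = p x + ENNReal.ofReal (51 / 100 * u ^ 2) * (p x * ENNReal.ofReal ((x i : ℝ) ^ 2)) := by
        rw [ENNReal.ofReal_add zero_le_one (by positivity), ENNReal.ofReal_one,
          ENNReal.ofReal_mul (by positivity), mul_add, mul_one, mul_left_comm]

lemma mass_mul_coordExp_mul_le {r a m : ℝ} (hv0 : 0 ≤ v) (hr : |r| ≤ 1) (hm0 : 0 ≤ m)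
    (hm : mass (p * coordExp a i) ≤ ENNReal.ofReal (1 + m)) :
    mass (p * coordExp (r * a) i) ≤
      ENNReal.ofReal (1 + (r ^ 2 - r ^ 4) * a ^ 2 * v / (2 * d) + r ^ 4 * m) := by
  have r_sq : r ^ 2 ≤ 1 := (sq_le_one_iff_abs_le_one r).mpr hr
  have diff_nonneg : 0 ≤ r ^ 2 - r ^ 4 := by nlinarith [sq_nonneg r]
  have pointwise (x) : p x * ENNReal.ofReal (Real.cosh (r * a * x i)) +
      ENNReal.ofReal (r ^ 4) * p x ≤
      p x + ENNReal.ofReal ((r ^ 2 - r ^ 4) * a ^ 2 / 2) * (p x * ENNReal.ofReal ((x i : ℝ) ^ 2)) +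
        ENNReal.ofReal (r ^ 4) * (p x * ENNReal.ofReal (Real.cosh (a * x i))) := by
    have cosh_le := ENNReal.ofReal_le_ofReal ((cosh_mul_add_pow_four_le hr (a * x i)).trans_eq
      (by ring : _ = 1 + (r ^ 2 - r ^ 4) * a ^ 2 / 2 * (x i : ℝ) ^ 2 +
        r ^ 4 * Real.cosh (a * x i)))
    have := Real.cosh_pos (a * x i)
    rw [ENNReal.ofReal_add (Real.cosh_pos _).le (by positivity),
      ENNReal.ofReal_add (by positivity) (by positivity),
      ENNReal.ofReal_add zero_le_one (by positivity), ENNReal.ofReal_mul (by positivity),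
      ENNReal.ofReal_mul (by positivity), ENNReal.ofReal_one, ← mul_assoc r] at cosh_le
    refine le_trans (le_of_eq ?_) ((mul_le_mul_right cosh_le (p x)).trans_eq ?_) <;> ring
  rw [mass_mul_coordExp hsymm.neg_apply] at hm ⊢
  have sum_le := ENNReal.tsum_le_tsum pointwise
  have mass_one : ∑' x, p x = 1 := hp
  rw [ENNReal.tsum_add, ENNReal.tsum_add, ENNReal.tsum_add, ENNReal.tsum_mul_left,
    ENNReal.tsum_mul_left, ENNReal.tsum_mul_left, hsymm.tsum_mul_sq i hv, mass_one, mul_one,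
    ← ENNReal.ofReal_mul (by positivity)] at sum_le
  refine (ENNReal.add_le_add_iff_right (ENNReal.ofReal_ne_top (r := r ^ 4))).mp (sum_le.trans ?_)
  calc 1 + ENNReal.ofReal ((r ^ 2 - r ^ 4) * a ^ 2 / 2 * (v / d)) + ENNReal.ofReal (r ^ 4) * _
      ≤ ENNReal.ofReal 1 + ENNReal.ofReal ((r ^ 2 - r ^ 4) * a ^ 2 / 2 * (v / d)) +
        ENNReal.ofReal (r ^ 4) * ENNReal.ofReal (1 + m) := by rw [ENNReal.ofReal_one]; gcongr
    _ = _ := by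
        rw [← ENNReal.ofReal_mul (by positivity), ← ENNReal.ofReal_add zero_le_one (by positivity),
          ← ENNReal.ofReal_add (by positivity) (by positivity),
          ← ENNReal.ofReal_add (by positivity) (by positivity)]
        congr 1
        ring

end Probability

end CoordExp

/-! ### The effective random walk -/

namespace Model

variable {d : ℕ} {c₀ : ℝ} {M : Model d c₀} {s t : ℝ}

lemma effStep_eq_smul (M : Model d c₀) (s : ℝ) : M.effStep s = (M.chi s)⁻¹ • M.F s := by
  funext x
  rw [effStep, div_eq_mul_inv, mul_comm]
  rfl

lemma isSymmFun_effStep (M : Model d c₀) (s : ℝ) : IsSymmFun (M.effStep s) := fun π e x => by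
  rw [effStep, effStep, M.isSymmFun_F s π e x]

lemma effStep_zero (M : Model d c₀) : M.effStep 0 = M.stepKernel := by
  rw [effStep_eq_smul, F_zero, ← mass_F, F_zero, mass_stepKernel, inv_one, one_smul]

lemma Mgf_eq_mass (M : Model d c₀) (t a : ℝ) (i : Fin d) :
    M.Mgf t a = mass (M.effStep t * coordExp (a / M.xi t) i) := by
  have e1_apply (y : Fin d → ℤ) : e1 y = y ⟨0, i.pos⟩ := dif_pos i.pos
  simp only [Mgf, e1_apply]
  exact (M.isSymmFun_effStep t).tsum_mul_apply
    (fun n => ENNReal.ofReal (Real.exp (a / M.xi t * n))) _ i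

namespace Subcritical

lemma chi_ne_zero (h : M.Subcritical s) : M.chi s ≠ 0 := by
  rw [h.chi_eq, ENNReal.ofReal_ne_zero_iff]
  exact h.chiReal_pos

lemma mass_effStep (h : M.Subcritical s) : mass (M.effStep s) = 1 := by
  rw [effStep_eq_smul, mass_smul, mass_F, ENNReal.inv_mul_cancel h.chi_ne_zero h.chi_ne_top]

lemma F_eq_smul_effStep (h : M.Subcritical s) : M.F s = M.chi s • M.effStep s := by
  rw [effStep_eq_smul, smul_smul, ENNReal.mul_inv_cancel h.chi_ne_zero h.chi_ne_top, one_smul]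

lemma secondMoment_effStep (h : M.Subcritical s) :
    secondMoment (M.effStep s) = ENNReal.ofReal (M.xi s ^ 2) := by
  rw [effStep_eq_smul, secondMoment_smul, h.secondMoment_eq, h.chi_eq,
    ← ENNReal.ofReal_inv_of_pos h.chiReal_pos, ← ENNReal.ofReal_mul
    (inv_nonneg.mpr h.chiReal_pos.le), h.xi_sq, inv_mul_eq_div]

variable {θ : ℝ} (h : M.Subcritical t) (h0 : 0 ≤ s) (hst : s ≤ t) (hθ : 0 < θ)
  (heq : (t - s) * M.chiReal s = 1 - θ)
include h h0 hst hθ heq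

lemma F_le_chi_mul_killedGreen (x : Fin d → ℤ) :
    M.F t x ≤ M.chi s * killedGreen (M.effStep s) θ x := by
  have hs := h.mono h0 hst
  have ratio : ENNReal.ofReal (t - s) * M.chi s = ENNReal.ofReal (1 - θ) := by
    rw [hs.chi_eq, ← ENNReal.ofReal_mul (sub_nonneg.mpr hst), heq]
  refine (h.F_le_tsum h0 hst (ratio ▸ ENNReal.ofReal_lt_one.mpr (by linarith)) x).trans_eq ?_
  rw [killedGreen, ← ENNReal.tsum_mul_left]
  refine tsum_congr fun k => ?_
  rw [hs.F_eq_smul_effStep, convPow_smul, Pi.smul_apply, smul_eq_mul, pow_succ, ← ratio]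
  ring

lemma mass_F_mul_le {W : (Fin d → ℤ) → ℝ≥0∞} (hW : ∀ x y, W (x + y) ≤ W x * W y) (h1 : W 0 ≤ 1)
    {m : ℝ} (hm0 : 0 ≤ m) (hm : mass (M.effStep s * W) ≤ ENNReal.ofReal m)
    (hlt : (1 - θ) * m < 1) :
    mass (M.F t * W) ≤ M.chi s * ENNReal.ofReal (m / (1 - (1 - θ) * m)) := by
  have coeff_nonneg : 0 ≤ 1 - θ :=
    heq ▸ mul_nonneg (sub_nonneg.mpr hst) (h.mono h0 hst).chiReal_pos.le
  have geometric := (hasSum_geometric_of_lt_one (mul_nonneg coeff_nonneg hm0) hlt).mul_left m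
  calc mass (M.F t * W)
      ≤ ∑' x, M.chi s * ∑' k, ENNReal.ofReal (1 - θ) ^ k *
          (convPow (M.effStep s) (k + 1) * W) x := by
        refine ENNReal.tsum_le_tsum fun x => ?_
        refine (mul_le_mul_left (h.F_le_chi_mul_killedGreen h0 hst hθ heq x) _).trans_eq ?_
        rw [killedGreen, mul_assoc, ← ENNReal.tsum_mul_right]
        simp only [Pi.mul_apply, mul_assoc]
    _ = M.chi s * ∑' k, ENNReal.ofReal (1 - θ) ^ k *
          mass (convPow (M.effStep s) (k + 1) * W) := by
        rw [ENNReal.tsum_mul_left, ENNReal.tsum_comm]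
        simp only [ENNReal.tsum_mul_left, mass]
    _ ≤ M.chi s * ∑' k, ENNReal.ofReal (m * ((1 - θ) * m) ^ k) := by
        gcongr with k
        have le_pow : mass (convPow (M.effStep s) (k + 1) * W) ≤ ENNReal.ofReal m ^ (k + 1) :=
          (mass_mono (convPow_mul_le hW h1 _ _)).trans
            ((mass_convPow _ _).trans_le (pow_le_pow_left' hm _))
        refine (mul_le_mul_right le_pow _).trans_eq ?_
        rw [← ENNReal.ofReal_pow coeff_nonneg, ← ENNReal.ofReal_pow hm0,
          ← ENNReal.ofReal_mul (by positivity)]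
        rw [mul_pow, pow_succ', mul_left_comm]
    _ = _ := by
        rw [← ENNReal.ofReal_tsum_of_nonneg
          (fun k => mul_nonneg hm0 (pow_nonneg (mul_nonneg coeff_nonneg hm0) k))
          geometric.summable, geometric.tsum_eq, div_eq_mul_inv]

end Subcritical

section ExponentialMoment

variable {δ s₀ θ : ℝ} (h : M.ErrorLE δ t) (hc : 0 < c₀) (hs₀ : 0 < s₀) (hsq : s₀ ^ 2 ≤ 1 / 10)
  (hδ : 0 < δ) (hδ' : δ ≤ s₀ ^ 2 / 100)
include h hs₀ hsq hδ hδ'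

lemma Mgf_le_of_mass_effStep_mul_le (h0 : 0 ≤ s) (hst : s ≤ t)
    (hθ : 1 / 4 ≤ θ) (heq : (t - s) * M.chiReal s = 1 - θ) (i : Fin d)
    (hm : mass (M.effStep s * coordExp (s₀ / M.xi t) i) ≤
      ENNReal.ofReal (1 + 45 / 100 * θ * s₀ ^ 2)) :
    M.Mgf t s₀ ≤ ENNReal.ofReal (1 + s₀ ^ 2) := by
  have hs := h.1.mono h0 hst
  have hX := h.1.chiReal_pos
  have θ_le : θ ≤ 1 := by
    linarith [mul_nonneg (sub_nonneg.mpr hst) hs.chiReal_pos.le]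
  set q := s₀ ^ 2
  have q_pos : 0 < q := by positivity
  have growth_lt : (1 - θ) * (45 / 100 * θ * q) ≤ 45 / 1000 * θ := by
    nlinarith [mul_nonneg (sub_nonneg.mpr θ_le) q_pos.le,
      mul_nonneg (by linarith : (0 : ℝ) ≤ θ) (mul_nonneg (by linarith : (0 : ℝ) ≤ θ) q_pos.le)]
  have denom_pos : 0 < 1 - (1 - θ) * (1 + 45 / 100 * θ * q) := by linarith
  have numeric : (θ + 2 * δ) * (1 + 45 / 100 * θ * q) ≤
      (1 + q) * (1 - (1 - θ) * (1 + 45 / 100 * θ * q)) := by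
    have δ_le : 2 * δ ≤ θ * (8 / 100 * q) := by nlinarith
    have slack : 0 ≤ θ * q * (1 - 8 / 100 - 45 / 100 - 45 / 100 * (1 - θ) * q -
        45 / 100 * θ * (8 / 100 * q)) := mul_nonneg (by positivity) (by nlinarith)
    calc (θ + 2 * δ) * (1 + 45 / 100 * θ * q)
        ≤ (θ + θ * (8 / 100 * q)) * (1 + 45 / 100 * θ * q) := by gcongr
      _ ≤ _ := by linarith
  rw [Mgf_eq_mass M t s₀ i, effStep_eq_smul, smul_mul_assoc, mass_smul, mul_comm,
    ← div_eq_mul_inv, ENNReal.div_le_iff h.1.chi_ne_zero h.1.chi_ne_top]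
  refine (h.1.mass_F_mul_le h0 hst (by linarith) heq (fun x y => (coordExp_add _ i x y).le)
    (coordExp_zero _ i).le (by positivity) hm (by linarith)).trans ?_
  rw [hs.chi_eq, h.1.chi_eq, ← ENNReal.ofReal_mul hs.chiReal_pos.le,
    ← ENNReal.ofReal_mul (by positivity)]
  refine ENNReal.ofReal_le_ofReal ?_
  rw [← mul_div_assoc, div_le_iff₀ denom_pos]
  calc M.chiReal s * (1 + 45 / 100 * θ * q)
      ≤ (θ + 2 * δ) * M.chiReal t * (1 + 45 / 100 * θ * q) := by
        gcongr
        exact h.chiReal_le_mul hδ (by linarith) h0 hst (by linarith) heq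
    _ ≤ (1 + q) * (1 - (1 - θ) * (1 + 45 / 100 * θ * q)) * M.chiReal t := by
        rw [mul_right_comm]
        gcongr
    _ = _ := by ring

include hc

lemma Mgf_le_of_le_three_quarters (hd : 3 ≤ d) (hs₀' : s₀ ≤ c₀ / 10) (ht : t ≤ 3 / 4) :
    M.Mgf t s₀ ≤ ENNReal.ofReal (1 + s₀ ^ 2) := by
  have hξ := h.1.xi_pos hc
  have d_ge : (3 : ℝ) ≤ d := by exact_mod_cast hd
  have heq : (t - 0) * M.chiReal 0 = 1 - (1 - t) := by rw [chiReal_zero]; ring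
  have ratio := h.xi_sq_mul_le hδ (by linarith) le_rfl h.1.1 (by linarith) heq hc
  rw [xi_zero] at ratio
  have range (x : Fin d → ℤ) (hx : M.stepKernel x ≠ 0) (i : Fin d) :
      |s₀ / M.xi t * x i| ≤ 1 / 10 := by
    have x_le : ‖x‖ ≤ M.K.R :=
      supNorm_eq_norm x ▸ M.K.range_le x (ENNReal.ofReal_ne_zero_iff.mp hx)
    rw [abs_mul, abs_of_pos (by positivity), div_mul_eq_mul_div, div_le_iff₀ hξ]
    calc s₀ * |(x i : ℝ)| ≤ c₀ / 10 * M.K.R :=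
          mul_le_mul hs₀' ((abs_apply_le_norm x i).trans x_le) (abs_nonneg _) (by positivity)
      _ = 1 / 10 * (c₀ * M.K.R) := by ring
      _ ≤ 1 / 10 * M.xi t := by gcongr; exact M.K.sigma_lower.trans h.1.sigma_le_xi
  refine Mgf_le_of_mass_effStep_mul_le h hs₀ hsq hδ hδ' le_rfl h.1.1 (by linarith) heq
    ⟨0, by omega⟩ ?_
  rw [effStep_zero]
  refine (mass_mul_coordExp_le_of_abs_mul_le (mass_stepKernel M) M.isSymmFun_stepKernel
    M.secondMoment_stepKernel _ fun x hx => range x hx _).trans ?_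
  rw [← ENNReal.ofReal_mul (by positivity), ← ENNReal.ofReal_one,
    ← ENNReal.ofReal_add zero_le_one (by positivity)]
  refine ENNReal.ofReal_le_ofReal (add_le_add_right ?_ 1)
  have ratio_le : M.sigma ^ 2 / M.xi t ^ 2 ≤ 2 * (1 - t) := by
    have : (1 - t + 2 * δ) ^ 2 ≤ 2 * (1 - t) * (1 - t) := by nlinarith
    rw [div_le_iff₀ (by positivity)]
    refine le_of_mul_le_mul_right ?_ (by linarith : 0 < 1 - t)
    nlinarith [pow_pos hξ 2]
  calc 51 / 100 * (s₀ / M.xi t) ^ 2 * (M.sigma ^ 2 / d)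
      = 51 / 100 * s₀ ^ 2 * (M.sigma ^ 2 / M.xi t ^ 2) / d := by ring
    _ ≤ 51 / 100 * s₀ ^ 2 * (2 * (1 - t)) / 3 := by
        have : 0 ≤ 1 - t := by linarith
        gcongr
    _ ≤ 45 / 100 * (1 - t) * s₀ ^ 2 := by
        nlinarith [mul_pos (by linarith : 0 < 1 - t) (pow_pos hs₀ 2)]

lemma Mgf_le_of_Mgf_le (hd : 3 ≤ d) (h0 : 0 ≤ s) (hst : s ≤ t)
    (heq : (t - s) * M.chiReal s = 3 / 4) (hle : M.Mgf s s₀ ≤ ENNReal.ofReal (1 + s₀ ^ 2)) :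
    M.Mgf t s₀ ≤ ENNReal.ofReal (1 + s₀ ^ 2) := by
  have hs := h.1.mono h0 hst
  have hξ := h.1.xi_pos hc
  have hξs := hs.xi_pos hc
  have d_ge : (3 : ℝ) ≤ d := by exact_mod_cast hd
  replace heq : (t - s) * M.chiReal s = 1 - 1 / 4 := heq.trans (by norm_num)
  set r := M.xi s / M.xi t with hr
  have r_sq : r ^ 2 ≤ 255 / 1000 := by
    have ratio := h.xi_sq_mul_le hδ (by linarith) h0 hst (by norm_num) heq hc
    have : (1 / 4 + 2 * δ) ^ 2 ≤ 255 / 1000 * (1 / 4) := by nlinarith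
    rw [hr, div_pow, div_le_iff₀ (by positivity)]
    nlinarith [pow_pos hξ 2]
  have r_le : |r| ≤ 1 := (sq_le_one_iff_abs_le_one r).mp (by linarith)
  have i : Fin d := ⟨0, by omega⟩
  refine Mgf_le_of_mass_effStep_mul_le h hs₀ hsq hδ hδ' h0 hst le_rfl heq i ?_
  rw [M.Mgf_eq_mass s s₀ i] at hle
  have rescale := mass_mul_coordExp_mul_le hs.mass_effStep (M.isSymmFun_effStep s)
    hs.secondMoment_effStep i (sq_nonneg _) r_le (sq_nonneg s₀) hle
  rw [show r * (s₀ / M.xi s) = s₀ / M.xi t by rw [hr]; field_simp] at rescale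
  refine rescale.trans (ENNReal.ofReal_le_ofReal ?_)
  have quartic_nonneg : 0 ≤ r ^ 2 - r ^ 4 := by nlinarith [sq_nonneg r]
  rw [add_assoc]
  gcongr 1 + ?_
  calc (r ^ 2 - r ^ 4) * (s₀ / M.xi s) ^ 2 * M.xi s ^ 2 / (2 * d) + r ^ 4 * s₀ ^ 2
      = (r ^ 2 - r ^ 4) * s₀ ^ 2 / (2 * d) + r ^ 4 * s₀ ^ 2 := by field_simp
    _ ≤ (r ^ 2 - r ^ 4) * s₀ ^ 2 / (2 * 3) + r ^ 4 * s₀ ^ 2 := by gcongr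
    _ = ((r ^ 2 - r ^ 4) / 6 + r ^ 4) * s₀ ^ 2 := by ring
    _ ≤ 45 / 100 * (1 / 4) * s₀ ^ 2 := by gcongr; nlinarith [sq_nonneg r]

/-- The bound is self-improving along steps in which the susceptibility grows fourfold: the
variance of `effStep s`, rescaled by `ξ(t)`, is about a quarter, so the moment generating function
at `s₀ ξ(s) / ξ(t)` is well below `1 + s₀²`. -/
theorem Mgf_le (hd : 3 ≤ d) (hs₀' : s₀ ≤ c₀ / 10) : M.Mgf t s₀ ≤ ENNReal.ofReal (1 + s₀ ^ 2) :=
  h.1.induction_of_sub_mul_chiReal_eq (κ := 3 / 4) (by norm_num)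
    (fun _ h0 hut hu => Mgf_le_of_le_three_quarters (h.mono h0 hut) hc hs₀ hsq hδ hδ' hd hs₀' hu)
    (fun _ _ h0 hvu hut heq ih =>
      Mgf_le_of_Mgf_le (h.mono (h0.trans hvu) hut) hc hs₀ hsq hδ hδ' hd h0 hvu heq ih)
    h.1.1 le_rfl

end ExponentialMoment

end Model

/-! ### Characteristic functions of symmetric distributions -/

lemma hasSum_toReal_mul {α : Type*} {p : α → ℝ≥0∞} {g : α → ℝ} (hg : ∀ x, 0 ≤ g x)
    (h : ∑' x, p x * ENNReal.ofReal (g x) ≠ ⊤) :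
    HasSum (fun x => (p x).toReal * g x) (∑' x, p x * ENNReal.ofReal (g x)).toReal := by
  have := (ENNReal.summable_toReal h).hasSum
  rw [← ENNReal.tsum_toReal_eq (ENNReal.ne_top_of_tsum_ne_top h)] at this
  simpa only [ENNReal.toReal_mul, ENNReal.toReal_ofReal (hg _)] using this

lemma hasSum_toReal_of_mass_eq_one {α : Type*} {p : α → ℝ≥0∞} (hp : mass p = 1) :
    HasSum (fun x => (p x).toReal) 1 := by
  have := hasSum_toReal_mul (p := p) (g := 1) (fun _ => zero_le_one)
  simp_all [mass]

lemma summable_toReal_mul {α : Type*} {p : α → ℝ≥0∞} (hp : mass p = 1) {g : α → ℝ}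
    (hg : ∀ x, |g x| ≤ 1) : Summable fun x => (p x).toReal * g x := by
  refine Summable.of_norm_bounded (hasSum_toReal_of_mass_eq_one hp).summable fun x => ?_
  rw [Real.norm_eq_abs, abs_mul, abs_of_nonneg ENNReal.toReal_nonneg]
  exact mul_le_of_le_one_right ENNReal.toReal_nonneg (hg x)

section CharFun

variable {V : Type*} [AddCommGroup V] {p : V → ℝ≥0∞}

/-- The characteristic function at the frequency `φ : V →+ ℝ` of a distribution `p`, in the form
`∑ₓ p(x) cos (φ x)` which it takes when `p` is even. -/
def charFun (p : V → ℝ≥0∞) (φ : V →+ ℝ) : ℝ := ∑' x, (p x).toReal * Real.cos (φ x)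

lemma hasSum_charFun (hp : mass p = 1) (φ : V →+ ℝ) :
    HasSum (fun x => (p x).toReal * Real.cos (φ x)) (charFun p φ) :=
  (summable_toReal_mul hp fun _ => Real.abs_cos_le_one _).hasSum

lemma hasSum_toReal_mul_cos_add (hp : mass p = 1) (heven : ∀ x, p (-x) = p x) (φ : V →+ ℝ)
    (b : ℝ) :
    HasSum (fun x => (p x).toReal * Real.cos (φ x + b)) (charFun p φ * Real.cos b) := by
  have sin_sum := (summable_toReal_mul hp fun x => Real.abs_sin_le_one (φ x)).hasSum
  have sin_eq_zero : ∑' x, (p x).toReal * Real.sin (φ x) = 0 := by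
    refine self_eq_neg.mp ?_
    rw [← tsum_neg, ← (Equiv.neg V).tsum_eq]
    simp [heven]
  rw [sin_eq_zero] at sin_sum
  have := ((hasSum_charFun hp φ).mul_right (Real.cos b)).sub (sin_sum.mul_right (Real.sin b))
  rw [zero_mul, sub_zero] at this
  refine this.congr_fun fun x => ?_
  rw [Real.cos_add]
  ring

/-- The characteristic function of a convolution power, stated for `1 + cos` in place of `cos`
so that all summands are nonnegative. -/
lemma tsum_convPow_mul_one_add_cos (hp : mass p = 1) (heven : ∀ x, p (-x) = p x) {φ : V →+ ℝ}
    (h0 : 0 ≤ charFun p φ) (h1 : charFun p φ ≤ 1) (n : ℕ) (b : ℝ) :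
    ∑' x, convPow p n x * ENNReal.ofReal (1 + Real.cos (φ x + b)) =
      ENNReal.ofReal (1 + charFun p φ ^ n * Real.cos b) := by
  induction n generalizing b with
  | zero =>
    refine (tsum_eq_single 0 fun x hx => ?_).trans (by simp [convPow, pointMass])
    simp [convPow, pointMass, hx]
  | succ n ih =>
    have inner (y : V) : ∑' z, p y * convPow p n z * ENNReal.ofReal (1 + Real.cos (φ (y + z) + b))
        = ENNReal.ofReal ((p y).toReal * (1 + charFun p φ ^ n * Real.cos (φ y + b))) := by
      have hy : p y ≠ ⊤ := ne_top_of_le_ne_top (hp ▸ ENNReal.one_ne_top) (le_mass p y)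
      rw [ENNReal.ofReal_mul ENNReal.toReal_nonneg, ENNReal.ofReal_toReal hy, ← ih,
        ← ENNReal.tsum_mul_left]
      refine tsum_congr fun z => ?_
      rw [mul_assoc, map_add, add_left_comm, add_comm (φ y), add_assoc]
      congr 5
      ring
    have nonneg (y : V) : 0 ≤ (p y).toReal * (1 + charFun p φ ^ n * Real.cos (φ y + b)) := by
      refine mul_nonneg ENNReal.toReal_nonneg ?_
      have := pow_nonneg h0 n
      have := pow_le_one₀ (n := n) h0 h1
      nlinarith [Real.neg_one_le_cos (φ y + b)]
    have sum : HasSum (fun y => (p y).toReal * (1 + charFun p φ ^ n * Real.cos (φ y + b)))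
        (1 + charFun p φ ^ (n + 1) * Real.cos b) := by
      have := (hasSum_toReal_of_mass_eq_one hp).add
        ((hasSum_toReal_mul_cos_add hp heven φ b).mul_left (charFun p φ ^ n))
      rw [← mul_assoc, ← pow_succ] at this
      exact this.congr_fun fun y => by ring
    refine (mass_conv_mul p (convPow p n) fun x => ENNReal.ofReal (1 + Real.cos (φ x + b))).trans ?_
    simp only [inner]
    rw [← ENNReal.ofReal_tsum_of_nonneg nonneg sum.summable, sum.tsum_eq]

end CharFun

section Moments

variable {d : ℕ} {p : (Fin d → ℤ) → ℝ≥0∞}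

lemma pow_four_div_le_cosh (v : ℝ) : v ^ 4 / 24 ≤ Real.cosh v := by
  have h := sum_le_hasSum (Finset.range 3) (fun n _ => ?_) (Real.hasSum_cosh v)
  · norm_num [Finset.sum_range_succ, Nat.factorial] at h
    nlinarith [sq_nonneg v]
  · exact div_nonneg (by rw [pow_mul]; positivity) (by positivity)

lemma tsum_mul_pow_four_le (heven : ∀ x, p (-x) = p x) {u B : ℝ} (hu : 0 < u) {i : Fin d}
    (hB : mass (p * coordExp u i) ≤ ENNReal.ofReal B) :
    ∑' x, p x * ENNReal.ofReal ((x i : ℝ) ^ 4) ≤ ENNReal.ofReal (24 / u ^ 4 * B) := by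
  rw [mass_mul_coordExp heven] at hB
  have pointwise (x : Fin d → ℤ) : p x * ENNReal.ofReal ((x i : ℝ) ^ 4) ≤
      ENNReal.ofReal (24 / u ^ 4) * (p x * ENNReal.ofReal (Real.cosh (u * x i))) := by
    rw [mul_left_comm, ← ENNReal.ofReal_mul (by positivity)]
    gcongr
    calc (x i : ℝ) ^ 4 = 24 / u ^ 4 * ((u * x i) ^ 4 / 24) := by field_simp
      _ ≤ _ := by
        gcongr
        exact pow_four_div_le_cosh _
  refine (ENNReal.tsum_le_tsum pointwise).trans ?_
  rw [ENNReal.tsum_mul_left, ENNReal.ofReal_mul (by positivity)]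
  gcongr

/-- The additive map `x ↦ k · x`. -/
def phase (k : Fin d → ℝ) : (Fin d → ℤ) →+ ℝ where
  toFun x := ∑ i, k i * x i
  map_zero' := by simp
  map_add' x y := by simp [mul_add, Finset.sum_add_distrib]

lemma phase_apply (k : Fin d → ℝ) (x : Fin d → ℤ) : phase k x = ∑ i, k i * x i := rfl

lemma phase_pow_four_le (k : Fin d → ℝ) (x : Fin d → ℤ) :
    phase k x ^ 4 ≤ d ^ 3 * ∑ i, k i ^ 4 * (x i : ℝ) ^ 4 := by
  calc phase k x ^ 4 ≤ (∑ i, |k i * x i|) ^ 4 := by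
        rw [← (by decide : Even 4).pow_abs]
        gcongr
        exact Finset.abs_sum_le_sum_abs (fun i => k i * (x i : ℝ)) Finset.univ
    _ ≤ (Finset.univ : Finset (Fin d)).card ^ 3 * ∑ i, |k i * x i| ^ 4 :=
        pow_sum_le_card_mul_sum_pow (fun _ _ => abs_nonneg _) 3
    _ = d ^ 3 * ∑ i, k i ^ 4 * (x i : ℝ) ^ 4 := by
        simp only [Finset.card_univ, Fintype.card_fin, (by decide : Even 4).pow_abs, mul_pow]

lemma hasSum_toReal_mul_sq (hsymm : IsSymmFun p) {v : ℝ} (hv0 : 0 ≤ v)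
    (hv : secondMoment p = ENNReal.ofReal v) (i : Fin d) :
    HasSum (fun x => (p x).toReal * (x i : ℝ) ^ 2) (v / d) := by
  have eq := hsymm.tsum_mul_sq i hv
  have := hasSum_toReal_mul (p := p) (fun x => sq_nonneg (x i : ℝ))
    (eq ▸ ENNReal.ofReal_ne_top)
  rwa [eq, ENNReal.toReal_ofReal (by positivity)] at this

lemma hasSum_toReal_mul_mul (hsymm : IsSymmFun p) {v : ℝ} (hv0 : 0 ≤ v)
    (hv : secondMoment p = ENNReal.ofReal v) {i j : Fin d} (hij : i ≠ j) :
    HasSum (fun x => (p x).toReal * ((x i : ℝ) * x j)) 0 := by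
  have summable : Summable fun x => (p x).toReal * ((x i : ℝ) * x j) := by
    refine Summable.of_norm_bounded ((hasSum_toReal_mul_sq hsymm hv0 hv i).summable.add
      (hasSum_toReal_mul_sq hsymm hv0 hv j).summable) fun x => ?_
    rw [Real.norm_eq_abs, abs_mul, abs_of_nonneg ENNReal.toReal_nonneg, ← mul_add]
    gcongr
    rw [abs_le]
    constructor <;> nlinarith [sq_nonneg ((x i : ℝ) + x j), sq_nonneg ((x i : ℝ) - x j)]
  have eq_zero : ∑' x, (p x).toReal * ((x i : ℝ) * x j) = 0 := by
    refine self_eq_neg.mp ?_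
    rw [← tsum_neg, ← (signedPerm 1 fun k => decide (k = i)).tsum_eq]
    refine tsum_congr fun x => ?_
    have flip : p ((signedPerm 1 fun k => decide (k = i)).toEquiv x) = p x := hsymm _ _ x
    rw [flip]
    simp [signedPerm, hij.symm]
  exact eq_zero ▸ summable.hasSum

lemma hasSum_toReal_mul_phase_sq (hsymm : IsSymmFun p) {v : ℝ} (hv0 : 0 ≤ v)
    (hv : secondMoment p = ENNReal.ofReal v) (k : Fin d → ℝ) :
    HasSum (fun x => (p x).toReal * phase k x ^ 2) ((∑ i, k i ^ 2) * (v / d)) := by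
  have expand : HasSum (fun x => ∑ i, ∑ j, k i * k j * ((p x).toReal * ((x i : ℝ) * x j)))
      (∑ i, ∑ j, k i * k j * if i = j then v / d else 0) := by
    refine hasSum_sum fun i _ => hasSum_sum fun j _ => HasSum.mul_left _ ?_
    split_ifs with hij
    · subst hij
      simpa only [sq] using hasSum_toReal_mul_sq hsymm hv0 hv i
    · exact hasSum_toReal_mul_mul hsymm hv0 hv hij
  convert expand using 1
  · funext x
    rw [phase_apply, sq, Finset.sum_mul_sum, Finset.mul_sum]
    refine Finset.sum_congr rfl fun i _ => ?_
    rw [Finset.mul_sum]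
    exact Finset.sum_congr rfl fun j _ => by ring
  · simp [Finset.sum_mul, sq]

lemma cos_le_one_sub_add_pow_four (x : ℝ) : Real.cos x ≤ 1 - x ^ 2 / 2 + x ^ 4 / 2 := by
  rcases le_or_gt |x| 1 with hx | hx
  · have bound := (abs_le.mp (Real.cos_bound hx)).2
    rw [(by decide : Even 4).pow_abs] at bound
    nlinarith [(by positivity : 0 ≤ x ^ 4)]
  · have : 1 ≤ x ^ 2 := by rw [one_le_sq_iff_one_le_abs]; exact hx.le
    nlinarith [Real.cos_le_one x]

lemma charFun_phase_nonneg (hp : mass p = 1) (hsymm : IsSymmFun p) {v : ℝ} (hv0 : 0 ≤ v)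
    (hv : secondMoment p = ENNReal.ofReal v) {k : Fin d → ℝ} (hk : ∀ i, k i ^ 2 * v ≤ 1) :
    0 ≤ charFun p (phase k) := by
  have second_moment_le : (∑ i, k i ^ 2) * (v / d) ≤ 1 := by
    rw [← mul_div_assoc, Finset.sum_mul]
    refine div_le_one_of_le₀ ?_ d.cast_nonneg
    simpa using Finset.sum_le_sum fun i (_ : i ∈ Finset.univ) => hk i
  have le_charFun := hasSum_le (fun x => ?_) ((hasSum_toReal_of_mass_eq_one hp).sub
    ((hasSum_toReal_mul_phase_sq hsymm hv0 hv k).mul_right (1 / 2))) (hasSum_charFun hp (phase k))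
  · linarith
  · have := mul_le_mul_of_nonneg_left (Real.one_sub_sq_div_two_le_cos (x := phase k x))
      (ENNReal.toReal_nonneg (a := p x))
    linarith

lemma charFun_phase_le_exp (hp : mass p = 1) (hsymm : IsSymmFun p) {v : ℝ} (hv0 : 0 ≤ v)
    (hv : secondMoment p = ENNReal.ofReal v) {m : ℝ} (hm : 0 ≤ m)
    (hfour : ∀ i, ∑' x, p x * ENNReal.ofReal ((x i : ℝ) ^ 4) ≤ ENNReal.ofReal (m * v ^ 2))
    {k : Fin d → ℝ} (hk : ∀ i, k i ^ 2 * v * (2 * d ^ 4 * m) ≤ 1) :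
    charFun p (phase k) ≤ Real.exp (-((∑ i, k i ^ 2) * v / (4 * d))) := by
  set A : Fin d → ℝ := fun i => (∑' x, p x * ENNReal.ofReal ((x i : ℝ) ^ 4)).toReal
  have A_le (i) : A i ≤ m * v ^ 2 := ENNReal.toReal_le_of_le_ofReal (by positivity) (hfour i)
  have sum_four : HasSum (fun x => (p x).toReal * ∑ i, k i ^ 4 * (x i : ℝ) ^ 4)
      (∑ i, k i ^ 4 * A i) := by
    refine (hasSum_sum fun i _ => (hasSum_toReal_mul (p := p) (fun x => by positivity)
      (ne_top_of_le_ne_top ENNReal.ofReal_ne_top (hfour i))).mul_left (k i ^ 4)).congr_fun ?_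
    exact fun x => by simp only [Finset.mul_sum, mul_left_comm]
  have charFun_le := hasSum_le (fun x => ?_) (hasSum_charFun hp (phase k))
    (((hasSum_toReal_of_mass_eq_one hp).sub
      ((hasSum_toReal_mul_phase_sq hsymm hv0 hv k).mul_right (1 / 2))).add
      (sum_four.mul_left ((d : ℝ) ^ 3 / 2)))
  · have four_le : (d : ℝ) ^ 3 / 2 * ∑ i, k i ^ 4 * A i ≤ (∑ i, k i ^ 2) * v / (4 * d) := by
      rw [Finset.mul_sum, Finset.sum_mul, Finset.sum_div]
      refine Finset.sum_le_sum fun i _ => ?_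
      have : (0 : ℝ) < d := Nat.cast_pos.mpr i.pos
      calc (d : ℝ) ^ 3 / 2 * (k i ^ 4 * A i) ≤ (d : ℝ) ^ 3 / 2 * (k i ^ 4 * (m * v ^ 2)) := by
            gcongr
            exact A_le i
        _ = k i ^ 2 * v / (4 * d) * (k i ^ 2 * v * (2 * d ^ 4 * m)) := by
            field_simp
            ring
        _ ≤ k i ^ 2 * v / (4 * d) * 1 := by
            gcongr
            exact hk i
        _ = k i ^ 2 * v / (4 * d) := mul_one _
    have halve : (∑ i, k i ^ 2) * (v / d) * (1 / 2) = 2 * ((∑ i, k i ^ 2) * v / (4 * d)) := by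
      ring
    linarith [Real.add_one_le_exp (-((∑ i, k i ^ 2) * v / (4 * d)))]
  · have cos_le := (cos_le_one_sub_add_pow_four (phase k x)).trans
      (add_le_add_right (div_le_div_of_nonneg_right (phase_pow_four_le k x) zero_le_two) _)
    have := mul_le_mul_of_nonneg_left cos_le (ENNReal.toReal_nonneg (a := p x))
    linarith

end Moments

/-! ### Concentration of random walks with sub-Gaussian steps -/

section SmallBall

variable {V ι : Type*} [AddCommGroup V] [Fintype ι] {p : V → ℝ≥0∞}

lemma sum_sum_one_add_cos_sub (θ : ι → ℝ) :
    ∑ i, ∑ j, (1 + Real.cos (θ i - θ j)) =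
      (Fintype.card ι : ℝ) ^ 2 + ((∑ i, Real.cos (θ i)) ^ 2 + (∑ i, Real.sin (θ i)) ^ 2) := by
  simp only [Finset.sum_add_distrib, Real.cos_sub, sq, Finset.sum_mul_sum, Finset.sum_const,
    Finset.card_univ, nsmul_eq_mul, mul_one]

lemma add_sq_card_div_four_le_sum_sum (θ : ι → ℝ) (hθ : ∀ i, |θ i| ≤ 1) :
    (Fintype.card ι : ℝ) ^ 2 + (Fintype.card ι : ℝ) ^ 2 / 4 ≤
      ∑ i, ∑ j, (1 + Real.cos (θ i - θ j)) := by
  have half_le_cos : ∀ i, 1 / 2 ≤ Real.cos (θ i) := fun i => by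
    linarith [Real.one_sub_sq_div_two_le_cos (x := θ i), (sq_le_one_iff_abs_le_one _).mpr (hθ i)]
  have : Fintype.card ι / 2 ≤ ∑ i, Real.cos (θ i) := by
    simpa [div_eq_mul_inv] using Finset.sum_le_sum fun i (_ : i ∈ Finset.univ) => half_le_cos i
  rw [sum_sum_one_add_cos_sub]
  nlinarith [sq_nonneg (∑ i, Real.sin (θ i)), Nat.cast_nonneg (α := ℝ) (Fintype.card ι)]

/-- Esseen's device: if all frequencies `θ i` oscillate little on `S`, then the average over pairs
of `1 + cos ((θ i - θ j) (w - z))` is at least `1`, and at least `5 / 4` for `w ∈ S`. -/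
lemma sq_card_mul_mass_indicator_convPow_le (hp : mass p = 1) (heven : ∀ x, p (-x) = p x)
    {θ : ι → V →+ ℝ} (h0 : ∀ i j, 0 ≤ charFun p (θ i - θ j))
    (h1 : ∀ i j, charFun p (θ i - θ j) ≤ 1) {S : Set V} {z : V}
    (hS : ∀ w ∈ S, ∀ i, |θ i (w - z)| ≤ 1) (N : ℕ) :
    ENNReal.ofReal ((Fintype.card ι : ℝ) ^ 2 / 4) * mass (S.indicator (convPow p N)) ≤
      ∑ i, ∑ j, ENNReal.ofReal (charFun p (θ i - θ j) ^ N) := by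
  set q := convPow p N
  set A : ℝ := (Fintype.card ι : ℝ) ^ 2 with hA
  have q_mass : ∑' x, q x = 1 := (mass_convPow p N).trans (by rw [hp, one_pow])
  have pointwise : ∀ w, q w * ENNReal.ofReal A + ENNReal.ofReal (A / 4) * S.indicator q w ≤
      ∑ i, ∑ j, q w * ENNReal.ofReal (1 + Real.cos ((θ i - θ j) w + -(θ i - θ j) z)) := by
    intro w
    have nonneg x : 0 ≤ 1 + Real.cos x := by linarith [Real.neg_one_le_cos x]
    have phase_sub i j : (θ i - θ j) w + -(θ i - θ j) z = θ i (w - z) - θ j (w - z) := by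
      simp only [AddMonoidHom.sub_apply, map_sub]
      ring
    simp only [phase_sub, ← Finset.mul_sum, ← ENNReal.ofReal_sum_of_nonneg fun _ _ => nonneg _]
    rw [← ENNReal.ofReal_sum_of_nonneg fun _ _ => Finset.sum_nonneg fun _ _ => nonneg _]
    by_cases hw : w ∈ S
    · rw [Set.indicator_of_mem hw, mul_comm _ (q w), ← mul_add,
        ← ENNReal.ofReal_add (by positivity) (by positivity)]
      gcongr
      exact add_sq_card_div_four_le_sum_sum _ (hS w hw)
    · rw [Set.indicator_of_notMem hw, mul_zero, add_zero, sum_sum_one_add_cos_sub]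
      gcongr
      exact le_add_of_nonneg_right (by positivity)
  have summed := ENNReal.tsum_le_tsum pointwise
  simp only [Summable.tsum_finsetSum (fun _ _ => ENNReal.summable), ENNReal.tsum_add,
    ENNReal.tsum_mul_left, ENNReal.tsum_mul_right, q_mass, one_mul, q,
    tsum_convPow_mul_one_add_cos hp heven (h0 _ _) (h1 _ _)] at summed
  refine (ENNReal.add_le_add_iff_left (ENNReal.ofReal_ne_top (r := A))).mp (summed.trans ?_)
  have : ENNReal.ofReal A = ∑ _i : ι, ∑ _j : ι, 1 := by
    simp [hA, sq, ENNReal.ofReal_mul]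
  rw [this]
  simp only [← Finset.sum_add_distrib]
  gcongr with i _ j _
  rw [← ENNReal.ofReal_one, ← ENNReal.ofReal_add zero_le_one (pow_nonneg (h0 i j) N)]
  gcongr
  exact mul_le_of_le_one_right (pow_nonneg (h0 i j) N) (Real.cos_le_one _)

lemma sum_sum_sub_le_card_mul_mass {g : V → ℝ≥0∞} {c : ι → V} (hc : Function.Injective c) :
    ∑ i, ∑ j, g (c i - c j) ≤ Fintype.card ι * mass g := by
  rw [← nsmul_eq_mul, ← Finset.card_univ]
  refine Finset.sum_le_card_nsmul _ _ _ fun i _ => ?_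
  rw [← tsum_fintype (L := .unconditional _)]
  exact ENNReal.tsum_comp_le_tsum_of_injective (sub_right_injective.comp hc) g

end SmallBall

section StepLaw

variable {d : ℕ} {p : (Fin d → ℤ) → ℝ≥0∞} {ℓ s : ℝ}

/-- A symmetric step distribution on `ℤ^d` of standard deviation `ℓ` whose moment generating
function at the rate `s / ℓ` is at most `1 + s ^ 2`. The estimates on such walks are uniform in the
length scale `ℓ`. -/
structure IsStepLaw (p : (Fin d → ℤ) → ℝ≥0∞) (ℓ s : ℝ) : Prop where
  scale_pos : 0 < ℓ
  rate_pos : 0 < s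
  rate_le_one : s ≤ 1
  mass_eq_one : mass p = 1
  symm : IsSymmFun p
  secondMoment_eq : secondMoment p = ENNReal.ofReal (ℓ ^ 2)
  mass_mul_coordExp_le : ∀ i, mass (p * coordExp (s / ℓ) i) ≤ ENNReal.ofReal (1 + s ^ 2)

/-- Steps longer than `stepRange d s` standard deviations are treated as exceptional. -/
def stepRange (d : ℕ) (s : ℝ) : ℝ := 14 * d / s ^ 2

/-- A lower bound for the probability of a step in `moderateSteps d s ℓ`. -/
def moderateProb (d : ℕ) (s : ℝ) : ℝ := 1 / (2 * d * stepRange d s ^ 2)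

/-- The steps whose length is comparable to `ℓ`. -/
def moderateSteps (d : ℕ) (s ℓ : ℝ) : Set (Fin d → ℤ) :=
  {x | ℓ / (2 * d) ≤ ‖x‖ ∧ ‖x‖ ≤ stepRange d s * ℓ}

lemma moderateProb_pos (hd : 0 < d) (hs : 0 < s) : 0 < moderateProb d s := by
  unfold moderateProb stepRange
  positivity

lemma sq_sqNorm_le (x : Fin d → ℤ) : sqNorm x ^ 2 ≤ d * ∑ i, (x i : ℝ) ^ 4 := by
  have := sq_sum_le_card_mul_sum_sq (s := Finset.univ) (f := fun i => (x i : ℝ) ^ 2)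
  simpa only [sqNorm, Finset.card_univ, Fintype.card_fin, ← pow_mul] using this

/-- Short steps contribute little to the second moment, and so do long ones by Chebyshev's
inequality for the fourth moment. -/
lemma sqNorm_le_add_indicator_add (hd : 0 < d) (hℓ : 0 < ℓ) (hs : 0 < s) (x : Fin d → ℤ) :
    sqNorm x ≤ ℓ ^ 2 / 4 +
      (moderateSteps d s ℓ).indicator (fun _ => d * (stepRange d s * ℓ) ^ 2) x +
      d / (stepRange d s * ℓ) ^ 2 * ∑ i, (x i : ℝ) ^ 4 := by
  have range_pos : 0 < stepRange d s * ℓ := by unfold stepRange; positivity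
  have hd' : (1 : ℝ) ≤ d := by exact_mod_cast hd
  have fourth_nonneg : 0 ≤ d / (stepRange d s * ℓ) ^ 2 * ∑ i, (x i : ℝ) ^ 4 := by positivity
  by_cases hshort : ‖x‖ < ℓ / (2 * d)
  · have : sqNorm x ≤ ℓ ^ 2 / 4 := calc
      sqNorm x ≤ d * (ℓ / (2 * d)) ^ 2 := (sqNorm_le x).trans (by gcongr)
      _ = ℓ ^ 2 / 4 / d := by field_simp; ring
      _ ≤ ℓ ^ 2 / 4 := div_le_self (by positivity) hd'
    have : 0 ≤ (moderateSteps d s ℓ).indicator (fun _ => d * (stepRange d s * ℓ) ^ 2) x :=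
      Set.indicator_nonneg (fun _ _ => by positivity) x
    linarith
  by_cases hlong : stepRange d s * ℓ < ‖x‖
  · have : sqNorm x ≤ d / (stepRange d s * ℓ) ^ 2 * ∑ i, (x i : ℝ) ^ 4 := by
      rw [div_mul_eq_mul_div, le_div_iff₀ (by positivity)]
      refine le_trans ?_ (sq_sqNorm_le x)
      rw [sq (sqNorm x)]
      refine mul_le_mul_of_nonneg_left ?_ (sqNorm_nonneg x)
      exact (by gcongr : (stepRange d s * ℓ) ^ 2 ≤ ‖x‖ ^ 2).trans (sq_norm_le_sqNorm hd x)
    rw [Set.indicator_of_notMem (fun hx => hlong.not_ge hx.2)]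
    nlinarith
  · have moderate : x ∈ moderateSteps d s ℓ := ⟨not_lt.mp hshort, not_lt.mp hlong⟩
    rw [Set.indicator_of_mem moderate]
    have : sqNorm x ≤ d * (stepRange d s * ℓ) ^ 2 :=
      (sqNorm_le x).trans (by gcongr; exact not_lt.mp hlong)
    nlinarith

namespace IsStepLaw

lemma dim_pos (h : IsStepLaw p ℓ s) : 0 < d := by
  refine Nat.pos_of_ne_zero fun hd => ?_
  subst hd
  have := h.secondMoment_eq
  simp [secondMoment, sqWeight, sqNorm, mass, h.scale_pos.ne'] at this

lemma fourteen_le_stepRange (h : IsStepLaw p ℓ s) : 14 ≤ stepRange d s := by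
  have hd : (1 : ℝ) ≤ d := by exact_mod_cast h.dim_pos
  have := h.rate_pos
  rw [stepRange, le_div_iff₀ (by positivity)]
  nlinarith [h.rate_le_one]

lemma sq_stepRange_ge (h : IsStepLaw p ℓ s) : 192 * d ^ 2 / s ^ 4 ≤ stepRange d s ^ 2 := by
  have := h.rate_pos
  rw [stepRange, div_pow, ← pow_mul]
  gcongr
  nlinarith [sq_nonneg (d : ℝ)]

lemma tsum_mul_pow_four_le (h : IsStepLaw p ℓ s) (i : Fin d) :
    ∑' x, p x * ENNReal.ofReal ((x i : ℝ) ^ 4) ≤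
      ENNReal.ofReal (48 / s ^ 4 * (ℓ ^ 2) ^ 2) := by
  have := h.rate_pos
  have := h.scale_pos
  refine (Blackbox.tsum_mul_pow_four_le h.symm.neg_apply (by positivity)
    (h.mass_mul_coordExp_le i)).trans (ENNReal.ofReal_le_ofReal ?_)
  calc 24 / (s / ℓ) ^ 4 * (1 + s ^ 2) ≤ 24 / (s / ℓ) ^ 4 * 2 := by
        gcongr
        nlinarith [h.rate_le_one]
    _ = 48 / s ^ 4 * (ℓ ^ 2) ^ 2 := by field_simp; ring

lemma mul_pow_four_bound_le (h : IsStepLaw p ℓ s) :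
    d / (stepRange d s * ℓ) ^ 2 * (d * (48 / s ^ 4 * (ℓ ^ 2) ^ 2)) ≤ ℓ ^ 2 / 4 := by
  have := h.scale_pos
  have : 0 < stepRange d s := by linarith [h.fourteen_le_stepRange]
  calc _ = 192 * d ^ 2 / s ^ 4 / stepRange d s ^ 2 * (ℓ ^ 2 / 4) := by
        field_simp
        ring
    _ ≤ ℓ ^ 2 / 4 := mul_le_of_le_one_left (by positivity)
        (div_le_one_of_le₀ h.sq_stepRange_ge (by positivity))

lemma div_mul_sum_tsum_mul_pow_four_le (h : IsStepLaw p ℓ s) :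
    d / (stepRange d s * ℓ) ^ 2 *
        ∑ i, (∑' x, p x * ENNReal.ofReal ((x i : ℝ) ^ 4)).toReal ≤ ℓ ^ 2 / 4 :=
  calc _ ≤ d / (stepRange d s * ℓ) ^ 2 * ∑ _i : Fin d, 48 / s ^ 4 * (ℓ ^ 2) ^ 2 := by
        gcongr with i
        exact ENNReal.toReal_le_of_le_ofReal (by positivity) (h.tsum_mul_pow_four_le i)
    _ ≤ ℓ ^ 2 / 4 := by
        simpa only [Finset.sum_const, Finset.card_univ, Fintype.card_fin, nsmul_eq_mul]
          using h.mul_pow_four_bound_le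

lemma moderateProb_le_mass (h : IsStepLaw p ℓ s) :
    ENNReal.ofReal (moderateProb d s) ≤ mass ((moderateSteps d s ℓ).indicator p) := by
  have hd := h.dim_pos
  have hℓ := h.scale_pos
  have hs := h.rate_pos
  have hτ : 0 < stepRange d s := by linarith [h.fourteen_le_stepRange]
  set D : ℝ := d * (stepRange d s * ℓ) ^ 2 with hD
  set c : ℝ := d / (stepRange d s * ℓ) ^ 2
  set q := (moderateSteps d s ℓ).indicator p with hq
  have q_ne_top : mass q ≠ ⊤ := ne_top_of_le_ne_top (h.mass_eq_one.trans_ne ENNReal.one_ne_top)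
    (mass_mono (Set.indicator_le_self _ _))
  have second_sum := hasSum_toReal_mul sqNorm_nonneg (p := p)
    (h.secondMoment_eq.trans_ne ENNReal.ofReal_ne_top)
  have second_eq : (∑' x, p x * ENNReal.ofReal (sqNorm x)).toReal = ℓ ^ 2 :=
    (congrArg ENNReal.toReal h.secondMoment_eq).trans (ENNReal.toReal_ofReal (by positivity))
  have q_sum : HasSum (fun x => (q x).toReal) (mass q).toReal := by
    rw [mass, ENNReal.tsum_toReal_eq (ENNReal.ne_top_of_tsum_ne_top q_ne_top)]
    exact (ENNReal.summable_toReal q_ne_top).hasSum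
  have fourth_sum := hasSum_sum (s := Finset.univ) fun i _ =>
    hasSum_toReal_mul (p := p) (fun x => by positivity : ∀ x : Fin d → ℤ, 0 ≤ (x i : ℝ) ^ 4)
      (ne_top_of_le_ne_top ENNReal.ofReal_ne_top (h.tsum_mul_pow_four_le i))
  have key := hasSum_le (fun x => ?_) second_sum <|
    (((hasSum_toReal_of_mass_eq_one h.mass_eq_one).mul_right (ℓ ^ 2 / 4)).add
      (q_sum.mul_left D)).add (fourth_sum.mul_left c)
  · have fourth_total := h.div_mul_sum_tsum_mul_pow_four_le
    rw [second_eq] at key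
    refine ENNReal.ofReal_le_of_le_toReal ?_
    rw [moderateProb, div_le_iff₀ (by positivity)]
    refine le_of_mul_le_mul_right ?_ (by positivity : 0 < ℓ ^ 2 / 2)
    linarith [(by rw [hD]; ring : (mass q).toReal * (2 * d * stepRange d s ^ 2) * (ℓ ^ 2 / 2) =
      D * (mass q).toReal)]
  · have := mul_le_mul_of_nonneg_left (sqNorm_le_add_indicator_add hd hℓ hs x)
      (ENNReal.toReal_nonneg (a := p x))
    refine this.trans_eq ?_
    by_cases hx : x ∈ moderateSteps d s ℓ
    · simp only [hq, Set.indicator_of_mem hx, ← Finset.mul_sum]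
      ring
    · simp only [hq, Set.indicator_of_notMem hx, ← Finset.mul_sum, ENNReal.toReal_zero]
      ring

lemma mass_compl_le (h : IsStepLaw p ℓ s) :
    mass ((moderateSteps d s ℓ)ᶜ.indicator p) ≤ ENNReal.ofReal (1 - moderateProb d s) := by
  have total : mass ((moderateSteps d s ℓ).indicator p) +
      mass ((moderateSteps d s ℓ)ᶜ.indicator p) = 1 := by
    rw [← mass_add, Set.indicator_self_add_compl, h.mass_eq_one]
  rw [ENNReal.ofReal_sub _ (moderateProb_pos h.dim_pos h.rate_pos).le, ENNReal.ofReal_one, ← total]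
  refine ENNReal.le_sub_of_add_le_left ENNReal.ofReal_ne_top ?_
  gcongr
  exact h.moderateProb_le_mass

/-- The rate in the Gaussian bound on the characteristic function of a step law, at frequencies
measured in multiples of `1 / (stepRange d s * ℓ)`. -/
def frequencyRate (d : ℕ) (s : ℝ) : ℝ := 1 / (4 * d ^ 3 * stepRange d s ^ 2)

lemma charFun_phase_pow_le (h : IsStepLaw p ℓ s) {m N : ℕ} (hm : 0 < m) (hmN : m ^ 2 ≤ N)
    {n : Fin d → ℤ} (hn : ∀ i, |n i| ≤ m) :
    0 ≤ charFun p (phase fun i => n i / (d * m * (stepRange d s * ℓ))) ∧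
      charFun p (phase fun i => n i / (d * m * (stepRange d s * ℓ))) ≤ 1 ∧
      ENNReal.ofReal (charFun p (phase fun i => n i / (d * m * (stepRange d s * ℓ))) ^ N) ≤
        ∏ i, ENNReal.ofReal (Real.exp (-frequencyRate d s * |(n i : ℝ)|)) := by
  have hd : (1 : ℝ) ≤ d := by exact_mod_cast h.dim_pos
  have hℓ := h.scale_pos
  have hτ := h.fourteen_le_stepRange
  set k : Fin d → ℝ := fun i => n i / (d * m * (stepRange d s * ℓ)) with hk
  have sq_k i : k i ^ 2 * ℓ ^ 2 = (|(n i : ℝ)| / m) ^ 2 * (1 / (d * stepRange d s) ^ 2) := by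
    rw [hk, div_pow _ (m : ℝ), sq_abs]
    field_simp
  have sq_k_le i : k i ^ 2 * ℓ ^ 2 ≤ 1 / (d * stepRange d s) ^ 2 := by
    rw [sq_k]
    refine mul_le_of_le_one_left (by positivity) (pow_le_one₀ (by positivity) ?_)
    exact div_le_one_of_le₀ (by exact_mod_cast hn i) (by positivity)
  have nonneg : 0 ≤ charFun p (phase k) := by
    refine charFun_phase_nonneg h.mass_eq_one h.symm (sq_nonneg ℓ) h.secondMoment_eq fun i =>
      (sq_k_le i).trans (div_le_one_of_le₀ (one_le_pow₀ ?_) (by positivity))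
    nlinarith
  have le_exp : charFun p (phase k) ≤ Real.exp (-((∑ i, k i ^ 2) * ℓ ^ 2 / (4 * d))) := by
    refine charFun_phase_le_exp h.mass_eq_one h.symm (sq_nonneg ℓ) h.secondMoment_eq
      (m := 48 / s ^ 4) (by positivity) h.tsum_mul_pow_four_le fun i => ?_
    calc _ ≤ 1 / (d * stepRange d s) ^ 2 * (2 * d ^ 4 * (48 / s ^ 4)) := by
          gcongr
          exact sq_k_le i
      _ = 192 * d ^ 2 / s ^ 4 / stepRange d s ^ 2 / 2 := by field_simp; ring
      _ ≤ 1 := by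
          have := div_le_one_of_le₀ h.sq_stepRange_ge (by positivity)
          linarith
  refine ⟨nonneg, le_exp.trans (Real.exp_le_one_iff.mpr (neg_nonpos.mpr (by positivity))), ?_⟩
  rw [← ENNReal.ofReal_prod_of_nonneg fun _ _ => by positivity, ← Real.exp_sum]
  refine ENNReal.ofReal_le_ofReal ((pow_le_pow_left₀ nonneg le_exp N).trans ?_)
  rw [← Real.exp_nat_mul, Real.exp_le_exp, mul_neg, ← Finset.mul_sum, neg_mul, neg_le_neg_iff,
    Finset.sum_mul, Finset.sum_div, Finset.mul_sum, Finset.mul_sum]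
  refine Finset.sum_le_sum fun i _ => ?_
  have abs_le_sq : |(n i : ℝ)| ≤ |(n i : ℝ)| ^ 2 := by exact_mod_cast Int.le_self_sq |n i|
  calc frequencyRate d s * |(n i : ℝ)| ≤ frequencyRate d s * |(n i : ℝ)| ^ 2 := by
        gcongr
        unfold frequencyRate
        positivity
    _ = (m ^ 2 : ℕ) * (k i ^ 2 * ℓ ^ 2 / (4 * d)) := by
        rw [sq_k, frequencyRate]
        push_cast
        field_simp
    _ ≤ N * (k i ^ 2 * ℓ ^ 2 / (4 * d)) := by gcongr

lemma sq_card_mul_mass_indicator_closedBall_le (h : IsStepLaw p ℓ s) {m N : ℕ} (hm : 0 < m)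
    (hmN : m ^ 2 ≤ N) {ι : Type*} [Fintype ι] {c : ι → Fin d → ℤ} (hc : Function.Injective c)
    (hcm : ∀ t i, c t i ∈ Set.Icc 0 (m : ℤ)) (z : Fin d → ℤ) :
    ENNReal.ofReal ((Fintype.card ι : ℝ) ^ 2 / 4) *
        mass ((Metric.closedBall z (stepRange d s * ℓ)).indicator (convPow p N)) ≤
      Fintype.card ι *
        (∑' j : ℤ, ENNReal.ofReal (Real.exp (-frequencyRate d s * |(j : ℝ)|))) ^ d := by
  have hd := h.dim_pos
  have hτℓ : 0 < stepRange d s * ℓ :=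
    mul_pos (by linarith [h.fourteen_le_stepRange]) h.scale_pos
  set r : ℝ := d * m * (stepRange d s * ℓ) with hr
  set θ : ι → (Fin d → ℤ) →+ ℝ := fun t => phase fun i => c t i / r with hθ
  have θ_sub t t' : θ t - θ t' = phase fun i => ((c t - c t') i : ℤ) / r := by
    refine AddMonoidHom.ext fun x => ?_
    simp only [hθ, AddMonoidHom.sub_apply, phase_apply, ← Finset.sum_sub_distrib, ← sub_mul,
      ← sub_div, Pi.sub_apply, Int.cast_sub]
  have bounds t t' := h.charFun_phase_pow_le hm hmN (n := c t - c t') fun i =>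
    abs_sub_le_of_nonneg_of_le (hcm t i).1 (hcm t i).2 (hcm t' i).1 (hcm t' i).2
  have small : ∀ w ∈ Metric.closedBall z (stepRange d s * ℓ), ∀ t, |θ t (w - z)| ≤ 1 := by
    intro w hw t
    rw [mem_closedBall_iff_norm] at hw
    calc |θ t (w - z)| ≤ ∑ i, |c t i / r * ((w - z) i : ℤ)| := by
          rw [hθ, phase_apply]
          exact Finset.abs_sum_le_sum_abs _ _
      _ ≤ ∑ _i : Fin d, m / r * (stepRange d s * ℓ) := by
          gcongr with i
          rw [abs_mul, abs_of_nonneg (div_nonneg (Int.cast_nonneg (hcm t i).1) (by positivity))]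
          gcongr
          · exact_mod_cast (hcm t i).2
          · exact (abs_apply_le_norm _ i).trans hw
      _ = 1 := by
          rw [Finset.sum_const, Finset.card_univ, Fintype.card_fin, nsmul_eq_mul, hr]
          field_simp
          exact div_self hτℓ.ne'
  refine (sq_card_mul_mass_indicator_convPow_le h.mass_eq_one h.symm.neg_apply
    (fun t t' => by rw [θ_sub]; exact (bounds t t').1)
    (fun t t' => by rw [θ_sub]; exact (bounds t t').2.1) small N).trans ?_
  rw [← tsum_prod_apply]
  refine le_trans ?_ (sum_sum_sub_le_card_mul_mass hc)
  gcongr with t _ t' _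
  rw [θ_sub]
  exact (bounds t t').2.2

lemma mass_indicator_closedBall_convPow_le (h : IsStepLaw p ℓ s) {m N : ℕ} (hm : 0 < m)
    (hmN : m ^ 2 ≤ N) (z : Fin d → ℤ) :
    mass ((Metric.closedBall z (stepRange d s * ℓ)).indicator (convPow p N)) ≤
      ENNReal.ofReal (4 *
        (∑' j : ℤ, ENNReal.ofReal (Real.exp (-frequencyRate d s * |(j : ℝ)|))).toReal ^ d /
          m ^ d) := by
  have rate_pos : 0 < frequencyRate d s := by
    have := h.dim_pos
    have := h.fourteen_le_stepRange
    unfold frequencyRate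
    positivity
  have key := h.sq_card_mul_mass_indicator_closedBall_le hm hmN (ι := Fin d → Fin m)
    (c := fun t i => (t i : ℕ))
    (fun t t' htt' => funext fun i => Fin.ext (Int.natCast_inj.mp (congrFun htt' i)))
    (fun t i => ⟨by positivity, by exact_mod_cast (t i).is_lt.le⟩) z
  rw [← ENNReal.ofReal_toReal (tsum_int_exp_neg_mul_abs_ne_top rate_pos)] at key
  set K := (∑' j : ℤ, ENNReal.ofReal (Real.exp (-frequencyRate d s * |(j : ℝ)|))).toReal
  have hK : 0 ≤ K := ENNReal.toReal_nonneg
  set P := mass ((Metric.closedBall z (stepRange d s * ℓ)).indicator (convPow p N))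
  simp only [Fintype.card_fun, Fintype.card_fin, Nat.cast_pow] at key
  calc P = ENNReal.ofReal (4 / (m ^ d) ^ 2) * (ENNReal.ofReal ((m ^ d) ^ 2 / 4) * P) := by
        rw [← mul_assoc, ← ENNReal.ofReal_mul (by positivity),
          (by field_simp : 4 / ((m : ℝ) ^ d) ^ 2 * ((m ^ d) ^ 2 / 4) = 1), ENNReal.ofReal_one,
          one_mul]
    _ ≤ ENNReal.ofReal (4 / (m ^ d) ^ 2) * (m ^ d * ENNReal.ofReal K ^ d) := by gcongr
    _ = ENNReal.ofReal (4 * K ^ d / m ^ d) := by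
        rw [← ENNReal.ofReal_natCast m, ← ENNReal.ofReal_pow (by positivity),
          ← ENNReal.ofReal_pow hK, ← ENNReal.ofReal_mul (by positivity),
          ← ENNReal.ofReal_mul (by positivity)]
        congr 1
        field_simp

lemma exists_mass_indicator_closedBall_convPow_le (d : ℕ) (s : ℝ) :
    ∃ K > 0, ∀ {p : (Fin d → ℤ) → ℝ≥0∞} {ℓ : ℝ}, IsStepLaw p ℓ s → ∀ (N : ℕ) (z : Fin d → ℤ),
      mass ((Metric.closedBall z (stepRange d s * ℓ)).indicator (convPow p N)) ≤
        ENNReal.ofReal (K / √(N + 1) ^ d) := by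
  set K := (∑' j : ℤ, ENNReal.ofReal (Real.exp (-frequencyRate d s * |(j : ℝ)|))).toReal
  have : 0 ≤ K := ENNReal.toReal_nonneg
  refine ⟨4 * (2 * K) ^ d + 1, by positivity, fun {p ℓ} h N z => ?_⟩
  rcases N.eq_zero_or_pos with rfl | hN
  · refine (mass_mono (Set.indicator_le_self _ _)).trans ?_
    rw [mass_convPow, pow_zero, ← ENNReal.ofReal_one]
    refine ENNReal.ofReal_le_ofReal ?_
    simp only [CharP.cast_eq_zero, zero_add, Real.sqrt_one, one_pow, div_one,
      le_add_iff_nonneg_left]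
    positivity
  · have hm : (1 : ℝ) ≤ N.sqrt := by exact_mod_cast Nat.sqrt_pos.mpr hN
    have sqrt_le : √(N + 1) ≤ 2 * N.sqrt := by
      have : (N : ℝ) + 1 ≤ (N.sqrt + 1) ^ 2 := by exact_mod_cast Nat.lt_succ_sqrt' N
      exact Real.sqrt_le_iff.mpr ⟨by positivity, by nlinarith⟩
    refine (h.mass_indicator_closedBall_convPow_le (Nat.sqrt_pos.mpr hN) N.sqrt_le' z).trans
      (ENNReal.ofReal_le_ofReal ?_)
    calc 4 * K ^ d / (N.sqrt : ℝ) ^ d = 4 * (2 * K) ^ d / (2 * N.sqrt) ^ d := by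
          rw [mul_pow, mul_pow]
          field_simp
      _ ≤ (4 * (2 * K) ^ d + 1) / √(N + 1) ^ d := by
          gcongr
          linarith

end IsStepLaw
end StepLaw

/-! ### Decomposition at the first step of a given kind -/

lemma tsum_sum_antidiagonal (f : ℕ → ℕ → ℝ≥0∞) :
    ∑' n, ∑ ij ∈ Finset.HasAntidiagonal.antidiagonal n, f ij.1 ij.2 = ∑' i, ∑' j, f i j := by
  rw [← ENNReal.tsum_prod, ← Finset.HasAntidiagonal.sigmaAntidiagonalEquivProd.tsum_eq,
    ENNReal.tsum_sigma']
  refine tsum_congr fun n => ?_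
  rw [tsum_fintype, ← Finset.sum_attach]
  rfl

section Decomposition

variable {V : Type*} [AddCommGroup V]

lemma conv_sum {ι : Type*} (S : Finset ι) (f : V → ℝ≥0∞) (g : ι → V → ℝ≥0∞) :
    f ⋆ (∑ i ∈ S, g i) = ∑ i ∈ S, f ⋆ g i := by
  ext x
  simp only [conv, Finset.sum_apply, Finset.mul_sum]
  exact Summable.tsum_finsetSum fun _ _ => ENNReal.summable

lemma convPow_add_left_succ (f g : V → ℝ≥0∞) (n : ℕ) :
    convPow (f + g) (n + 1) =
      ∑ ij ∈ Finset.HasAntidiagonal.antidiagonal n, convPow f ij.1 ⋆ (g ⋆ convPow (f + g) ij.2) +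
        convPow f (n + 1) := by
  induction n with
  | zero => simp [convPow, conv_pointMass, pointMass_conv, add_comm]
  | succ n ih =>
    calc convPow (f + g) (n + 2) = f ⋆ convPow (f + g) (n + 1) + g ⋆ convPow (f + g) (n + 1) :=
          add_conv f g _
      _ = ∑ ij ∈ Finset.HasAntidiagonal.antidiagonal n,
              convPow f (ij.1 + 1) ⋆ (g ⋆ convPow (f + g) ij.2) +
            convPow f (n + 2) + g ⋆ convPow (f + g) (n + 1) := by
          congr 1
          rw [ih, conv_add, conv_sum]
          simp only [← conv_assoc]
          rfl
      _ = _ := by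
          rw [Finset.Nat.sum_antidiagonal_succ, convPow, pointMass_conv]
          abel

end Decomposition

/-! ### A sum over Gaussian heat kernel bounds -/

lemma sum_one_div_sqrt_add_pow_three_le {a : ℝ} (ha : 0 < a) (M : ℕ) :
    ∑ N ∈ Finset.range M, 1 / √(N + 1 + a) ^ 3 ≤ 2 / √a := by
  suffices ∑ N ∈ Finset.range M, 1 / √(N + 1 + a) ^ 3 ≤ 2 / √a - 2 / √(M + a) from
    this.trans (sub_le_self _ (by positivity))
  induction M with
  | zero => simp
  | succ M ih =>
    have telescope : 1 / √(M + 1 + a) ^ 3 ≤ 2 / √(M + a) - 2 / √(M + 1 + a) := by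
      have hx : 0 < √(M + a) := by positivity
      have hy : 0 < √(M + 1 + a) := by positivity
      have hxy : √(M + a) ≤ √(M + 1 + a) := Real.sqrt_le_sqrt (by linarith)
      have x_sq : √(M + a) ^ 2 = M + a := Real.sq_sqrt (by positivity)
      have y_sq : √(M + 1 + a) ^ 2 = M + 1 + a := Real.sq_sqrt (by positivity)
      set x := √(M + a)
      set y := √(M + 1 + a)
      have : 2 / x - 2 / y = 2 / (x * y * (x + y)) := by
        rw [div_sub_div _ _ hx.ne' hy.ne', div_eq_div_iff (by positivity) (by positivity)]
        linear_combination 2 * x * y * (y_sq - x_sq)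
      rw [this, div_le_div_iff₀ (by positivity) (by positivity)]
      calc 1 * (x * y * (x + y)) ≤ 1 * (y * y * (y + y)) := by gcongr
        _ = 2 * y ^ 3 := by ring
    rw [Finset.sum_range_succ]
    push_cast
    linarith

lemma one_add_pow_le_mul_exp (n : ℕ) {s y : ℝ} (hs : 0 < s) (hy : 0 ≤ y) :
    (1 + y) ^ n ≤ Real.exp s * n.factorial / s ^ n * Real.exp (s * y) := by
  have := Real.pow_div_factorial_le_exp (s * (1 + y)) (by positivity) n
  rw [div_le_iff₀ (by positivity), mul_add, mul_one, Real.exp_add, ← mul_one_add, mul_pow] at this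
  rw [div_mul_eq_mul_div, le_div_iff₀ (by positivity)]
  linarith

lemma one_div_pow_mul_exp_le {d : ℕ} (hd : 3 ≤ d) {s L b : ℝ} (hs : 0 < s) (hL : 0 < L)
    (hb : 0 < b) :
    1 / b ^ d * Real.exp (-(s * L / b)) ≤
      Real.exp s * d.factorial / s ^ d * (L ^ 3 / L ^ d) * (1 / √(b ^ 2 + L ^ 2) ^ 3) := by
  have sqrt_le : √(b ^ 2 + L ^ 2) ≤ b + L :=
    Real.sqrt_le_iff.mpr ⟨by positivity, by nlinarith⟩
  have pow_le : L ^ d * √(b ^ 2 + L ^ 2) ^ 3 ≤ L ^ 3 * (b + L) ^ d := by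
    obtain ⟨e, rfl⟩ := Nat.exists_eq_add_of_le hd
    calc L ^ (3 + e) * √(b ^ 2 + L ^ 2) ^ 3 ≤ L ^ 3 * (b + L) ^ e * (b + L) ^ 3 := by
          rw [pow_add]
          gcongr
          linarith
      _ = L ^ 3 * (b + L) ^ (3 + e) := by ring
  have exp_le := one_add_pow_le_mul_exp d hs (by positivity : 0 ≤ L / b)
  set K := Real.exp s * d.factorial / s ^ d
  rw [one_add_div hb.ne', div_pow, div_le_iff₀ (by positivity), mul_div_assoc' s] at exp_le
  calc 1 / b ^ d * Real.exp (-(s * L / b)) = 1 / (b ^ d * Real.exp (s * L / b)) := by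
        rw [Real.exp_neg]
        field_simp
    _ ≤ K * (1 / (b + L) ^ d) := by
        rw [mul_one_div, div_le_div_iff₀ (by positivity) (by positivity)]
        linarith
    _ ≤ K * (L ^ 3 / L ^ d * (1 / √(b ^ 2 + L ^ 2) ^ 3)) := by
        gcongr
        rw [div_mul_div_comm, div_le_div_iff₀ (by positivity) (by positivity)]
        linarith
    _ = _ := by ring

lemma tsum_one_div_sqrt_pow_mul_exp_le {d : ℕ} (hd : 3 ≤ d) {s L : ℝ} (hs : 0 < s)
    (hL : 0 < L) :
    ∑' N : ℕ, ENNReal.ofReal (1 / √(N + 1) ^ d * Real.exp (-(s * L / √(N + 1)))) ≤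
      ENNReal.ofReal (2 * (Real.exp s * d.factorial / s ^ d) * (L ^ 2 / L ^ d)) := by
  refine ENNReal.tsum_le_of_sum_range_le fun M => ?_
  rw [← ENNReal.ofReal_sum_of_nonneg fun _ _ => by positivity]
  refine ENNReal.ofReal_le_ofReal ?_
  calc _ ≤ ∑ N ∈ Finset.range M, Real.exp s * d.factorial / s ^ d * (L ^ 3 / L ^ d) *
            (1 / √(N + 1 + L ^ 2) ^ 3) := by
        refine Finset.sum_le_sum fun N _ => ?_
        refine (one_div_pow_mul_exp_le hd hs hL (by positivity)).trans_eq ?_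
        rw [Real.sq_sqrt (by positivity)]
    _ ≤ Real.exp s * d.factorial / s ^ d * (L ^ 3 / L ^ d) * (2 / √(L ^ 2)) := by
        rw [← Finset.mul_sum]
        gcongr
        exact sum_one_div_sqrt_add_pow_three_le (by positivity) M
    _ = _ := by
        rw [Real.sqrt_sq hL.le]
        field_simp

/-! ### Exponentially tilted walks -/

section Tilt

variable {d : ℕ} {p : (Fin d → ℤ) → ℝ≥0∞} {ℓ s u : ℝ}

lemma expWeight_le_sum_coordExp (hd : 0 < d) (u : ℝ) (x : Fin d → ℤ) :
    expWeight u x ≤ ∑ i, (coordExp u i x + coordExp (-u) i x) := by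
  obtain ⟨i, hi⟩ := exists_norm_eq_abs_apply hd x
  refine le_trans ?_ (Finset.single_le_sum (fun _ _ => zero_le) (Finset.mem_univ i))
  rw [expWeight, coordExp, coordExp, hi]
  rcases abs_choice (x i : ℝ) with h | h
  · rw [h]
    exact le_self_add
  · rw [h, mul_neg, ← neg_mul]
    exact le_add_self

lemma mass_mul_expWeight_le (f : (Fin d → ℤ) → ℝ≥0∞) {a b : ℝ} (ha : 0 ≤ a) (hab : a ≤ b)
    (hb : 0 < b) :
    mass (f * expWeight a) ≤ mass f + ENNReal.ofReal (a / b) * mass (f * expWeight b) := by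
  have hr : 0 ≤ a / b := by positivity
  rw [← mass_smul, ← mass_add]
  refine mass_mono fun x => ?_
  simp only [Pi.mul_apply, Pi.add_apply, Pi.smul_apply, smul_eq_mul]
  rw [mul_left_comm]
  nth_rw 2 [← mul_one (f x)]
  rw [← mul_add]
  gcongr
  rw [expWeight, expWeight, ← ENNReal.ofReal_mul hr, ← ENNReal.ofReal_one,
    ← ENNReal.ofReal_add zero_le_one (by positivity)]
  refine ENNReal.ofReal_le_ofReal ?_
  have convex := convexOn_exp.2 (Set.mem_univ 0) (Set.mem_univ (b * ‖x‖))
    (sub_nonneg.mpr ((div_le_one hb).mpr hab)) hr (by ring)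
  simp only [smul_eq_mul, mul_zero, zero_add, Real.exp_zero, mul_one] at convex
  rw [show a / b * (b * ‖x‖) = a * ‖x‖ by field_simp] at convex
  linarith

lemma mass_mul_coordExp_mul_add_sq_le (hp : ∀ x, p (-x) = p x) {r : ℝ} (hr : |r| ≤ 1) (v : ℝ)
    (i : Fin d) :
    mass (p * coordExp (r * v) i) + ENNReal.ofReal (r ^ 2) * mass p ≤
      mass p + ENNReal.ofReal (r ^ 2) * mass (p * coordExp v i) := by
  rw [mass_mul_coordExp hp, mass_mul_coordExp hp, mass, ← ENNReal.tsum_mul_left,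
    ← ENNReal.tsum_mul_left, ← ENNReal.tsum_add, ← ENNReal.tsum_add]
  refine ENNReal.tsum_le_tsum fun x => ?_
  have hr2 := sq_nonneg r
  calc p x * ENNReal.ofReal (Real.cosh (r * v * x i)) + ENNReal.ofReal (r ^ 2) * p x
      = p x * ENNReal.ofReal (Real.cosh (r * (v * x i)) + r ^ 2) := by
        rw [ENNReal.ofReal_add (Real.cosh_pos _).le hr2, mul_add, mul_comm (p x) (.ofReal (r ^ 2)),
          mul_assoc r]
    _ ≤ p x * ENNReal.ofReal (1 + r ^ 2 * Real.cosh (v * x i)) := by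
        exact mul_le_mul_right (ENNReal.ofReal_le_ofReal (cosh_mul_add_sq_le hr _)) _
    _ = _ := by
        rw [ENNReal.ofReal_add zero_le_one (by positivity), ENNReal.ofReal_mul hr2,
          ENNReal.ofReal_one]
        ring

/-- The largest rate, in units of the inverse length scale, at which the step laws are tilted. -/
def tiltRate (d : ℕ) (s : ℝ) : ℝ := moderateProb d s * s / (12 * d)

lemma tiltRate_pos (hd : 0 < d) (hs : 0 < s) : 0 < tiltRate d s := by
  have := moderateProb_pos hd hs
  unfold tiltRate
  positivity

lemma moderateProb_le_one (hd : 0 < d) (hs : 0 < s) (hs' : s ≤ 1) : moderateProb d s ≤ 1 := by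
  have hd' : (1 : ℝ) ≤ d := by exact_mod_cast hd
  have : 1 ≤ stepRange d s := by
    rw [stepRange, one_le_div (by positivity)]
    nlinarith
  rw [moderateProb, div_le_one (by positivity)]
  nlinarith

namespace IsStepLaw

lemma tiltRate_le (h : IsStepLaw p ℓ s) : tiltRate d s ≤ s / 12 := by
  have hd : (1 : ℝ) ≤ d := by exact_mod_cast h.dim_pos
  have := h.rate_pos
  unfold tiltRate
  gcongr
  · exact mul_le_of_le_one_left this.le
      (moderateProb_le_one h.dim_pos h.rate_pos h.rate_le_one)
  · linarith

lemma mass_mul_coordExp_le_exp_sq (h : IsStepLaw p ℓ s) (hu : |u| ≤ s) (i : Fin d) :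
    mass (p * coordExp (u / ℓ) i) ≤ ENNReal.ofReal (Real.exp (u ^ 2)) := by
  have hℓ := h.scale_pos
  have hs := h.rate_pos
  set r := u / s with hr
  have r_le : |r| ≤ 1 := by rwa [abs_div, abs_of_pos hs, div_le_one hs]
  have interpolate := mass_mul_coordExp_mul_add_sq_le h.symm.neg_apply r_le (s / ℓ) i
  rw [show r * (s / ℓ) = u / ℓ by rw [hr]; field_simp, h.mass_eq_one, mul_one] at interpolate
  have bound : 1 + ENNReal.ofReal (r ^ 2) * ENNReal.ofReal (1 + s ^ 2) =
      ENNReal.ofReal (1 + u ^ 2) + ENNReal.ofReal (r ^ 2) := by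
    rw [← ENNReal.ofReal_mul (sq_nonneg r), ← ENNReal.ofReal_one,
      ← ENNReal.ofReal_add zero_le_one (by positivity),
      ← ENNReal.ofReal_add (by positivity) (by positivity)]
    congr 1
    rw [hr]
    field_simp
    ring
  have le := (interpolate.trans
    (add_le_add_right (mul_le_mul_right (h.mass_mul_coordExp_le i) _) _)).trans_eq bound
  rw [ENNReal.add_le_add_iff_right ENNReal.ofReal_ne_top] at le
  refine le.trans (ENNReal.ofReal_le_ofReal ?_)
  linarith [Real.add_one_le_exp (u ^ 2)]

lemma mass_convPow_mul_expWeight_le (h : IsStepLaw p ℓ s) (hu₀ : 0 ≤ u) (hu : u ≤ s) (N : ℕ) :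
    mass (convPow p N * expWeight (u / ℓ)) ≤ ENNReal.ofReal (2 * d * Real.exp (u ^ 2 * N)) := by
  have coord_le (v : ℝ) (hv : |v| ≤ s) (i : Fin d) :
      mass (convPow p N * coordExp (v / ℓ) i) ≤ ENNReal.ofReal (Real.exp (v ^ 2 * N)) := by
    rw [mass_convPow_mul (coordExp_add _ i) (coordExp_zero _ i), mul_comm (v ^ 2), Real.exp_nat_mul,
      ENNReal.ofReal_pow (Real.exp_pos _).le]
    exact pow_le_pow_left' (h.mass_mul_coordExp_le_exp_sq hv i) N
  calc mass (convPow p N * expWeight (u / ℓ))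
      ≤ mass (∑ i, (convPow p N * coordExp (u / ℓ) i + convPow p N * coordExp (-u / ℓ) i)) := by
        refine mass_mono fun x => ?_
        simp only [Pi.mul_apply, Finset.sum_apply, Pi.add_apply, ← mul_add, ← Finset.mul_sum,
          neg_div]
        gcongr
        exact expWeight_le_sum_coordExp h.dim_pos _ x
    _ = ∑ i, (mass (convPow p N * coordExp (u / ℓ) i) +
          mass (convPow p N * coordExp (-u / ℓ) i)) := by
        simp only [← mass_add]
        simp only [mass, Finset.sum_apply]
        exact Summable.tsum_finsetSum fun _ _ => ENNReal.summable
    _ ≤ ∑ _i : Fin d, ENNReal.ofReal (2 * Real.exp (u ^ 2 * N)) := by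
        refine Finset.sum_le_sum fun i _ => ?_
        rw [two_mul, ENNReal.ofReal_add (by positivity) (by positivity)]
        refine add_le_add (coord_le u (by rwa [abs_of_nonneg hu₀]) i) ?_
        simpa using coord_le (-u) (by rwa [abs_neg, abs_of_nonneg hu₀]) i
    _ = _ := by
        rw [Finset.sum_const, Finset.card_univ, Fintype.card_fin, nsmul_eq_mul,
          ← ENNReal.ofReal_natCast, ← ENNReal.ofReal_mul (by positivity)]
        ring_nf

lemma mass_compl_mul_expWeight_le (h : IsStepLaw p ℓ s) (hu₀ : 0 ≤ u) (hu : u ≤ tiltRate d s) :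
    mass ((moderateSteps d s ℓ)ᶜ.indicator p * expWeight (u / ℓ)) ≤
      ENNReal.ofReal (1 - moderateProb d s / 2) := by
  have hℓ := h.scale_pos
  have hs := h.rate_pos
  have hd := h.dim_pos
  set bad := (moderateSteps d s ℓ)ᶜ.indicator p
  have rate_eq : u / ℓ / (s / ℓ) = u / s := by field_simp
  have exp_le : Real.exp (s ^ 2 * (1 : ℕ)) ≤ 3 := by
    have : s ^ 2 * (1 : ℕ) ≤ 1 := by
      push_cast
      nlinarith [h.rate_le_one]
    exact (Real.exp_le_exp.mpr this).trans (by linarith [Real.exp_one_lt_d9])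
  have hp := moderateProb_le_one h.dim_pos h.rate_pos h.rate_le_one
  have rate_pos := tiltRate_pos hd hs
  calc mass (bad * expWeight (u / ℓ))
      ≤ mass bad + ENNReal.ofReal (u / s) * mass (bad * expWeight (s / ℓ)) := by
        rw [← rate_eq]
        refine mass_mul_expWeight_le bad (by positivity) ?_ (by positivity)
        gcongr
        linarith [h.tiltRate_le]
    _ ≤ ENNReal.ofReal (1 - moderateProb d s) +
          ENNReal.ofReal (u / s) * ENNReal.ofReal (2 * d * Real.exp (s ^ 2 * (1 : ℕ))) := by
        gcongr
        · exact h.mass_compl_le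
        · refine (mass_mono fun x => ?_).trans (h.mass_convPow_mul_expWeight_le hs.le le_rfl 1)
          rw [convPow_one, Pi.mul_apply, Pi.mul_apply]
          gcongr
          exact Set.indicator_le_self _ _ x
    _ ≤ ENNReal.ofReal (1 - moderateProb d s / 2) := by
        rw [← ENNReal.ofReal_mul (by positivity),
          ← ENNReal.ofReal_add (by linarith) (by positivity)]
        refine ENNReal.ofReal_le_ofReal ?_
        have : u / s * (2 * d * Real.exp (s ^ 2 * (1 : ℕ))) ≤ tiltRate d s / s * (2 * d * 3) := by
          gcongr
        have : tiltRate d s / s * (2 * d * 3) = moderateProb d s / 2 := by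
          unfold tiltRate
          field_simp
          ring
        linarith

end IsStepLaw

end Tilt

/-! ### The killed Green function -/

lemma expWeight_mul_expWeight_neg {V : Type*} [SeminormedAddCommGroup V] (a : ℝ) (x : V) :
    expWeight a x * expWeight (-a) x = 1 := by
  rw [expWeight, expWeight, ← ENNReal.ofReal_mul (Real.exp_pos _).le, ← Real.exp_add]
  simp

lemma le_of_mul_expWeight_le {V : Type*} [SeminormedAddCommGroup V] {a : ℝ} {x : V} {A B : ℝ≥0∞}
    (h : A * expWeight a x ≤ B) : A ≤ expWeight (-a) x * B := by
  calc A = expWeight (-a) x * (A * expWeight a x) := by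
        rw [mul_comm, mul_assoc, expWeight_mul_expWeight_neg, mul_one]
    _ ≤ _ := by gcongr

lemma killedGreen_add_le {V : Type*} [AddCommGroup V] (f g : V → ℝ≥0∞) {θ : ℝ} (hθ : 0 ≤ θ)
    (x : V) :
    killedGreen (f + g) θ x ≤
      ∑' (j : ℕ) (N : ℕ), ENNReal.ofReal (1 - θ) ^ N *
        (convPow f j ⋆ (g ⋆ convPow (f + g) N)) x + ∑' k, convPow f (k + 1) x := by
  have survival_le : ENNReal.ofReal (1 - θ) ≤ 1 := ENNReal.ofReal_le_one.mpr (by linarith)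
  rw [← tsum_sum_antidiagonal (fun j N => ENNReal.ofReal (1 - θ) ^ N *
    (convPow f j ⋆ (g ⋆ convPow (f + g) N)) x), ← ENNReal.tsum_add]
  refine ENNReal.tsum_le_tsum fun k => ?_
  rw [convPow_add_left_succ, Pi.add_apply, Finset.sum_apply, mul_add, Finset.mul_sum]
  refine add_le_add (Finset.sum_le_sum fun jN hjN => ?_)
    (mul_le_of_le_one_left zero_le (pow_le_one₀ zero_le survival_le))
  have := Finset.HasAntidiagonal.mem_antidiagonal.mp hjN
  gcongr ?_ * _
  exact pow_le_pow_of_le_one zero_le survival_le (by omega)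

section ConvBall

variable {V : Type*} [SeminormedAddCommGroup V] {f g : V → ℝ≥0∞} {u r : ℝ} {A B : ℝ≥0∞}

lemma expWeight_add_le_add (hu : 0 ≤ u) (x y : V) :
    expWeight u (x + y) ≤ expWeight (2 * u) x + expWeight (2 * u) y := by
  have norm_add := mul_le_mul_of_nonneg_left (norm_add_le x y) hu
  rcases le_total ‖x‖ ‖y‖ with h | h
  · refine le_add_left (ENNReal.ofReal_le_ofReal (Real.exp_le_exp.mpr ?_))
    nlinarith
  · refine le_add_right (ENNReal.ofReal_le_ofReal (Real.exp_le_exp.mpr ?_))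
    nlinarith

lemma indicator_one_closedBall_add (z x y : V) :
    (Metric.closedBall z r).indicator (1 : V → ℝ≥0∞) (x + y) =
      (Metric.closedBall (z - x) r).indicator 1 y := by
  have : x + y ∈ Metric.closedBall z r ↔ y ∈ Metric.closedBall (z - x) r := by
    rw [mem_closedBall_iff_norm, mem_closedBall_iff_norm, sub_sub_eq_add_sub, add_comm]
  by_cases hy : y ∈ Metric.closedBall (z - x) r
  · rw [Set.indicator_of_mem (this.mpr hy), Set.indicator_of_mem hy, Pi.one_apply, Pi.one_apply]
  · rw [Set.indicator_of_notMem (mt this.mp hy), Set.indicator_of_notMem hy]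

lemma mass_indicator_closedBall_conv_mul_le (hu : 0 ≤ u)
    (hf : ∀ z, mass ((Metric.closedBall z r).indicator f) ≤ A)
    (hg : ∀ z, mass ((Metric.closedBall z r).indicator g) ≤ B) (z : V) :
    mass ((Metric.closedBall z r).indicator (f ⋆ g * expWeight u)) ≤
      mass (f * expWeight (2 * u)) * B + mass (g * expWeight (2 * u)) * A := by
  set ball : V → V → ℝ≥0∞ := fun z => (Metric.closedBall z r).indicator 1 with ball_def
  have indicator_eq (f : V → ℝ≥0∞) (z : V) : (Metric.closedBall z r).indicator f = f * ball z := by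
    ext x
    rw [Pi.mul_apply, ball_def, ← Set.indicator_mul_right]
    simp only [Pi.one_apply, mul_one]
  simp only [indicator_eq] at hf hg ⊢
  rw [mul_assoc, mass_conv_mul]
  have split (x y : V) : f x * g y * (expWeight u (x + y) * ball z (x + y)) ≤
      f x * expWeight (2 * u) x * (g y * ball (z - x) y) +
        g y * expWeight (2 * u) y * (f x * ball (z - y) x) := by
    simp only [ball_def]
    rw [← indicator_one_closedBall_add, ← indicator_one_closedBall_add, add_comm y x]
    calc _ ≤ f x * g y * ((expWeight (2 * u) x + expWeight (2 * u) y) * ball z (x + y)) := by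
          gcongr
          exact expWeight_add_le_add hu x y
      _ = _ := by ring
  refine (ENNReal.tsum_le_tsum fun x => ENNReal.tsum_le_tsum fun y => split x y).trans ?_
  simp_rw [ENNReal.tsum_add]
  rw [ENNReal.tsum_comm (f := fun x y => g y * expWeight (2 * u) y * (f x * ball (z - y) x))]
  simp_rw [ENNReal.tsum_mul_left]
  rw [mass, mass, ← ENNReal.tsum_mul_right, ← ENNReal.tsum_mul_right]
  exact add_le_add (ENNReal.tsum_le_tsum fun x => mul_le_mul_right (hg _) _)
    (ENNReal.tsum_le_tsum fun y => mul_le_mul_right (hf _) _)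

lemma conv_apply_le_mul_mass_indicator (hf : ∀ y, f y ≤ A) (hf' : ∀ y, r < ‖y‖ → f y = 0)
    (x : V) : (f ⋆ g) x ≤ A * mass ((Metric.closedBall x r).indicator g) := by
  rw [conv_comm, mass, ← ENNReal.tsum_mul_left]
  refine ENNReal.tsum_le_tsum fun y => ?_
  by_cases hy : y ∈ Metric.closedBall x r
  · rw [Set.indicator_of_mem hy, mul_comm]
    gcongr
    exact hf _
  · rw [hf' _ (by rwa [mem_closedBall_iff_norm', not_le] at hy), mul_zero]
    exact zero_le

end ConvBall

namespace IsStepLaw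

variable {d : ℕ} {p : (Fin d → ℤ) → ℝ≥0∞} {ℓ s u K : ℝ}

lemma mass_indicator_closedBall_tilted_convPow_le (h : IsStepLaw p ℓ s) (hK : 0 ≤ K) {r : ℝ}
    (hconc : ∀ (N : ℕ) (z : Fin d → ℤ),
      mass ((Metric.closedBall z r).indicator (convPow p N)) ≤ ENNReal.ofReal (K / √(N + 1) ^ d))
    (hu₀ : 0 ≤ u) (hu : 2 * u ≤ s) (N : ℕ) (z : Fin d → ℤ) :
    mass ((Metric.closedBall z r).indicator (convPow p N * expWeight (u / ℓ))) ≤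
      ENNReal.ofReal (4 * d * 2 ^ d * K * Real.exp (4 * u ^ 2 * N) / √(N + 1) ^ d) := by
  have hℓ := h.scale_pos
  obtain ⟨m, n, rfl, hm, hn⟩ :
      ∃ m n : ℕ, N = m + n ∧ N + 1 ≤ 4 * (m + 1) ∧ N + 1 ≤ 4 * (n + 1) :=
    ⟨N / 2, N - N / 2, by omega, by omega, by omega⟩
  set b := √((m + n : ℕ) + 1)
  have ball_le (k : ℕ) (hk : m + n + 1 ≤ 4 * (k + 1)) (z : Fin d → ℤ) :
      mass ((Metric.closedBall z r).indicator (convPow p k)) ≤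
        ENNReal.ofReal (2 ^ d * K / b ^ d) := by
    refine (hconc k z).trans (ENNReal.ofReal_le_ofReal ?_)
    have sqrt_le : b ≤ 2 * √(k + 1) := by
      refine Real.sqrt_le_iff.mpr ⟨by positivity, ?_⟩
      rw [mul_pow, Real.sq_sqrt (by positivity)]
      have : ((m + n : ℕ) : ℝ) + 1 ≤ 4 * (k + 1) := by exact_mod_cast hk
      linarith
    rw [div_le_div_iff₀ (by positivity) (by positivity)]
    calc K * b ^ d ≤ K * (2 * √(k + 1)) ^ d := by gcongr
      _ = _ := by ring
  have tilt_le (k : ℕ) (hk : k ≤ m + n) : mass (convPow p k * expWeight (2 * (u / ℓ))) ≤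
      ENNReal.ofReal (2 * d * Real.exp (4 * u ^ 2 * (m + n : ℕ))) := by
    rw [← mul_div_assoc]
    refine (h.mass_convPow_mul_expWeight_le (by positivity) hu k).trans
      (ENNReal.ofReal_le_ofReal ?_)
    rw [mul_pow]
    gcongr
    norm_num
  rw [convPow_add]
  refine (mass_indicator_closedBall_conv_mul_le (by positivity) (ball_le m hm) (ball_le n hn)
    z).trans ?_
  refine (add_le_add (mul_le_mul_left (tilt_le m (by omega)) _)
    (mul_le_mul_left (tilt_le n (by omega)) _)).trans ?_
  rw [← ENNReal.ofReal_mul (by positivity), ← ENNReal.ofReal_add (by positivity) (by positivity)]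
  refine ENNReal.ofReal_le_ofReal (le_of_eq ?_)
  ring

lemma conv_convPow_compl_le (h : IsStepLaw p ℓ s) {B Q : ℝ≥0∞}
    (hB : ∀ w ∈ moderateSteps d s ℓ, p w ≤ B) (hu₀ : 0 ≤ u) (hu : u ≤ tiltRate d s)
    {g : (Fin d → ℤ) → ℝ≥0∞}
    (hQ : ∀ z, mass ((Metric.closedBall z (stepRange d s * ℓ)).indicator
      (g * expWeight (u / ℓ))) ≤ Q) (j : ℕ) (x : Fin d → ℤ) :
    (convPow ((moderateSteps d s ℓ)ᶜ.indicator p) j ⋆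
        ((moderateSteps d s ℓ).indicator p ⋆ g)) x ≤
      expWeight (-(u / ℓ)) x * (ENNReal.ofReal (1 - moderateProb d s / 2) ^ j *
        (B * ENNReal.ofReal (Real.exp (u * stepRange d s)) * Q)) := by
  have hℓ := h.scale_pos
  have hW := expWeight_add_le (V := Fin d → ℤ) (div_nonneg hu₀ hℓ.le)
  set bad := (moderateSteps d s ℓ)ᶜ.indicator p
  set good := (moderateSteps d s ℓ).indicator p with hgood
  have good_le (w : Fin d → ℤ) :
      (good * expWeight (u / ℓ) : (Fin d → ℤ) → ℝ≥0∞) w ≤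
        B * ENNReal.ofReal (Real.exp (u * stepRange d s)) := by
    by_cases hw : w ∈ moderateSteps d s ℓ
    · rw [Pi.mul_apply, hgood, Set.indicator_of_mem hw, expWeight]
      refine mul_le_mul' (hB w hw) (ENNReal.ofReal_le_ofReal (Real.exp_le_exp.mpr ?_))
      calc u / ℓ * ‖w‖ ≤ u / ℓ * (stepRange d s * ℓ) := by
            gcongr
            exact hw.2
        _ = _ := by field_simp
    · simp [hgood, hw]
  have good_far (w : Fin d → ℤ) (hw : stepRange d s * ℓ < ‖w‖) :
      (good * expWeight (u / ℓ) : (Fin d → ℤ) → ℝ≥0∞) w = 0 := by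
    rw [Pi.mul_apply, hgood, Set.indicator_of_notMem fun hw' => hw'.2.not_gt hw, zero_mul]
  refine le_of_mul_expWeight_le ?_
  calc _ ≤ ((convPow bad j * expWeight (u / ℓ)) ⋆ ((good ⋆ g) * expWeight (u / ℓ))) x :=
        conv_mul_le hW _ _ x
    _ ≤ (convPow (bad * expWeight (u / ℓ)) j ⋆
          ((good * expWeight (u / ℓ)) ⋆ (g * expWeight (u / ℓ)))) x :=
        conv_mono (convPow_mul_le hW (expWeight_zero _).le _ j) (conv_mul_le hW _ _) x
    _ ≤ mass (bad * expWeight (u / ℓ)) ^ j *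
          (B * ENNReal.ofReal (Real.exp (u * stepRange d s)) * Q) := by
        rw [← mass_convPow]
        refine conv_apply_le_of_le (fun y => ?_) x
        exact (conv_apply_le_mul_mass_indicator good_le good_far y).trans
          (mul_le_mul_right (hQ y) _)
    _ ≤ _ := by
        gcongr
        exact h.mass_compl_mul_expWeight_le hu₀ hu

lemma convPow_succ_compl_le (h : IsStepLaw p ℓ s) (hu₀ : 0 ≤ u) (hu : u ≤ tiltRate d s)
    {x : Fin d → ℤ} {B : ℝ≥0∞} (hB : ∀ n : ℕ, 0 < n → ∀ w, ‖x‖ ≤ n * ‖w‖ →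
      p w * expWeight (u / ℓ) w ≤ (n : ℝ≥0∞) ^ d * B) (n : ℕ) :
    convPow ((moderateSteps d s ℓ)ᶜ.indicator p) (n + 1) x ≤
      expWeight (-(u / ℓ)) x * (ENNReal.ofReal ((n + 1 : ℕ) ^ (d + 1) *
        (1 - moderateProb d s / 2) ^ n) * B) := by
  have hW := expWeight_add_le (V := Fin d → ℤ) (div_nonneg hu₀ h.scale_pos.le)
  have hr : 0 ≤ 1 - moderateProb d s / 2 := by
    linarith [moderateProb_le_one h.dim_pos h.rate_pos h.rate_le_one]
  set bad := (moderateSteps d s ℓ)ᶜ.indicator p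
  have long_step (w : Fin d → ℤ) (hw : ‖x‖ / (n + 1 : ℕ) ≤ ‖w‖) :
      (bad * expWeight (u / ℓ) : (Fin d → ℤ) → ℝ≥0∞) w ≤ ((n + 1 : ℕ) : ℝ≥0∞) ^ d * B := by
    rw [div_le_iff₀' (by positivity)] at hw
    refine (mul_le_mul_left ?_ _).trans (hB (n + 1) n.succ_pos w hw)
    exact Set.indicator_le_self _ _ w
  have split : ((n + 1 : ℕ) : ℝ) * (‖x‖ / (n + 1 : ℕ)) ≤ ‖x‖ :=
    (mul_div_cancel₀ _ (Nat.cast_ne_zero.mpr n.succ_ne_zero)).le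
  refine le_of_mul_expWeight_le ?_
  calc _ ≤ convPow (bad * expWeight (u / ℓ)) (n + 1) x :=
        convPow_mul_le hW (expWeight_zero _).le _ _ x
    _ ≤ (n + 1 : ℕ) * ((n + 1 : ℕ) ^ d * B) * mass (bad * expWeight (u / ℓ)) ^ n :=
        convPow_succ_apply_le_of_far long_step n split
    _ ≤ (n + 1 : ℕ) * ((n + 1 : ℕ) ^ d * B) * ENNReal.ofReal (1 - moderateProb d s / 2) ^ n := by
        gcongr
        exact h.mass_compl_mul_expWeight_le hu₀ hu
    _ = _ := by
        rw [ENNReal.ofReal_mul (by positivity), ENNReal.ofReal_pow (by positivity),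
          ENNReal.ofReal_pow hr, ENNReal.ofReal_natCast]
        ring

end IsStepLaw

lemma exists_tsum_pow_mul_geometric_le (k : ℕ) {r : ℝ} (hr₀ : 0 ≤ r) (hr : r < 1) :
    ∃ K > 0, ∑' n : ℕ, ENNReal.ofReal ((n + 1 : ℕ) ^ k * r ^ n) ≤ ENNReal.ofReal K := by
  have growth : (fun n : ℕ => (((n + 1) ^ k : ℕ) : ℝ)) =O[Filter.atTop]
      fun n => ((n ^ k : ℕ) : ℝ) := by
    refine Asymptotics.IsBigO.of_bound (2 ^ k)
      ((Filter.eventually_ge_atTop 1).mono fun n hn => ?_)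
    have : (1 : ℝ) ≤ n := by exact_mod_cast hn
    rw [Real.norm_natCast, Real.norm_natCast]
    push_cast
    rw [← mul_pow]
    gcongr
    linarith
  have norm_lt : ‖r‖ < 1 := by rwa [Real.norm_of_nonneg hr₀]
  have summable : Summable fun n : ℕ => (((n + 1) ^ k : ℕ) : ℝ) * r ^ n :=
    (summable_norm_mul_geometric_of_norm_lt_one norm_lt growth).of_norm
  simp only [← Nat.cast_pow]
  rw [← ENNReal.ofReal_tsum_of_nonneg (fun n => by positivity) summable]
  exact ⟨_, summable.tsum_pos (fun n => by positivity) 0 (by simp), le_rfl⟩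

lemma one_sub_pow_mul_exp_sq_le {ϑ v : ℝ} (hϑ₀ : 0 ≤ ϑ) (hϑ : ϑ ≤ 1) (hv : v ^ 2 ≤ 1 / 8) (N : ℕ) :
    (1 - ϑ) ^ N * Real.exp (4 * (v * √ϑ + v / √(N + 1)) ^ 2 * N) ≤ Real.exp 1 := by
  have pow_le : (1 - ϑ) ^ N ≤ Real.exp (-(ϑ * N)) := by
    rw [show -(ϑ * N) = N * -ϑ by ring, Real.exp_nat_mul]
    exact pow_le_pow_left₀ (by linarith) (Real.one_sub_le_exp_neg ϑ) N
  have sq_le : (v * √ϑ + v / √(N + 1)) ^ 2 ≤ 2 * (v ^ 2 * ϑ + v ^ 2 / (N + 1)) := by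
    calc _ ≤ 2 * ((v * √ϑ) ^ 2 + (v / √(N + 1)) ^ 2) := add_sq_le
      _ = _ := by rw [mul_pow, div_pow, Real.sq_sqrt hϑ₀, Real.sq_sqrt (by positivity)]
  have exponent_le : 4 * (v * √ϑ + v / √(N + 1)) ^ 2 * N ≤ ϑ * N + 1 := by
    calc _ ≤ 4 * (2 * (1 / 8 * ϑ + 1 / 8 / (N + 1))) * N := by
          gcongr
          refine sq_le.trans ?_
          gcongr
      _ = ϑ * N + N / (N + 1) := by ring
      _ ≤ ϑ * N + 1 := by
          gcongr
          exact div_le_one_of_le₀ (by linarith) (by positivity)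
  calc _ ≤ Real.exp (-(ϑ * N)) * Real.exp (ϑ * N + 1) := by gcongr
    _ = _ := by
      rw [← Real.exp_add]
      ring_nf

namespace IsStepLaw

variable {d : ℕ} {p : (Fin d → ℤ) → ℝ≥0∞} {ℓ s K ϑ : ℝ}

/-- A walk of length `N` is tilted at a rate of order `√ϑ + 1 / √(N + 1)`: the first summand gives
the exponential decay, the second the decay in `N` below the diffusive scale, and the cost of the
tilt is absorbed by the killing. -/
lemma mul_conv_convPow_compl_le (h : IsStepLaw p ℓ s) (hK : 0 ≤ K)
    (hconc : ∀ (N : ℕ) (z : Fin d → ℤ),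
      mass ((Metric.closedBall z (stepRange d s * ℓ)).indicator (convPow p N)) ≤
        ENNReal.ofReal (K / √(N + 1) ^ d))
    {B : ℝ≥0∞} (hB : ∀ w ∈ moderateSteps d s ℓ, p w ≤ B) (hϑ₀ : 0 ≤ ϑ) (hϑ : ϑ ≤ 1)
    (j N : ℕ) (x : Fin d → ℤ) :
    ENNReal.ofReal (1 - ϑ) ^ N *
        (convPow ((moderateSteps d s ℓ)ᶜ.indicator p) j ⋆
          ((moderateSteps d s ℓ).indicator p ⋆ convPow p N)) x ≤
      ENNReal.ofReal (1 - moderateProb d s / 2) ^ j *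
        (B * ENNReal.ofReal (4 * d * 2 ^ d * K * Real.exp (tiltRate d s * stepRange d s + 1) *
          Real.exp (-(tiltRate d s / 2 * √ϑ * (‖x‖ / ℓ))) *
          (1 / √(N + 1) ^ d * Real.exp (-(tiltRate d s / 2 * (‖x‖ / ℓ) / √(N + 1)))))) := by
  have rate_pos := tiltRate_pos h.dim_pos h.rate_pos
  have rate_le := h.tiltRate_le
  have range_ge := h.fourteen_le_stepRange
  have hs := h.rate_le_one
  have hϑ' : 0 ≤ 1 - ϑ := sub_nonneg.mpr hϑ
  set v := tiltRate d s / 2 with hv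
  have hb : 1 ≤ √((N : ℝ) + 1) := Real.one_le_sqrt.mpr (by linarith [N.cast_nonneg (α := ℝ)])
  have absorb := one_sub_pow_mul_exp_sq_le (v := v) hϑ₀ hϑ (by nlinarith) N
  set b := √((N : ℝ) + 1)
  set u := v * √ϑ + v / b with hu
  have hu₀ : 0 ≤ u := by positivity
  have hu_le : u ≤ tiltRate d s := by
    have : v * √ϑ ≤ v := mul_le_of_le_one_right (by positivity) (Real.sqrt_le_one.mpr hϑ)
    have : v / b ≤ v := div_le_self (by positivity) hb
    linarith
  have tilted := h.mass_indicator_closedBall_tilted_convPow_le hK hconc hu₀ (by linarith) N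
  refine (mul_le_mul_right (h.conv_convPow_compl_le hB hu₀ hu_le tilted j x) _).trans ?_
  calc _ = ENNReal.ofReal (1 - moderateProb d s / 2) ^ j *
        (B * ENNReal.ofReal ((1 - ϑ) ^ N * Real.exp (-(u / ℓ) * ‖x‖) *
          Real.exp (u * stepRange d s) *
          (4 * d * 2 ^ d * K * Real.exp (4 * u ^ 2 * N) / b ^ d))) := by
        rw [expWeight, ENNReal.ofReal_mul (by positivity), ENNReal.ofReal_mul (by positivity),
          ENNReal.ofReal_mul (by positivity), ENNReal.ofReal_pow hϑ']
        ring
    _ ≤ _ := by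
        refine mul_le_mul_right (mul_le_mul_right (ENNReal.ofReal_le_ofReal ?_) _) _
        rw [show -(u / ℓ) * ‖x‖ = -(v * √ϑ * (‖x‖ / ℓ)) + -(v * (‖x‖ / ℓ) / b) by rw [hu]; ring,
          Real.exp_add, add_comm (tiltRate d s * _), Real.exp_add]
        set E := Real.exp (-(v * √ϑ * (‖x‖ / ℓ)))
        set E' := Real.exp (-(v * (‖x‖ / ℓ) / b))
        calc _ = ((1 - ϑ) ^ N * Real.exp (4 * u ^ 2 * N)) * Real.exp (u * stepRange d s) *
              (4 * d * 2 ^ d * K * E * E' / b ^ d) := by ring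
          _ ≤ Real.exp 1 * Real.exp (tiltRate d s * stepRange d s) *
              (4 * d * 2 ^ d * K * E * E' / b ^ d) := by gcongr
          _ = _ := by ring

lemma exists_tsum_mul_conv_convPow_compl_le (hd : 3 ≤ d) (hs : 0 < s) (hs' : s ≤ 1) :
    ∃ K > 0, ∀ {p : (Fin d → ℤ) → ℝ≥0∞} {ℓ : ℝ}, IsStepLaw p ℓ s → ∀ {B : ℝ≥0∞},
      (∀ w ∈ moderateSteps d s ℓ, p w ≤ B) → ∀ {ϑ : ℝ}, 0 ≤ ϑ → ϑ ≤ 1 →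
      ∀ {x : Fin d → ℤ}, 0 < ‖x‖ →
      ∑' (j : ℕ) (N : ℕ), ENNReal.ofReal (1 - ϑ) ^ N *
          (convPow ((moderateSteps d s ℓ)ᶜ.indicator p) j ⋆
            ((moderateSteps d s ℓ).indicator p ⋆ convPow p N)) x ≤
        ENNReal.ofReal (K * Real.exp (-(tiltRate d s / 2 * √ϑ * (‖x‖ / ℓ)))) *
          (ENNReal.ofReal ((‖x‖ / ℓ) ^ 2 / (‖x‖ / ℓ) ^ d) * B) := by
  have hd₀ : 0 < d := by omega
  obtain ⟨K, hK, concentration⟩ := exists_mass_indicator_closedBall_convPow_le d s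
  have prob_pos := moderateProb_pos hd₀ hs
  have prob_le := moderateProb_le_one hd₀ hs hs'
  have rate_pos := tiltRate_pos hd₀ hs
  set v := tiltRate d s / 2
  have hr₀ : 0 ≤ 1 - moderateProb d s / 2 := by linarith
  set K₂ := 4 * d * 2 ^ d * K * Real.exp (tiltRate d s * stepRange d s + 1)
  set K₃ := 2 * (Real.exp v * d.factorial / v ^ d)
  refine ⟨2 / moderateProb d s * (K₂ * K₃), by positivity, fun {p ℓ} h B hB ϑ hϑ₀ hϑ x hx => ?_⟩
  have hL : 0 < ‖x‖ / ℓ := div_pos hx h.scale_pos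
  set L := ‖x‖ / ℓ
  set E := Real.exp (-(v * √ϑ * L))
  calc _ ≤ ∑' (j : ℕ) (N : ℕ), ENNReal.ofReal (1 - moderateProb d s / 2) ^ j *
        (B * ENNReal.ofReal (K₂ * E * (1 / √(N + 1) ^ d * Real.exp (-(v * L / √(N + 1)))))) :=
        ENNReal.tsum_le_tsum fun j => ENNReal.tsum_le_tsum fun N =>
          h.mul_conv_convPow_compl_le hK.le (concentration h) hB hϑ₀ hϑ j N x
    _ ≤ (1 - ENNReal.ofReal (1 - moderateProb d s / 2))⁻¹ *
        (B * (ENNReal.ofReal (K₂ * E) * ENNReal.ofReal (K₃ * (L ^ 2 / L ^ d)))) := by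
        simp_rw [ENNReal.ofReal_mul (show 0 ≤ K₂ * E by positivity), ENNReal.tsum_mul_left]
        rw [ENNReal.tsum_mul_right, ENNReal.tsum_geometric]
        gcongr
        exact tsum_one_div_sqrt_pow_mul_exp_le hd (by positivity) hL
    _ = ENNReal.ofReal (2 / moderateProb d s) *
        (B * (ENNReal.ofReal (K₂ * E) * ENNReal.ofReal (K₃ * (L ^ 2 / L ^ d)))) := by
        rw [← ENNReal.ofReal_one, ← ENNReal.ofReal_sub _ hr₀, sub_sub_cancel,
          ← ENNReal.ofReal_inv_of_pos (by positivity), inv_div]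
    _ = _ := by
        simp only [ENNReal.ofReal_mul (show 0 ≤ 2 / moderateProb d s by positivity),
          ENNReal.ofReal_mul (show 0 ≤ K₂ by positivity), mul_assoc,
          ENNReal.ofReal_mul (show 0 ≤ K₃ by positivity)]
        ring

lemma exists_tsum_convPow_succ_compl_le (hd : 0 < d) (hs : 0 < s) (hs' : s ≤ 1) :
    ∃ K > 0, ∀ {p : (Fin d → ℤ) → ℝ≥0∞} {ℓ : ℝ}, IsStepLaw p ℓ s → ∀ {a : ℝ}, 0 ≤ a →
      a ≤ tiltRate d s → ∀ {x : Fin d → ℤ} {B : ℝ≥0∞},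
      (∀ n : ℕ, 0 < n → ∀ w, ‖x‖ ≤ n * ‖w‖ → p w * expWeight (a / ℓ) w ≤ (n : ℝ≥0∞) ^ d * B) →
      ∑' k, convPow ((moderateSteps d s ℓ)ᶜ.indicator p) (k + 1) x ≤
        expWeight (-(a / ℓ)) x * (ENNReal.ofReal K * B) := by
  have prob_pos := moderateProb_pos hd hs
  have prob_le := moderateProb_le_one hd hs hs'
  obtain ⟨K, hK, geometric⟩ := exists_tsum_pow_mul_geometric_le (d + 1)
    (r := 1 - moderateProb d s / 2) (by linarith) (by linarith)
  refine ⟨K, hK, fun {p ℓ} h a ha₀ ha x B hB => ?_⟩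
  refine (ENNReal.tsum_le_tsum fun k => h.convPow_succ_compl_le ha₀ ha hB k).trans ?_
  rw [ENNReal.tsum_mul_left, ENNReal.tsum_mul_right]
  gcongr

lemma exists_killedGreen_le (hd : 3 ≤ d) (hs : 0 < s) (hs' : s ≤ 1) :
    ∃ K > 0, ∀ {p : (Fin d → ℤ) → ℝ≥0∞} {ℓ : ℝ}, IsStepLaw p ℓ s → ∀ {ϑ a : ℝ}, 0 ≤ ϑ → ϑ ≤ 1 →
      a ≤ tiltRate d s → tiltRate d s * √ϑ ≤ a → ∀ {x : Fin d → ℤ}, 0 < ‖x‖ →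
      ∀ {B B' : ℝ≥0∞}, (∀ w ∈ moderateSteps d s ℓ, p w ≤ B) →
      (∀ n : ℕ, 0 < n → ∀ w, ‖x‖ ≤ n * ‖w‖ →
        p w * expWeight (a / ℓ) w ≤ (n : ℝ≥0∞) ^ d * B') →
      killedGreen p ϑ x ≤ ENNReal.ofReal (K * Real.exp (-(tiltRate d s / 2 * √ϑ * (‖x‖ / ℓ)))) *
        (ENNReal.ofReal ((‖x‖ / ℓ) ^ 2 / (‖x‖ / ℓ) ^ d) * B +
          ENNReal.ofReal (Real.exp (-(a / 2 * (‖x‖ / ℓ)))) * B') := by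
  have hd₀ : 0 < d := by omega
  have rate_pos := tiltRate_pos hd₀ hs
  obtain ⟨K₁, hK₁, moderate⟩ := exists_tsum_mul_conv_convPow_compl_le hd hs hs'
  obtain ⟨K₂, hK₂, only_bad⟩ := exists_tsum_convPow_succ_compl_le hd₀ hs hs'
  refine ⟨K₁ + K₂, by positivity, fun {p ℓ} h ϑ a hϑ₀ hϑ ha ha' x hx B B' hB hB' => ?_⟩
  have ha₀ : 0 ≤ a := le_trans (by positivity) ha'
  have hL := div_nonneg hx.le h.scale_pos.le
  have split : (moderateSteps d s ℓ)ᶜ.indicator p + (moderateSteps d s ℓ).indicator p = p := by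
    rw [add_comm, Set.indicator_self_add_compl]
  have decompose := killedGreen_add_le ((moderateSteps d s ℓ)ᶜ.indicator p)
    ((moderateSteps d s ℓ).indicator p) hϑ₀ x
  rw [split] at decompose
  set E := Real.exp (-(tiltRate d s / 2 * √ϑ * (‖x‖ / ℓ)))
  set E' := Real.exp (-(a / 2 * (‖x‖ / ℓ)))
  have exp_le : expWeight (-(a / ℓ)) x ≤ ENNReal.ofReal E * ENNReal.ofReal E' := by
    rw [expWeight, ← ENNReal.ofReal_mul (by positivity), ← Real.exp_add]
    refine ENNReal.ofReal_le_ofReal (Real.exp_le_exp.mpr ?_)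
    calc -(a / ℓ) * ‖x‖ = -(a * (‖x‖ / ℓ)) := by ring
      _ ≤ _ := by linarith [mul_le_mul_of_nonneg_right ha' hL]
  calc killedGreen p ϑ x
      ≤ ENNReal.ofReal (K₁ * E) * (ENNReal.ofReal ((‖x‖ / ℓ) ^ 2 / (‖x‖ / ℓ) ^ d) * B) +
          ENNReal.ofReal E * ENNReal.ofReal E' * (ENNReal.ofReal K₂ * B') :=
        decompose.trans (add_le_add (moderate h hB hϑ₀ hϑ hx)
          ((only_bad h ha₀ ha hB').trans (mul_le_mul_left exp_le _)))
    _ = ENNReal.ofReal (K₁ * E) * (ENNReal.ofReal ((‖x‖ / ℓ) ^ 2 / (‖x‖ / ℓ) ^ d) * B) +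
          ENNReal.ofReal (K₂ * E) * (ENNReal.ofReal E' * B') := by
        rw [ENNReal.ofReal_mul hK₂.le]
        ring
    _ ≤ _ := by
        rw [mul_add]
        gcongr <;> linarith

end IsStepLaw

/-! ### The effective steps as step laws -/

namespace Model

variable {d : ℕ} {c₀ : ℝ} {M : Model d c₀}

lemma ErrorLE.isStepLaw_effStep {t s₀ δ : ℝ} (h : M.ErrorLE δ t) (hc : 0 < c₀) (hs₀ : 0 < s₀)
    (hsq : s₀ ^ 2 ≤ 1 / 10) (hδ : 0 < δ) (hδ' : δ ≤ s₀ ^ 2 / 100) (hd : 3 ≤ d)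
    (hs₀' : s₀ ≤ c₀ / 10) : IsStepLaw (M.effStep t) (M.xi t) s₀ where
  scale_pos := h.1.xi_pos hc
  rate_pos := hs₀
  rate_le_one := by nlinarith
  mass_eq_one := h.1.mass_effStep
  symm := M.isSymmFun_effStep t
  secondMoment_eq := h.1.secondMoment_effStep
  mass_mul_coordExp_le i :=
    (M.Mgf_eq_mass t s₀ i).symm.trans_le (Mgf_le h hc hs₀ hsq hδ hδ' hd hs₀')

lemma ErrorLE.xi_le {s t θ δ : ℝ} (h : M.ErrorLE δ t) (hδ : 0 < δ) (hδ' : δ ≤ 1 / 2) (h0 : 0 ≤ s)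
    (hst : s ≤ t) (hθ : 0 < θ) (hδθ : 2 * δ ≤ θ) (heq : (t - s) * M.chiReal s = 1 - θ)
    (hc : 0 < c₀) : M.xi s ≤ 2 * √θ * M.xi t := by
  have xi_nonneg := M.xi_nonneg t
  have ratio : M.xi s ^ 2 * θ ≤ (2 * √θ * M.xi t) ^ 2 * θ :=
    calc M.xi s ^ 2 * θ ≤ M.xi t ^ 2 * (θ + 2 * δ) ^ 2 :=
          h.xi_sq_mul_le hδ hδ' h0 hst hθ heq hc
      _ ≤ M.xi t ^ 2 * (θ + θ) ^ 2 := by gcongr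
      _ = (2 * √θ * M.xi t) ^ 2 * θ := by rw [mul_pow, mul_pow, Real.sq_sqrt hθ.le]; ring
  exact le_of_sq_le_sq (le_of_mul_le_mul_right ratio hθ) (by positivity)

lemma norm_le_range {x : Fin d → ℤ} (hx : M.stepKernel x ≠ 0) : ‖x‖ ≤ M.K.R := by
  rw [← supNorm_eq_norm]
  exact M.K.range_le x (ENNReal.ofReal_pos.mp (pos_iff_ne_zero.mpr hx))

lemma sigma_le_mul_range (M : Model d c₀) : M.sigma ≤ d * M.K.R := by
  have range_nonneg : 0 ≤ M.K.R := zero_le_one.trans M.K.R_ge_one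
  have sq_le : ∀ x, M.stepKernel x ≠ 0 → sqWeight x ≤ ENNReal.ofReal ((d * M.K.R) ^ 2) := by
    intro x hx
    refine ENNReal.ofReal_le_ofReal ((sqNorm_le x).trans ?_)
    have d_le : (d : ℝ) ≤ d ^ 2 := by exact_mod_cast Nat.le_self_pow two_ne_zero d
    rw [mul_pow]
    gcongr
    exact norm_le_range hx
  have moment_le : ENNReal.ofReal (M.sigma ^ 2) ≤ ENNReal.ofReal ((d * M.K.R) ^ 2) :=
    calc ENNReal.ofReal (M.sigma ^ 2) = mass (M.stepKernel * sqWeight) :=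
          M.secondMoment_stepKernel.symm
      _ ≤ mass (ENNReal.ofReal ((d * M.K.R) ^ 2) • M.stepKernel) := mass_mono fun x => by
          rcases eq_or_ne (M.stepKernel x) 0 with hx | hx
          · simp [hx]
          · exact (mul_le_mul_right (sq_le x hx) _).trans_eq (mul_comm ..)
      _ = _ := by rw [mass_smul, mass_stepKernel, mul_one]
  exact le_of_sq_le_sq ((ENNReal.ofReal_le_ofReal_iff (by positivity)).mp moment_le)
    (by positivity)

lemma stepKernel_le (hc : 0 < c₀) (M : Model d c₀) (x : Fin d → ℤ) :
    M.stepKernel x ≤ ENNReal.ofReal (c₀⁻¹ * d ^ d / M.sigma ^ d) := by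
  have sigma_pos := M.sigma_pos hc
  have range_pos : 0 < M.K.R := one_pos.trans_le M.K.R_ge_one
  refine ENNReal.ofReal_le_ofReal ((M.K.J_upper x).trans ?_)
  rw [div_le_div_iff₀ (by positivity) (by positivity), mul_assoc, ← mul_pow]
  gcongr
  exact M.sigma_le_mul_range

/-- A step has length at most `R ≤ σ / c₀`, hence `n ≥ c₀ L`: the factor `n ^ d` pays for
`1 / L ^ d`. -/
lemma stepKernel_mul_expWeight_le (hc : 0 < c₀) {a L : ℝ} (ha : 0 ≤ a) (hL : 0 < L) {n : ℕ}
    {w : Fin d → ℤ} (hw : M.sigma * L ≤ n * ‖w‖) :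
    M.stepKernel w * expWeight (a / M.sigma) w ≤ (n : ℝ≥0∞) ^ d *
      ENNReal.ofReal (c₀⁻¹ * d ^ d / M.sigma ^ d * (Real.exp (a / c₀) / c₀ ^ d) / L ^ d) := by
  rcases eq_or_ne (M.stepKernel w) 0 with hJ | hJ
  · simp [hJ]
  have sigma_pos := M.sigma_pos hc
  have w_le : c₀ * ‖w‖ ≤ M.sigma :=
    (mul_le_mul_of_nonneg_left (norm_le_range hJ) hc.le).trans M.K.sigma_lower
  have exp_le : a / M.sigma * ‖w‖ ≤ a / c₀ := by
    rw [div_mul_eq_mul_div, div_le_div_iff₀ sigma_pos hc, mul_assoc, mul_comm ‖w‖]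
    gcongr
  have n_ge : c₀ * L ≤ n := by
    refine le_of_mul_le_mul_left ?_ sigma_pos
    calc M.sigma * (c₀ * L) = c₀ * (M.sigma * L) := by ring
      _ ≤ c₀ * (n * ‖w‖) := by gcongr
      _ = n * (c₀ * ‖w‖) := by ring
      _ ≤ n * M.sigma := by gcongr
      _ = M.sigma * n := mul_comm ..
  refine (mul_le_mul' (M.stepKernel_le hc w)
    (ENNReal.ofReal_le_ofReal (Real.exp_le_exp.mpr exp_le))).trans ?_
  rw [← ENNReal.ofReal_natCast, ← ENNReal.ofReal_pow (by positivity),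
    ← ENNReal.ofReal_mul (by positivity), ← ENNReal.ofReal_mul (by positivity)]
  refine ENNReal.ofReal_le_ofReal ?_
  calc c₀⁻¹ * d ^ d / M.sigma ^ d * Real.exp (a / c₀)
      = (c₀ * L) ^ d *
          (c₀⁻¹ * d ^ d / M.sigma ^ d * (Real.exp (a / c₀) / c₀ ^ d) / L ^ d) := by
        rw [mul_pow]
        field_simp
    _ ≤ _ := by gcongr

lemma exists_F_le_of_lt_one (hc : 0 < c₀) (hd : 3 ≤ d) {s₀ : ℝ} (hs : 0 < s₀) (hs' : s₀ ≤ 1) :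
    ∃ K > 0, ∀ {M : Model d c₀}, IsStepLaw M.stepKernel M.sigma s₀ → ∀ {t : ℝ}, M.Subcritical t →
      t < 1 → ∀ {x : Fin d → ℤ}, M.sigma ≤ ‖x‖ →
      M.F t x ≤ ENNReal.ofReal (K / M.sigma ^ d * ((‖x‖ / M.sigma) ^ 2 / (‖x‖ / M.sigma) ^ d) *
        Real.exp (-(tiltRate d s₀ / 2 * √(1 - t) * (‖x‖ / M.sigma)))) := by
  obtain ⟨K, hK, green_le⟩ := IsStepLaw.exists_killedGreen_le hd hs hs'
  have rate_pos := tiltRate_pos (d := d) (by omega) hs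
  set A := tiltRate d s₀
  set D := Real.exp (A / c₀) / c₀ ^ d with hD
  refine ⟨K * (c₀⁻¹ * d ^ d) * (1 + D), by positivity, fun {M} hM t ht ht1 x hx => ?_⟩
  have sigma_pos := M.sigma_pos hc
  have x_pos := sigma_pos.trans_le hx
  have F_le := ht.F_le_chi_mul_killedGreen le_rfl ht.1 (θ := 1 - t) (by linarith)
    (by rw [chiReal_zero]; ring) x
  rw [(Subcritical.zero M).chi_eq, chiReal_zero, ENNReal.ofReal_one, one_mul, effStep_zero] at F_le
  have L_pos := div_pos x_pos sigma_pos
  have L_ge : 1 ≤ ‖x‖ / M.sigma := (one_le_div sigma_pos).mpr hx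
  have sqrt_le : √(1 - t) ≤ 1 := Real.sqrt_le_one.mpr (by linarith [ht.1])
  have green := green_le hM (by linarith) (by linarith [ht.1]) (le_refl A)
    (mul_le_of_le_one_right rate_pos.le sqrt_le) x_pos (fun w _ => M.stepKernel_le hc w)
    (fun n _ w hw => stepKernel_mul_expWeight_le hc rate_pos.le L_pos
      (by rwa [mul_div_cancel₀ _ sigma_pos.ne']))
  refine F_le.trans (green.trans ?_)
  rw [← hD]
  set L := ‖x‖ / M.sigma
  set E := Real.exp (-(A / 2 * √(1 - t) * L))
  set b := c₀⁻¹ * d ^ d / M.sigma ^ d with hb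
  simp (disch := positivity) only [← ENNReal.ofReal_mul, ← ENNReal.ofReal_add]
  refine ENNReal.ofReal_le_ofReal ?_
  have exp_le : Real.exp (-(A / 2 * L)) ≤ 1 := Real.exp_le_one_iff.mpr (by
    rw [neg_nonpos]; positivity)
  calc K * E * (L ^ 2 / L ^ d * b + Real.exp (-(A / 2 * L)) * (b * D / L ^ d))
      ≤ K * E * (L ^ 2 / L ^ d * b + L ^ 2 * (b * D / L ^ d)) := by
        gcongr
        exact exp_le.trans (one_le_pow₀ L_ge)
    _ = _ := by rw [hb]; field_simp

end Model

/-! ### Improving an a-priori bound by one scale -/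

lemma exists_one_add_rpow_mul_exp_le (p : ℝ) {a : ℝ} (ha : 0 < a) :
    ∃ K > 0, ∀ y : ℝ, 0 ≤ y → (1 + y) ^ p * Real.exp (-(a * y)) ≤ K := by
  have hp : 0 < |p| + 1 := by positivity
  set b := a / (|p| + 1)
  have hb : 0 < b := by positivity
  have b_mul : b * (|p| + 1) = a := div_mul_cancel₀ a hp.ne'
  refine ⟨(1 + b⁻¹) ^ (|p| + 1), by positivity, fun y hy => ?_⟩
  have linear_le : 1 + y ≤ (1 + b⁻¹) * Real.exp (b * y) :=
    calc 1 + y ≤ (1 + b⁻¹) * (b * y + 1) := by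
          have : (1 + b⁻¹) * (b * y + 1) = 1 + y + (b * y + b⁻¹) := by field_simp; ring
          rw [this]
          exact le_add_of_nonneg_right (by positivity)
      _ ≤ _ := by gcongr; exact Real.add_one_le_exp _
  calc (1 + y) ^ p * Real.exp (-(a * y))
      ≤ ((1 + b⁻¹) * Real.exp (b * y)) ^ (|p| + 1) * Real.exp (-(a * y)) := by
        gcongr
        exact (Real.rpow_le_rpow_of_exponent_le (by linarith) (by linarith [le_abs_self p])).trans
          (Real.rpow_le_rpow (by positivity) linear_le hp.le)
    _ = (1 + b⁻¹) ^ (|p| + 1) * (Real.exp (a * y) * Real.exp (-(a * y))) := by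
        rw [Real.mul_rpow (by positivity) (by positivity), ← Real.exp_mul, mul_assoc,
          mul_right_comm b, b_mul]
    _ = _ := by rw [← Real.exp_add, add_neg_cancel, Real.exp_zero, mul_one]

lemma div_max_rpow_le_mul_div_rpow {σ R r ν q : ℝ} (hσ : 0 < σ) (hR : 0 < R) (hν : 0 ≤ ν)
    (hRr : R ≤ ν * r) (hq : 0 ≤ q) : (σ / max σ r) ^ q ≤ ν ^ q * (σ / R) ^ q := by
  have hmax : 0 < max σ r := lt_max_of_lt_left hσ
  have base_le : σ / max σ r ≤ ν * (σ / R) := by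
    rw [mul_div_assoc', div_le_div_iff₀ hmax hR, mul_comm ν, mul_assoc]
    gcongr
    exact hRr.trans (mul_le_mul_of_nonneg_left (le_max_right ..) hν)
  exact (Real.rpow_le_rpow (by positivity) base_le hq).trans_eq (Real.mul_rpow hν (by positivity))

lemma div_max_rpow_le_of_nonpos {σ ξ R r q : ℝ} (hσ : 0 < σ) (hσξ : σ ≤ ξ) (hξR : ξ ≤ R)
    (hr : 0 ≤ r) (hq : q ≤ 0) : (σ / max σ r) ^ q ≤ (1 + r / ξ) ^ |q| * (σ / R) ^ q := by
  have hξ := hσ.trans_le hσξ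
  have hR := hξ.trans_le hξR
  have max_le_mul : max σ r ≤ (1 + r / ξ) * R := by
    refine max_le ?_ ?_
    · exact (hσξ.trans hξR).trans
        (le_mul_of_one_le_left hR.le (le_add_of_nonneg_right (by positivity)))
    · calc r = r / ξ * ξ := (div_mul_cancel₀ r hξ.ne').symm
        _ ≤ r / ξ * R := by gcongr
        _ ≤ (1 + r / ξ) * R := by gcongr; linarith
  calc (σ / max σ r) ^ q = (max σ r / σ) ^ (-q) := by
        rw [Real.rpow_neg (by positivity), ← Real.inv_rpow (by positivity), inv_div]
    _ ≤ ((1 + r / ξ) * (R / σ)) ^ (-q) := by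
        refine Real.rpow_le_rpow (by positivity) ?_ (by linarith)
        rw [mul_div_assoc']
        gcongr
    _ = (1 + r / ξ) ^ |q| * (σ / R) ^ q := by
        rw [Real.mul_rpow (by positivity) (by positivity), abs_of_nonpos hq,
          Real.rpow_neg (by positivity : (0 : ℝ) ≤ R / σ), ← Real.inv_rpow (by positivity),
          inv_div]

lemma div_max_rpow_le {σ ξ R r ν q : ℝ} {d : ℕ} (hσ : 0 < σ) (hσξ : σ ≤ ξ) (hξR : ξ ≤ R)
    (hν : 1 ≤ ν) (hRr : R ≤ ν * r) (hq : q ≤ d) :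
    (σ / max σ r) ^ q ≤ (1 + r / ξ) ^ |q| * (ν ^ d * (σ / R) ^ q) := by
  have hξ := hσ.trans_le hσξ
  have hR := hξ.trans_le hξR
  have hr : 0 < r := pos_of_mul_pos_right (hR.trans_le hRr) (by linarith)
  rcases le_total 0 q with hq₀ | hq₀
  · calc (σ / max σ r) ^ q ≤ ν ^ q * (σ / R) ^ q :=
          div_max_rpow_le_mul_div_rpow hσ hR (by linarith) hRr hq₀
      _ ≤ ν ^ d * (σ / R) ^ q := by
          rw [← Real.rpow_natCast ν d]
          gcongr
      _ ≤ _ := le_mul_of_one_le_left (by positivity)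
          (Real.one_le_rpow (le_add_of_nonneg_right (by positivity)) (abs_nonneg q))
  · refine (div_max_rpow_le_of_nonpos hσ hσξ hξR hr.le hq₀).trans ?_
    gcongr
    exact le_mul_of_one_le_left (by positivity) (one_le_pow₀ hν)

namespace Model

variable {d : ℕ} {c₀ : ℝ} {M : Model d c₀}

/-- The spatial profile `σ^(-d) (σ / (σ ∨ |x|))^q` of the bounds on `F`. The exponent of interest
is `q = d - 2 - ε`. -/
def decayProfile (M : Model d c₀) (q : ℝ) (x : Fin d → ℤ) : ℝ :=
  (M.sigma ^ d)⁻¹ * (M.sigma / max M.sigma ‖x‖) ^ q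

lemma decayProfile_nonneg (M : Model d c₀) (q : ℝ) (x : Fin d → ℤ) : 0 ≤ M.decayProfile q x := by
  have sigma_nonneg : 0 ≤ M.sigma := Real.sqrt_nonneg _
  exact mul_nonneg (inv_nonneg.mpr (pow_nonneg sigma_nonneg d))
    (Real.rpow_nonneg (div_nonneg sigma_nonneg (le_max_of_le_left sigma_nonneg)) q)

lemma decayProfile_of_sigma_le {x : Fin d → ℤ} (hx : M.sigma ≤ ‖x‖) (q : ℝ) :
    M.decayProfile q x = (M.sigma ^ d)⁻¹ * (M.sigma / ‖x‖) ^ q := by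
  rw [decayProfile, max_eq_right hx]

lemma Subcritical.effStep_apply {s : ℝ} (h : M.Subcritical s) (x : Fin d → ℤ) :
    M.effStep s x = ENNReal.ofReal (M.chiReal s)⁻¹ * M.F s x := by
  rw [effStep, h.chi_eq, ENNReal.div_eq_inv_mul, ENNReal.ofReal_inv_of_pos h.chiReal_pos]

lemma exists_effStep_mul_expWeight_le (hc : 0 < c₀) {q : ℝ} (hq : q ≤ d) {a : ℝ} (ha : 0 < a) :
    ∃ K > 0, ∀ {M : Model d c₀} {s : ℝ}, M.Subcritical s → ∀ {C : ℝ}, 0 ≤ C →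
      (∀ w, M.F s w ≤
        ENNReal.ofReal (C * (M.decayProfile q w * Real.exp (-(2 * a * (‖w‖ / M.xi s)))))) →
      ∀ {R ν : ℝ} {w : Fin d → ℤ}, M.xi s ≤ R → 1 ≤ ν → R ≤ ν * ‖w‖ →
      M.effStep s w * expWeight (a / M.xi s) w ≤
        ENNReal.ofReal (ν ^ d * (K * ((M.chiReal s)⁻¹ * (C / M.sigma ^ d) * (M.sigma / R) ^ q)))
      := by
  obtain ⟨K, hK, exp_le⟩ := exists_one_add_rpow_mul_exp_le |q| ha
  refine ⟨K, hK, fun {M s} h C hC hF R ν w hR hν hRw => ?_⟩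
  have sigma_pos := M.sigma_pos hc
  have chi_pos := h.chiReal_pos
  have xi_pos := h.xi_pos hc
  have R_pos := xi_pos.trans_le hR
  set y := ‖w‖ / M.xi s with hy
  have y_nonneg : 0 ≤ y := by positivity
  have profile_le := div_max_rpow_le (d := d) sigma_pos h.sigma_le_xi hR hν hRw hq
  have profile_nonneg := M.decayProfile_nonneg q w
  rw [h.effStep_apply, expWeight]
  refine (mul_le_mul_left (mul_le_mul_right (hF w) _) _).trans ?_
  simp (disch := positivity) only [← ENNReal.ofReal_mul]
  refine ENNReal.ofReal_le_ofReal ?_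
  have merge : Real.exp (-(2 * a * y)) * Real.exp (a / M.xi s * ‖w‖) = Real.exp (-(a * y)) := by
    rw [← Real.exp_add, hy]
    congr 1
    ring
  calc (M.chiReal s)⁻¹ * (C * (M.decayProfile q w * Real.exp (-(2 * a * y)))) *
        Real.exp (a / M.xi s * ‖w‖)
      = (M.chiReal s)⁻¹ * C * (M.decayProfile q w *
          (Real.exp (-(2 * a * y)) * Real.exp (a / M.xi s * ‖w‖))) := by ring
    _ = (M.chiReal s)⁻¹ * (C / M.sigma ^ d) *
          ((M.sigma / max M.sigma ‖w‖) ^ q * Real.exp (-(a * y))) := by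
        rw [merge, decayProfile]
        ring
    _ ≤ (M.chiReal s)⁻¹ * (C / M.sigma ^ d) *
          ((1 + y) ^ |q| * (ν ^ d * (M.sigma / R) ^ q) * Real.exp (-(a * y))) := by gcongr
    _ = (M.chiReal s)⁻¹ * (C / M.sigma ^ d) * (ν ^ d * (M.sigma / R) ^ q) *
          ((1 + y) ^ |q| * Real.exp (-(a * y))) := by ring
    _ ≤ (M.chiReal s)⁻¹ * (C / M.sigma ^ d) * (ν ^ d * (M.sigma / R) ^ q) * K := by
        gcongr
        exact exp_le y y_nonneg
    _ = _ := by ring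

end Model

lemma sq_div_pow_mul_div_rpow {σ ξ r : ℝ} (hσ : 0 < σ) (hξ : 0 < ξ) (hr : 0 < r) (d : ℕ)
    (ε : ℝ) :
    (r / ξ) ^ 2 / (r / ξ) ^ d * (σ / ξ) ^ ((d : ℝ) - 2 - ε) =
      (r / ξ) ^ (-ε) * (σ / r) ^ ((d : ℝ) - 2 - ε) := by
  have hL := div_pos hr hξ
  rw [← (div_mul_div_cancel₀ hr.ne' : σ / r * (r / ξ) = σ / ξ),
    Real.mul_rpow (by positivity) (by positivity), ← Real.rpow_natCast (r / ξ) 2,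
    ← Real.rpow_natCast (r / ξ) d, ← Real.rpow_sub hL, mul_left_comm, ← Real.rpow_add hL,
    mul_comm]
  congr 2
  push_cast
  ring

lemma exp_neg_mul_div_le {A r ℓ ξ y : ℝ} (hA : 0 ≤ A) (hℓ : 0 < ℓ) (hξ : 0 < ξ) (hy : 0 ≤ y)
    (hle : ℓ ≤ 4 * r * ξ) :
    Real.exp (-(A / 2 * r * (y / ℓ))) ≤ Real.exp (-(A / 8 * (y / ξ))) := by
  refine Real.exp_le_exp.mpr (neg_le_neg ?_)
  calc A / 8 * (y / ξ) = A / 8 * (y * (ℓ / (ℓ * ξ))) := by field_simp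
    _ ≤ A / 8 * (y * (4 * r * ξ / (ℓ * ξ))) := by gcongr
    _ = A / 2 * r * (y / ℓ) := by field_simp; ring

lemma exists_rpow_neg_add_exp_neg_le {K a ε c : ℝ} (ha : 0 < a) (hε : 0 < ε) (hc : 0 < c) :
    ∃ L₀ : ℝ, 1 ≤ L₀ ∧ ∀ L, L₀ ≤ L → K * (L ^ (-ε) + Real.exp (-(a * L))) ≤ c := by
  have exp_tendsto : Filter.Tendsto (fun L : ℝ => Real.exp (-(a * L))) Filter.atTop (nhds 0) :=
    Real.tendsto_exp_neg_atTop_nhds_zero.comp (Filter.tendsto_id.const_mul_atTop ha)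
  have tendsto := ((tendsto_rpow_neg_atTop hε).add exp_tendsto).const_mul K
  rw [add_zero, mul_zero] at tendsto
  obtain ⟨L₀, hL₀⟩ := Filter.eventually_atTop.mp
    ((tendsto.eventually (ge_mem_nhds hc)).and (Filter.eventually_ge_atTop 1))
  exact ⟨max L₀ 1, le_max_right .., fun L hL => (hL₀ L ((le_max_left ..).trans hL)).1⟩

namespace Model

variable {d : ℕ} {c₀ : ℝ}

/-- The tilt `A / 16` at which the steps at scale `ξ(s)` are estimated is half the decay rate
`A / 8` of the assumed bound; the other half absorbs the polynomial profile. -/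
lemma exists_killedGreen_effStep_le (hc : 0 < c₀) (hd : 3 ≤ d) {s₀ : ℝ} (hs₀ : 0 < s₀)
    (hs₀' : s₀ ≤ 1) {ε : ℝ} (hε : 0 < ε) :
    ∃ K > 0, ∀ {M : Model d c₀} {s ρ : ℝ}, IsStepLaw (M.effStep s) (M.xi s) s₀ →
      M.Subcritical s → 0 < ρ → ρ ≤ 1 / 16 → ∀ {C : ℝ}, 0 ≤ C →
      (∀ w, M.F s w ≤ ENNReal.ofReal (C * (M.decayProfile (d - 2 - ε) w *
        Real.exp (-(tiltRate d s₀ / 8 * (‖w‖ / M.xi s)))))) →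
      ∀ {x}, M.xi s ≤ ‖x‖ → killedGreen (M.effStep s) (ρ ^ 2) x ≤ ENNReal.ofReal
        (K * ((‖x‖ / M.xi s) ^ (-ε) + Real.exp (-(tiltRate d s₀ / 32 * (‖x‖ / M.xi s)))) *
          ((M.chiReal s)⁻¹ * (C * (M.decayProfile (d - 2 - ε) x *
            Real.exp (-(tiltRate d s₀ / 2 * ρ * (‖x‖ / M.xi s))))))) := by
  have d_ge : (3 : ℝ) ≤ d := by exact_mod_cast hd
  have rate_pos := tiltRate_pos (d := d) (by omega) hs₀
  obtain ⟨K, hK, green_le⟩ := IsStepLaw.exists_killedGreen_le hd hs₀ hs₀'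
  set A := tiltRate d s₀
  obtain ⟨K', hK', step_le⟩ := exists_effStep_mul_expWeight_le (c₀ := c₀) (d := d) hc
    (q := d - 2 - ε) (by linarith) (a := A / 16) (by positivity)
  rw [show 2 * (A / 16) = A / 8 by ring] at step_le
  refine ⟨K * K' * (2 * d) ^ d, by positivity, fun {M s ρ} hM hs hρ hρ' C hC hF x hx => ?_⟩
  have xi_pos := hs.xi_pos hc
  have x_pos := xi_pos.trans_le hx
  have sigma_pos := M.sigma_pos hc
  have chi_pos := hs.chiReal_pos
  have moderate_le (w) (hw : w ∈ moderateSteps d s₀ (M.xi s)) := (le_mul_of_one_le_right'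
    (ENNReal.one_le_ofReal.mpr (Real.one_le_exp (by positivity)))).trans
    (step_le hs hC hF (w := w) le_rfl (by linarith) ((div_le_iff₀' (by positivity)).mp hw.1))
  have far_le (n : ℕ) (hn : 0 < n) (w) (hw : ‖x‖ ≤ n * ‖w‖) :=
    step_le hs hC hF hx (by exact_mod_cast hn) hw
  simp only [ENNReal.ofReal_mul (pow_nonneg (Nat.cast_nonneg _) d),
    ENNReal.ofReal_pow (Nat.cast_nonneg _), ENNReal.ofReal_natCast] at far_le
  have green := green_le hM (sq_nonneg ρ) (pow_le_one₀ hρ.le (by linarith)) (by linarith)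
    (by rw [Real.sqrt_sq hρ.le]; nlinarith) x_pos moderate_le far_le
  have profile_eq := sq_div_pow_mul_div_rpow sigma_pos xi_pos x_pos d ε
  rw [Real.sqrt_sq hρ.le, show A / 16 / 2 = A / 32 by ring] at green
  rw [decayProfile_of_sigma_le (hs.sigma_le_xi.trans hx)]
  refine green.trans ?_
  simp (disch := positivity) only [← ENNReal.ofReal_mul, ← ENNReal.ofReal_add]
  refine ENNReal.ofReal_le_ofReal ?_
  set L := ‖x‖ / M.xi s
  set Y := (M.sigma / ‖x‖) ^ ((d : ℝ) - 2 - ε)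
  set E := Real.exp (-(A / 2 * ρ * L))
  set E' := Real.exp (-(A / 32 * L))
  set D := (M.chiReal s)⁻¹ * (C / M.sigma ^ d) with hD
  set Y' := (M.sigma / M.xi s) ^ ((d : ℝ) - 2 - ε)
  calc K * E * (L ^ 2 / L ^ d * ((2 * d) ^ d * (K' * (D * Y'))) + E' * (K' * (D * Y)))
      = K * K' * D * E * ((2 * d) ^ d * (L ^ 2 / L ^ d * Y') + 1 * (E' * Y)) := by ring
    _ ≤ K * K' * D * E * ((2 * d) ^ d * (L ^ (-ε) * Y) + (2 * d) ^ d * (E' * Y)) := by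
        rw [profile_eq]
        gcongr
        exact one_le_pow₀ (by linarith)
    _ = _ := by rw [hD, div_eq_mul_inv C]; ring

lemma exists_F_le_of_F_le (hc : 0 < c₀) (hd : 3 ≤ d) {s₀ : ℝ} (hs₀ : 0 < s₀) (hs₀' : s₀ ≤ 1)
    {ε : ℝ} (hε : 0 < ε) :
    ∃ K > 0, ∀ {M : Model d c₀} {s t ρ : ℝ}, IsStepLaw (M.effStep s) (M.xi s) s₀ →
      M.Subcritical t → 0 ≤ s → s ≤ t → 0 < ρ → ρ ≤ 1 / 16 →
      (t - s) * M.chiReal s = 1 - ρ ^ 2 → ∀ {C : ℝ}, 0 ≤ C →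
      (∀ w, M.F s w ≤ ENNReal.ofReal (C * (M.decayProfile (d - 2 - ε) w *
        Real.exp (-(tiltRate d s₀ / 8 * (‖w‖ / M.xi s)))))) →
      ∀ {x}, M.xi s ≤ ‖x‖ → M.F t x ≤ ENNReal.ofReal
        (K * ((‖x‖ / M.xi s) ^ (-ε) + Real.exp (-(tiltRate d s₀ / 32 * (‖x‖ / M.xi s)))) *
          (C * (M.decayProfile (d - 2 - ε) x *
            Real.exp (-(tiltRate d s₀ / 2 * ρ * (‖x‖ / M.xi s)))))) := by
  obtain ⟨K, hK, green_le⟩ := exists_killedGreen_effStep_le hc hd hs₀ hs₀' hε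
  refine ⟨K, hK, fun {M s t ρ} hM ht h0 hst hρ hρ' heq C hC hF x hx => ?_⟩
  have hs := ht.mono h0 hst
  refine (ht.F_le_chi_mul_killedGreen h0 hst (pow_pos hρ 2) heq x).trans
    ((mul_le_mul_right (green_le hM hs hρ hρ' hC hF hx) _).trans_eq ?_)
  rw [hs.chi_eq, ← ENNReal.ofReal_mul (M.chiReal_nonneg s), mul_left_comm,
    mul_inv_cancel_left₀ hs.chiReal_pos.ne']

end Model

/-! ### Decay at typical length scales -/

namespace Model

variable {d : ℕ} {c₀ : ℝ} {M : Model d c₀}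

/-- Decay `F_t(x) ≤ C σ^{-d} (σ / (σ ∨ |x|))^q exp(-a |x| / ξ(t))` of the two-point function
at the length scales `|x| ≥ η ξ(t) ∨ 2σ`, with the polynomial part given by `decayProfile`. -/
def HasTypicalDecay (M : Model d c₀) (q a η C t : ℝ) : Prop :=
  ∀ x, max (η * M.xi t) (2 * M.sigma) ≤ ‖x‖ →
    M.F t x ≤ ENNReal.ofReal (C * (M.decayProfile q x * Real.exp (-(a * (‖x‖ / M.xi t)))))

lemma div_mul_div_max_supNorm_rpow_mul_exp (M : Model d c₀) (q c C t : ℝ) (x : Fin d → ℤ) :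
    C / M.sigma ^ d * (M.sigma / max M.sigma (supNorm x)) ^ q *
        Real.exp (-c * supNorm x / M.xi t) =
      C * (M.decayProfile q x * Real.exp (-(c * (‖x‖ / M.xi t)))) := by
  rw [supNorm_eq_norm, decayProfile, div_eq_mul_inv, mul_assoc, mul_assoc, mul_assoc,
    neg_mul, neg_div, mul_div_assoc]

lemma HasTypicalDecay.mono {q a a' η η' C C' t : ℝ} (h : M.HasTypicalDecay q a η C t)
    (ha : a' ≤ a) (hη : η ≤ η') (hC : C ≤ C') (hC' : 0 ≤ C') : M.HasTypicalDecay q a' η' C' t := by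
  intro x hx
  have xi_nonneg := M.xi_nonneg t
  have profile_nonneg := M.decayProfile_nonneg q x
  exact (h x (le_trans (by gcongr) hx)).trans (ENNReal.ofReal_le_ofReal (by gcongr))

lemma HasTypicalDecay.F_le {q a η C C' t : ℝ} (h : M.HasTypicalDecay q a η C t)
    (ht : M.Subcritical t) (hc : 0 < c₀) (ha : a ≤ 1) (hη : η ≤ 2) (hC : C ≤ C') (hC' : 0 ≤ C')
    (near : ∀ x, ‖x‖ ≤ 2 * M.xi t → M.F t x ≤ ENNReal.ofReal (C' * M.decayProfile q x))
    (x : Fin d → ℤ) :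
    M.F t x ≤ ENNReal.ofReal (Real.exp 2 * C' *
      (M.decayProfile q x * Real.exp (-(a * (‖x‖ / M.xi t))))) := by
  have xi_pos := ht.xi_pos hc
  have profile_nonneg := M.decayProfile_nonneg q x
  rcases le_total ‖x‖ (2 * M.xi t) with hx | hx
  · refine (near x hx).trans (ENNReal.ofReal_le_ofReal ?_)
    have ratio_le : ‖x‖ / M.xi t ≤ 2 := (div_le_iff₀ xi_pos).mpr hx
    have ratio_nonneg : 0 ≤ ‖x‖ / M.xi t := by positivity
    have one_le : 1 ≤ Real.exp 2 * Real.exp (-(a * (‖x‖ / M.xi t))) := by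
      rw [← Real.exp_add]
      exact Real.one_le_exp (by nlinarith)
    calc C' * M.decayProfile q x
        ≤ C' * M.decayProfile q x * (Real.exp 2 * Real.exp (-(a * (‖x‖ / M.xi t)))) :=
          le_mul_of_one_le_right (by positivity) one_le
      _ = _ := by ring
  · refine (h x (max_le ?_ ?_)).trans (ENNReal.ofReal_le_ofReal ?_)
    · exact (mul_le_mul_of_nonneg_right hη xi_pos.le).trans hx
    · linarith [ht.sigma_le_xi]
    · refine mul_le_mul_of_nonneg_right (hC.trans ?_) (by positivity)
      exact le_mul_of_one_le_left hC' (Real.one_le_exp two_pos.le)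

lemma exists_hasTypicalDecay_of_two_mul_le_one_sub (hc : 0 < c₀) (hd : 3 ≤ d) {s₀ : ℝ}
    (hs₀ : 0 < s₀) (hs₀' : s₀ ≤ 1) :
    ∃ K > 0, ∀ {M : Model d c₀}, IsStepLaw M.stepKernel M.sigma s₀ → ∀ {t δ : ℝ},
      M.ErrorLE δ t → 0 < δ → 2 * δ ≤ 1 - t → ∀ {ε : ℝ}, 0 ≤ ε → ∀ η : ℝ,
      M.HasTypicalDecay (d - 2 - ε) (tiltRate d s₀ / 8) η K t := by
  obtain ⟨K, hK, F_le⟩ := exists_F_le_of_lt_one hc hd hs₀ hs₀'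
  have rate_pos := tiltRate_pos (d := d) (by omega) hs₀
  refine ⟨K, hK, fun {M} hM t δ ht hδ hδt ε hε η x hx => ?_⟩
  have sigma_pos := M.sigma_pos hc
  have xi_pos := ht.1.xi_pos hc
  have sigma_le_norm : M.sigma ≤ ‖x‖ := by linarith [(le_max_right ..).trans hx]
  have sigma_le_xi : M.sigma ≤ 2 * √(1 - t) * M.xi t := by
    rw [← M.xi_zero]
    exact ht.xi_le hδ (by linarith [ht.1.1]) le_rfl ht.1.1 (by linarith) hδt
      (by rw [chiReal_zero]; ring) hc
  have profile_eq :=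
    sq_div_pow_mul_div_rpow sigma_pos sigma_pos (sigma_pos.trans_le sigma_le_norm) d ε
  rw [div_self sigma_pos.ne', Real.one_rpow, mul_one] at profile_eq
  refine (F_le hM ht.1 (by linarith) sigma_le_norm).trans (ENNReal.ofReal_le_ofReal ?_)
  rw [decayProfile_of_sigma_le sigma_le_norm, profile_eq]
  have rpow_le_one : (‖x‖ / M.sigma) ^ (-ε) ≤ 1 :=
    Real.rpow_le_one_of_one_le_of_nonpos ((one_le_div sigma_pos).mpr sigma_le_norm) (by linarith)
  have exp_le := exp_neg_mul_div_le rate_pos.le sigma_pos xi_pos (norm_nonneg x)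
    (show M.sigma ≤ 4 * √(1 - t) * M.xi t by nlinarith)
  set e := Real.exp (-(tiltRate d s₀ / 2 * √(1 - t) * (‖x‖ / M.sigma)))
  set Y := (M.sigma / ‖x‖) ^ ((d : ℝ) - 2 - ε)
  calc K / M.sigma ^ d * ((‖x‖ / M.sigma) ^ (-ε) * Y) * e
      = K * ((M.sigma ^ d)⁻¹ * (1 * Y) * e) * (‖x‖ / M.sigma) ^ (-ε) := by ring
    _ ≤ K * ((M.sigma ^ d)⁻¹ * (1 * Y) * e) := mul_le_of_le_one_right (by positivity) rpow_le_one
    _ ≤ _ := by rw [one_mul]; gcongr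

lemma exists_hasTypicalDecay_of_sub_mul_chiReal_eq (hc : 0 < c₀) (hd : 3 ≤ d) {s₀ : ℝ}
    (hs₀ : 0 < s₀) (hs₀' : s₀ ≤ 1) {ε : ℝ} (hε : 0 < ε) {η : ℝ} (hη : 0 < η) (hη' : η ≤ 2) :
    ∃ ρ : ℝ, 0 < ρ ∧ ρ ≤ 1 / 16 ∧ ∀ {M : Model d c₀} {s t δ C : ℝ},
      IsStepLaw (M.effStep s) (M.xi s) s₀ → M.ErrorLE δ t → 0 < δ → 2 * δ ≤ ρ ^ 2 → 0 ≤ s →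
      s ≤ t → (t - s) * M.chiReal s = 1 - ρ ^ 2 → 0 ≤ C →
      (∀ x, ‖x‖ ≤ 2 * M.xi s → M.F s x ≤ ENNReal.ofReal (C * M.decayProfile (d - 2 - ε) x)) →
      M.HasTypicalDecay (d - 2 - ε) (tiltRate d s₀ / 8) η (1 / 8 * C) s →
      M.HasTypicalDecay (d - 2 - ε) (tiltRate d s₀ / 8) η (1 / 8 * C) t := by
  obtain ⟨K, _, F_le⟩ := exists_F_le_of_F_le hc hd hs₀ hs₀' hε
  have rate_pos := tiltRate_pos (d := d) (by omega) hs₀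
  set A := tiltRate d s₀
  obtain ⟨L₀, hL₀, small⟩ := exists_rpow_neg_add_exp_neg_le (K := K * Real.exp 2)
    (a := A / 32) (c := 1 / 8) (by positivity) hε (by norm_num)
  refine ⟨min (1 / 16) (η / (2 * L₀)), by positivity, min_le_left .., ?_⟩
  set ρ := min (1 / 16) (η / (2 * L₀))
  have hρ : 0 < ρ := by positivity
  have hρ' : ρ ≤ 1 / 16 := min_le_left ..
  intro M s t δ C hM ht hδ hδρ h0 hst heq hC near hs x hx
  have hs' := ht.1.mono h0 hst
  have xi_pos := hs'.xi_pos hc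
  have xi_pos' := ht.1.xi_pos hc
  have xi_le : M.xi s ≤ 2 * ρ * M.xi t := by
    simpa only [Real.sqrt_sq hρ.le] using
      ht.xi_le hδ (by nlinarith) h0 hst (by positivity) hδρ heq hc
  have L₀_le : L₀ ≤ ‖x‖ / M.xi s := by
    rw [le_div_iff₀ xi_pos]
    calc L₀ * M.xi s ≤ L₀ * (2 * ρ * M.xi t) := by gcongr
      _ ≤ L₀ * (2 * (η / (2 * L₀)) * M.xi t) := by gcongr; exact min_le_right ..
      _ = η * M.xi t := by field_simp
      _ ≤ ‖x‖ := (le_max_left ..).trans hx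
  have xi_le_norm : M.xi s ≤ ‖x‖ := (one_le_div xi_pos).mp (hL₀.trans L₀_le)
  have rate_le_one : A / 8 ≤ 1 := by linarith [hM.tiltRate_le]
  refine (F_le hM ht.1 h0 hst hρ hρ' heq (by positivity)
    (hs.F_le hs' hc rate_le_one hη' (by linarith) hC near) xi_le_norm).trans
    (ENNReal.ofReal_le_ofReal ?_)
  have profile_nonneg := M.decayProfile_nonneg (d - 2 - ε) x
  have exp_le : Real.exp (-(A / 2 * ρ * (‖x‖ / M.xi s))) ≤ Real.exp (-(A / 8 * (‖x‖ / M.xi t))) :=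
    exp_neg_mul_div_le rate_pos.le xi_pos xi_pos' (norm_nonneg x) (by nlinarith)
  have small_le := small _ L₀_le
  calc _ = K * Real.exp 2 * ((‖x‖ / M.xi s) ^ (-ε) + Real.exp (-(A / 32 * (‖x‖ / M.xi s)))) *
        (C * (M.decayProfile (d - 2 - ε) x * Real.exp (-(A / 2 * ρ * (‖x‖ / M.xi s))))) := by ring
    _ ≤ 1 / 8 * (C * (M.decayProfile (d - 2 - ε) x * Real.exp (-(A / 8 * (‖x‖ / M.xi t))))) := by
      gcongr
    _ = _ := by ring

end Model

end Blackbox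

theorem statement17_general {d : ℕ} (hd : 2 < d) {c₀ : ℝ} (hc₀ : 0 < c₀) :
    ∃ cstar > (0 : ℝ), ∃ Cstar > (0 : ℝ), ∀ ε > (0 : ℝ), ∀ η > (0 : ℝ),
      ∃ δ₂ ∈ Set.Ioc (0 : ℝ) (1 / 2), ∀ C : ℝ, Cstar ≤ C → ∀ M : Model d c₀, ∀ β : ℝ, 0 ≤ β →
        β < M.betaOf δ₂ →
          (∀ β' : ℝ, 0 ≤ β' → β' ≤ β → ∀ x : Fin d → ℤ, ‖x‖ ≤ 2 * M.xi β' →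
            M.F β' x ≤ ENNReal.ofReal (C * M.decayProfile (d - 2 - ε) x)) →
          M.HasTypicalDecay (d - 2 - ε) cstar η (1 / 8 * C) β := by
  set s₀ := min (1 / 10) (c₀ / 10)
  have hs₀ : 0 < s₀ := by positivity
  have s₀_le : s₀ ≤ 1 / 10 := min_le_left ..
  obtain ⟨K, hK, base⟩ :=
    Model.exists_hasTypicalDecay_of_two_mul_le_one_sub hc₀ hd hs₀ (by linarith)
  have rate_pos := tiltRate_pos (d := d) (by omega) hs₀
  refine ⟨tiltRate d s₀ / 8, by positivity, 8 * K, by positivity, fun ε hε η hη => ?_⟩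
  obtain ⟨ρ, hρ, hρ', step⟩ := Model.exists_hasTypicalDecay_of_sub_mul_chiReal_eq hc₀ hd hs₀
    (by linarith) hε (η := min η 2) (by positivity) (min_le_right ..)
  set δ := min (ρ ^ 2 / 2) (s₀ ^ 2 / 100)
  have hδ : 0 < δ := by positivity
  have hδρ : 2 * δ ≤ ρ ^ 2 := by linarith [min_le_left (ρ ^ 2 / 2) (s₀ ^ 2 / 100)]
  refine ⟨δ, ⟨hδ, by nlinarith⟩, fun C hC M β h0 hβ near => ?_⟩
  have hE : M.ErrorLE δ β := M.errorLE_of_lt_betaOf hc₀ hδ h0 hβ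
  have isStepLaw {t : ℝ} (h0 : 0 ≤ t) (ht : t ≤ β) : IsStepLaw (M.effStep t) (M.xi t) s₀ :=
    (hE.mono h0 ht).isStepLaw_effStep hc₀ hs₀ (by nlinarith) hδ (min_le_right ..) hd
      (min_le_right ..)
  have isStepLaw_zero := isStepLaw le_rfl h0
  rw [Model.effStep_zero, Model.xi_zero] at isStepLaw_zero
  suffices M.HasTypicalDecay (d - 2 - ε) (tiltRate d s₀ / 8) (min η 2) (1 / 8 * C) β from
    this.mono le_rfl (min_le_left ..) le_rfl (by linarith)
  refine hE.1.induction_of_sub_mul_chiReal_eq (κ := 1 - ρ ^ 2) (by nlinarith) ?base ?step h0 le_rfl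
  case base =>
    intro t h0 ht htρ
    exact (base isStepLaw_zero (hE.mono h0 ht) hδ (by linarith) hε.le _).mono le_rfl le_rfl
      (by linarith) (by linarith)
  case step =>
    intro s t h0 hst ht heq hs
    exact step (isStepLaw h0 (hst.trans ht)) (hE.mono (h0.trans hst) ht) hδ hδρ h0 hst heq
      (by linarith) (near s h0 (hst.trans ht)) hs

/-- improvement at typical length scales (`prop: typical scales`). -/
theorem statement17 (d : ℕ) (hd : 2 < d) (c₀ : ℝ) (hc₀ : c₀ ∈ Set.Ioc (0:ℝ) 1) :
    ∃ cstar > (0:ℝ), ∃ Cstar > (0:ℝ), ∀ ε > (0:ℝ), ∀ η > (0:ℝ),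
      ∃ δ₂ : ℝ, δ₂ ∈ Set.Ioc (0:ℝ) (1/2) ∧
        ∀ c : ℝ, 0 < c → c ≤ cstar → ∀ C : ℝ, Cstar ≤ C →
          ∀ M : Model d c₀, ∀ β : ℝ, 0 ≤ β → β < M.betaOf δ₂ →
            (∀ β' : ℝ, 0 ≤ β' → β' ≤ β → ∀ x : Fin d → ℤ,
              M.F β' x ≤ ENNReal.ofReal (C / M.sigma ^ d *
                (M.sigma / max M.sigma (supNorm x)) ^ ((d:ℝ) - 2 - ε) *
                Real.exp (-c * supNorm x / M.xi β'))) →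
            ∀ x : Fin d → ℤ, max (η * M.xi β) (2 * M.sigma) ≤ supNorm x →
              M.F β x ≤ ENNReal.ofReal (1/8 * (C / M.sigma ^ d *
                (M.sigma / max M.sigma (supNorm x)) ^ ((d:ℝ) - 2 - ε) *
                Real.exp (-c * supNorm x / M.xi β))) := by
  obtain ⟨cstar, hcstar, Cstar, hCstar, general⟩ := statement17_general hd hc₀.1
  refine ⟨cstar, hcstar, Cstar, hCstar, fun ε hε η hη => ?_⟩
  obtain ⟨δ₂, hδ₂, decay⟩ := general ε hε η hη
  refine ⟨δ₂, hδ₂, fun c hc hc' C hC M β h0 hβ hF x hx => ?_⟩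
  have hC₀ : 0 ≤ C := hCstar.le.trans hC
  simp only [Model.div_mul_div_max_supNorm_rpow_mul_exp] at hF ⊢
  refine ((decay C hC M β h0 hβ fun t h0 ht y _ => (hF t h0 ht y).trans ?_).mono hc' le_rfl
    le_rfl (by positivity) x (supNorm_eq_norm x ▸ hx)).trans_eq (by rw [mul_assoc])
  have profile_nonneg := M.decayProfile_nonneg (d - 2 - ε) y
  have xi_nonneg := M.xi_nonneg t
  refine ENNReal.ofReal_le_ofReal (mul_le_mul_of_nonneg_left ?_ hC₀)
  exact mul_le_of_le_one_right profile_nonneg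
    (Real.exp_le_one_iff.mpr (neg_nonpos.mpr (by positivity)))
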